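/- arXiv:1902.07201 — 5 statements merged into one kernel-verified Lean document; each statement's English description precedes it below -/
import Mathlib

section
/- Let C = F_1 + F_2 + F_3 be a simple homogeneous ΣΠΣΠ(3,2) circuit over ℂ: each F_i = l_{i1} ⋯ l_{i d_i} is a product of irreducible homogeneous polynomials l_{ij} ∈ ℂ[x_0, …, x_n] of degree 1 or 2, the F_i are homogeneous of the same degree, and gcd(F_1, F_2, F_3) = 1. Assume: (a) C is SG, i.e., for every i ∈ {1,2,3} and every choice of one factor l_{j, s_j} from each of the two branches j ≠ i, the polynomial F_i lies in the ideal generated by those two chosen factors; (b) for all i ≠ j and all degree-2 factors l_{ik} of F_i and l_{jt} of F_j, the ideal ⟨l_{ik}, l_{jt}⟩ is prime; (c) not all degree-2 factors among the l_{ij} belong to the same branch (there exist degree-2 factors in at least two different branches). Then the transcendence degree over ℂ of the set of all factors {l_{ij}} is less than 12; in particular, any algebraically independent (over ℂ) subset of {l_{ij}} has fewer than 12 elements. -/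
open Matrix

noncomputable def cN {r : ℕ} (z : Fin r → ℂ) : ℝ := ∑ k, Complex.normSq (z k)

noncomputable def cH {r : ℕ} (z w : Fin r → ℂ) : ℂ := star z ⬝ᵥ w

lemma cN_nonneg {r : ℕ} (z : Fin r → ℂ) : 0 ≤ cN z :=
  Finset.sum_nonneg fun _ _ => Complex.normSq_nonneg _

lemma cN_pos {r : ℕ} {z : Fin r → ℂ} (hz : z ≠ 0) : 0 < cN z := by
  obtain ⟨k, hk⟩ := Function.ne_iff.mp hz
  exact Finset.sum_pos' (fun _ _ => Complex.normSq_nonneg _)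
    ⟨k, Finset.mem_univ _, Complex.normSq_pos.mpr hk⟩

lemma cN_smul {r : ℕ} (c : ℂ) (z : Fin r → ℂ) : cN (c • z) = Complex.normSq c * cN z := by
  simp [cN, Finset.mul_sum]

lemma cH_self {r : ℕ} (z : Fin r → ℂ) : cH z z = (cN z : ℂ) := by
  simp [cH, cN, dotProduct, Complex.normSq_eq_conj_mul_self]

lemma cN_add_smul {r : ℕ} (z u : Fin r → ℂ) (s : ℝ) :
    cN (z + (s : ℂ) • u) = cN z + 2 * s * (cH z u).re + s ^ 2 * cN u := by
  simp only [cN, cH, dotProduct, Complex.re_sum, Finset.mul_sum, ← Finset.sum_add_distrib]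
  refine Finset.sum_congr rfl fun k _ => ?_
  simp [Complex.normSq_apply]
  ring

lemma cN_continuous {r : ℕ} : Continuous (cN : (Fin r → ℂ) → ℝ) := by
  unfold cN
  exact continuous_finsetSum _ fun k _ => Complex.continuous_normSq.comp (continuous_apply k)

lemma cH_mulVec_sum {r : ℕ} {ι : Type*} [Fintype ι] (z : ι → Fin r → ℂ) (c : ι → ℝ)
    (x : Fin r → ℂ) :
    (cH x ((∑ j, (c j : ℂ) • vecMulVec (z j) (star (z j))) *ᵥ x)).re
      = ∑ j, c j * Complex.normSq (cH x (z j)) := by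
  rw [Matrix.sum_mulVec]
  simp only [cH, dotProduct_sum, Complex.re_sum]
  refine Finset.sum_congr rfl fun j _ => ?_
  rw [Matrix.smul_mulVec, Matrix.vecMulVec_mulVec, dotProduct_smul]
  have h1 : star (z j) ⬝ᵥ x = star (star x ⬝ᵥ z j) := by
    simp [dotProduct, mul_comm]
  simp only [op_smul_eq_smul, dotProduct_smul, h1, smul_eq_mul]
  rw [Complex.re_ofReal_mul, Complex.normSq_apply]
  simp [Complex.mul_re]

lemma trace_sum_vmv {r : ℕ} {ι : Type*} [Fintype ι] (z : ι → Fin r → ℂ) (c : ι → ℝ) :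
    (∑ j, (c j : ℂ) • vecMulVec (z j) (star (z j))).trace = ((∑ j, c j * cN (z j) : ℝ) : ℂ) := by
  rw [Matrix.trace_sum]
  push_cast
  refine Finset.sum_congr rfl fun j _ => ?_
  rw [Matrix.trace_smul, Matrix.trace_vecMulVec, dotProduct_comm]
  have := cH_self (z j)
  rw [cH] at this
  rw [this]; simp

noncomputable def cG {r : ℕ} {ι : Type*} [Fintype ι] (v : ι → Fin r → ℂ) (ε : ℝ)
    (T : Matrix (Fin r) (Fin r) ℂ) : ℝ := ∑ i, (cN (T *ᵥ v i)) ^ ε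

lemma cG_continuous {r : ℕ} {ι : Type*} [Fintype ι] (v : ι → Fin r → ℂ) {ε : ℝ} (hε : 0 < ε) :
    Continuous (cG v ε) := by
  unfold cG
  refine continuous_finsetSum _ fun i _ => ?_
  refine Continuous.rpow_const ?_ (fun _ => Or.inr hε.le)
  exact cN_continuous.comp (Continuous.matrix_mulVec continuous_id continuous_const)

lemma cG_nonneg {r : ℕ} {ι : Type*} [Fintype ι] (v : ι → Fin r → ℂ) (ε : ℝ)
    (T : Matrix (Fin r) (Fin r) ℂ) : 0 ≤ cG v ε T :=
  Finset.sum_nonneg fun _ _ => Real.rpow_nonneg (cN_nonneg _) _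

lemma cG_smul {r : ℕ} {ι : Type*} [Fintype ι] (v : ι → Fin r → ℂ) (ε : ℝ)
    (T : Matrix (Fin r) (Fin r) ℂ) (t : ℝ) :
    cG v ε ((t : ℂ) • T) = (t ^ 2) ^ ε * cG v ε T := by
  unfold cG
  rw [Finset.mul_sum]
  refine Finset.sum_congr rfl fun i _ => ?_
  rw [Matrix.smul_mulVec, cN_smul, Complex.normSq_ofReal, ← sq,
    Real.mul_rpow (by positivity) (cN_nonneg _)]

/-- The constraint set is compact. -/
lemma cG_compact {r : ℕ} {ι : Type*} [Fintype ι] (v : ι → Fin r → ℂ)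
    (hspan : Submodule.span ℂ (Set.range v) = ⊤) {ε : ℝ} (hε : 0 < ε) :
    IsCompact {T : Matrix (Fin r) (Fin r) ℂ | cG v ε T ≤ 1} := by
  have hex : ∀ j : Fin r, ∃ c : ι → ℂ, ∑ i, c i • v i = Pi.single j 1 := by
    intro j
    have : (Pi.single j 1 : Fin r → ℂ) ∈ Submodule.span ℂ (Set.range v) := by rw [hspan]; trivial
    exact (Submodule.mem_span_range_iff_exists_fun ℂ).mp this
  choose c hc using hex
  have hsub : {T : Matrix (Fin r) (Fin r) ℂ | cG v ε T ≤ 1} ⊆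
      Set.pi Set.univ (fun _ : Fin r => Set.pi Set.univ
        (fun j : Fin r => Metric.closedBall (0 : ℂ) (∑ i, ‖c j i‖))) := by
    intro T hT k _ j _
    have hT' : cG v ε T ≤ 1 := hT
    have h1 : ∀ i, ‖(T *ᵥ v i) k‖ ≤ 1 := by
      intro i
      have h2 : (cN (T *ᵥ v i)) ^ ε ≤ 1 := le_trans
        (Finset.single_le_sum (f := fun i => (cN (T *ᵥ v i)) ^ ε)
          (fun _ _ => Real.rpow_nonneg (cN_nonneg _) _) (Finset.mem_univ i)) hT'
      have h3 : cN (T *ᵥ v i) ≤ 1 := by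
        by_contra h
        push Not at h
        exact absurd h2 (not_le.mpr (Real.one_lt_rpow h hε))
      have h4 : Complex.normSq ((T *ᵥ v i) k) ≤ 1 := le_trans
        (Finset.single_le_sum (f := fun k => Complex.normSq ((T *ᵥ v i) k))
          (fun _ _ => Complex.normSq_nonneg _) (Finset.mem_univ k)) h3
      rw [Complex.normSq_eq_norm_sq] at h4
      nlinarith [norm_nonneg ((T *ᵥ v i) k)]
    have h5 : T k j = ∑ i, c j i * (T *ᵥ v i) k := by
      have : T *ᵥ (Pi.single j 1) = ∑ i, c j i • (T *ᵥ v i) := by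
        rw [← hc j, Matrix.mulVec_sum]
        simp [Matrix.mulVec_smul]
      have h6 := congrFun this k
      simpa using h6
    rw [mem_closedBall_zero_iff, h5]
    refine (norm_sum_le _ _).trans (Finset.sum_le_sum fun i _ => ?_)
    rw [norm_mul]
    exact mul_le_of_le_one_right (norm_nonneg _) (h1 i)
  have hK : IsCompact (Set.pi Set.univ (fun _ : Fin r => Set.pi Set.univ
        (fun j : Fin r => Metric.closedBall (0 : ℂ) (∑ i, ‖c j i‖)))) :=
    isCompact_univ_pi fun _ => isCompact_univ_pi fun _ => isCompact_closedBall _ _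
  exact hK.of_isClosed_subset (isClosed_le (cG_continuous v hε) continuous_const) hsub

lemma exists_isotropic {r : ℕ} (hr : 0 < r) {ι : Type*} [Fintype ι] (v : ι → Fin r → ℂ)
    (hv : ∀ i, v i ≠ 0)
    (hspan : Submodule.span ℂ (Set.range v) = ⊤) {ε : ℝ} (hε : 0 < ε) :
    ∃ T : Matrix (Fin r) (Fin r) ℂ, (∀ i, T *ᵥ v i ≠ 0) ∧ ∑ i, (cN (T *ᵥ v i)) ^ ε = 1 ∧
      ∑ i, ∑ j, (cN (T *ᵥ v i)) ^ (ε - 1) * (cN (T *ᵥ v j)) ^ (ε - 1)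
        * Complex.normSq (cH (T *ᵥ v i) (T *ᵥ v j)) = 1 / r := by
  have hcont : ContinuousOn (fun T : Matrix (Fin r) (Fin r) ℂ => Complex.normSq T.det)
      {T | cG v ε T ≤ 1} :=
    (Complex.continuous_normSq.comp (Continuous.matrix_det continuous_id)).continuousOn
  have hne : ({T : Matrix (Fin r) (Fin r) ℂ | cG v ε T ≤ 1}).Nonempty := by
    refine ⟨0, ?_⟩
    simp [cG, cN, Real.zero_rpow hε.ne']
  obtain ⟨T, hT1, hT2⟩ := (cG_compact v hspan hε).exists_isMaxOn hne hcont
  have hT1 : cG v ε T ≤ 1 := hT1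
  -- general inequality
  have key : ∀ S : Matrix (Fin r) (Fin r) ℂ, 0 < cG v ε S →
      Complex.normSq S.det ≤ Complex.normSq T.det * (cG v ε S) ^ ((r : ℝ) / ε) := by
    intro S hS
    set g := cG v ε S with hg
    set t : ℝ := g ^ (-(1 / (2 * ε))) with ht
    have htpos : 0 < t := Real.rpow_pos_of_pos hS _
    have h1 : cG v ε ((t : ℂ) • S) ≤ 1 := by
      rw [cG_smul v ε S t, ← hg, ht, ← Real.rpow_natCast, ← Real.rpow_mul hS.le,
        ← Real.rpow_mul hS.le]
      have : -(1 / (2 * ε)) * ((2 : ℕ) : ℝ) * ε = -1 := by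
        push_cast; field_simp
      rw [this, Real.rpow_neg_one, inv_mul_cancel₀ hS.ne']
    have h2 : Complex.normSq ((t : ℂ) • S).det ≤ Complex.normSq T.det := hT2 h1
    rw [Matrix.det_smul, Fintype.card_fin, map_mul, map_pow, Complex.normSq_ofReal] at h2
    have h3 : (t * t) ^ r * g ^ ((r : ℝ) / ε) = 1 := by
      rw [ht, ← Real.rpow_add hS, ← Real.rpow_natCast, ← Real.rpow_mul hS.le, ← Real.rpow_add hS]
      have : (-(1 / (2 * ε)) + -(1 / (2 * ε))) * (r : ℝ) + (r : ℝ) / ε = 0 := by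
        field_simp; ring
      rw [this, Real.rpow_zero]
    have h4 : 0 ≤ g ^ ((r : ℝ) / ε) := Real.rpow_nonneg hS.le _
    calc Complex.normSq S.det = ((t * t) ^ r * Complex.normSq S.det) * g ^ ((r : ℝ) / ε) := by
          rw [mul_right_comm, h3, one_mul]
      _ ≤ _ := mul_le_mul_of_nonneg_right h2 h4
  have hι : Nonempty ι := by
    by_contra h
    rw [not_nonempty_iff] at h
    have : Nontrivial (Fin r → ℂ) := by
      have : Nonempty (Fin r) := ⟨⟨0, hr⟩⟩
      infer_instance
    rw [Set.range_eq_empty, Submodule.span_empty] at hspan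
    exact bot_ne_top hspan
  have hone : 0 < cG v ε 1 := by
    unfold cG
    refine Finset.sum_pos (fun i _ => ?_) Finset.univ_nonempty
    rw [Matrix.one_mulVec]
    exact Real.rpow_pos_of_pos (cN_pos (hv i)) _
  have hdet : T.det ≠ 0 := by
    intro h
    have := key 1 hone
    rw [h] at this
    simp at this
    linarith
  have hz : ∀ i, T *ᵥ v i ≠ 0 := by
    intro i h
    exact hv i (Matrix.eq_zero_of_mulVec_eq_zero hdet h)
  have hGpos : 0 < cG v ε T :=
    Finset.sum_pos (fun i _ => Real.rpow_pos_of_pos (cN_pos (hz i)) _) Finset.univ_nonempty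
  have hnd : 0 < Complex.normSq T.det := Complex.normSq_pos.mpr hdet
  have hG1 : cG v ε T = 1 := by
    refine le_antisymm hT1 ?_
    by_contra h
    push Not at h
    have h1 := key T hGpos
    have h2 : (cG v ε T) ^ ((r : ℝ) / ε) < 1 :=
      Real.rpow_lt_one hGpos.le h (by positivity)
    nlinarith
  refine ⟨T, hz, hG1, ?_⟩
  set z : ι → Fin r → ℂ := fun i => T *ᵥ v i with hzdef
  set c : ι → ℝ := fun i => (cN (z i)) ^ (ε - 1) with hcdef
  set M : Matrix (Fin r) (Fin r) ℂ := ∑ j, (c j : ℂ) • vecMulVec (z j) (star (z j)) with hM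
  have hGs : ∀ s : ℝ, cG v ε ((1 + (s : ℂ) • M) * T)
      = ∑ i, (cN (z i) + 2 * s * (cH (z i) (M *ᵥ z i)).re + s ^ 2 * cN (M *ᵥ z i)) ^ ε := by
    intro s
    unfold cG
    refine Finset.sum_congr rfl fun i _ => ?_
    rw [← Matrix.mulVec_mulVec, Matrix.add_mulVec, Matrix.one_mulVec, Matrix.smul_mulVec,
      cN_add_smul]
  -- derivative of G
  have hGd : HasDerivAt (fun s : ℝ => cG v ε ((1 + (s : ℂ) • M) * T))
      (∑ i, 2 * (cH (z i) (M *ᵥ z i)).re * ε * (cN (z i)) ^ (ε - 1)) 0 := by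
    rw [show (fun s : ℝ => cG v ε ((1 + (s : ℂ) • M) * T)) = _ from funext hGs]
    refine HasDerivAt.fun_sum fun i _ => ?_
    have h1 : HasDerivAt (fun s : ℝ => cN (z i) + 2 * s * (cH (z i) (M *ᵥ z i)).re
        + s ^ 2 * cN (M *ᵥ z i)) (2 * (cH (z i) (M *ᵥ z i)).re) 0 := by
      have h2 := (((hasDerivAt_id (0 : ℝ)).const_mul 2).mul_const
        ((cH (z i) (M *ᵥ z i)).re)).const_add (cN (z i))
      have h3 := ((hasDerivAt_id (0 : ℝ)).pow 2).mul_const (cN (M *ᵥ z i))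
      have h4 := h2.add h3
      exact h4.congr_deriv (by simp)
    have h5 := h1.rpow_const (p := ε) (Or.inl (by simpa using (cN_pos (hz i)).ne'))
    simpa using h5
  have hG0 : cG v ε ((1 + ((0 : ℝ) : ℂ) • M) * T) = 1 := by simpa using hG1
  have hRd := hGd.rpow_const (p := (r : ℝ) / ε) (Or.inl (by rw [hG0]; exact one_ne_zero))
  rw [hG0, Real.one_rpow, mul_one] at hRd
  -- derivative of det
  have hdd : HasDerivAt (fun s : ℝ => Complex.normSq (1 + (s : ℂ) • M).det) (2 * M.trace.re) 0 := by
    have hd1 : HasDerivAt (fun s : ℝ => (1 + (s : ℂ) • M).det) M.trace 0 := by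
      have h0 : (fun s : ℝ => (1 + (s : ℂ) • M).det) = fun s : ℝ => 1 + M.trace * (s : ℂ) +
          (Polynomial.eval (s : ℂ) (det (1 + (Polynomial.X : Polynomial ℂ) • M.map Polynomial.C)).divX.divX) * (s : ℂ) ^ 2 := by
        funext s
        exact Matrix.det_one_add_smul _ _
      rw [h0]
      set P := (det (1 + (Polynomial.X : Polynomial ℂ) • M.map Polynomial.C)).divX.divX
      have hs : HasDerivAt (fun s : ℝ => (s : ℂ)) 1 0 := Complex.ofRealCLM.hasDerivAt
      have hP : HasDerivAt (fun s : ℝ => P.eval (s : ℂ)) (P.derivative.eval ((0 : ℝ) : ℂ) * 1) 0 :=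
        (P.hasDerivAt ((0 : ℝ) : ℂ)).comp (0 : ℝ) hs
      have h1 := ((hs.const_mul M.trace).const_add 1).add (hP.mul (hs.pow 2))
      exact h1.congr_deriv (by simp)
    have hre : HasDerivAt (fun s : ℝ => ((1 + (s : ℂ) • M).det).re) M.trace.re 0 :=
      Complex.reCLM.hasFDerivAt.comp_hasDerivAt (0 : ℝ) hd1
    have him : HasDerivAt (fun s : ℝ => ((1 + (s : ℂ) • M).det).im) M.trace.im 0 :=
      Complex.imCLM.hasFDerivAt.comp_hasDerivAt (0 : ℝ) hd1
    have h2 := (hre.mul hre).add (him.mul him)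
    exact h2.congr_deriv (by simp; ring)
  have hdiff := hRd.sub hdd
  have hmin : IsLocalMin (fun s : ℝ => (cG v ε ((1 + (s : ℂ) • M) * T)) ^ ((r : ℝ) / ε)
      - Complex.normSq (1 + (s : ℂ) • M).det) 0 := by
    have hev : ∀ᶠ s : ℝ in nhds 0, 0 < cG v ε ((1 + (s : ℂ) • M) * T) := by
      have := hGd.continuousAt.eventually (lt_mem_nhds (a := 0) (by show 0 < cG v ε ((1 + ((0 : ℝ) : ℂ) • M) * T); rw [hG0]; exact one_pos))
      exact this
    filter_upwards [hev] with s hs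
    have h1 := key _ hs
    rw [Matrix.det_mul, map_mul, mul_comm (Complex.normSq _)] at h1
    have h2 := le_of_mul_le_mul_left h1 hnd
    rw [hG0]
    simp
    exact h2
  have hzero := hmin.hasDerivAt_eq_zero hdiff
  have htr : M.trace.re = 1 := by
    rw [hM, trace_sum_vmv, Complex.ofReal_re, ← hG1]
    unfold cG
    refine Finset.sum_congr rfl fun i _ => ?_
    rw [hcdef]
    simp only
    rw [Real.rpow_sub_one (cN_pos (hz i)).ne', div_mul_cancel₀ _ (cN_pos (hz i)).ne']
  rw [htr] at hzero
  have hH : ∀ i, (cH (z i) (M *ᵥ z i)).re = ∑ j, c j * Complex.normSq (cH (z i) (z j)) :=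
    fun i => cH_mulVec_sum z c (z i)
  have hfin : ∑ i, 2 * (cH (z i) (M *ᵥ z i)).re * ε * (cN (z i)) ^ (ε - 1)
      = 2 * ε * ∑ i, ∑ j, c i * c j * Complex.normSq (cH (z i) (z j)) := by
    rw [Finset.mul_sum]
    refine Finset.sum_congr rfl fun i _ => ?_
    rw [hH, Finset.mul_sum, Finset.mul_sum, Finset.sum_mul, Finset.sum_mul]
    refine Finset.sum_congr rfl fun j _ => ?_
    simp only [hcdef]
    ring
  rw [hfin] at hzero
  have hr' : (r : ℝ) ≠ 0 := by positivity
  simp only [hcdef] at hzero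
  field_simp at hzero ⊢
  linarith


lemma line_sum {ι : Type*} [DecidableEq ι] (L : Finset ι) (hL : 3 ≤ L.card) (g : ι → ι → ℝ)
    (w : ι → ℝ) (κ : ℝ) (hκ : 0 ≤ κ)
    (h : ∀ i ∈ L, ∀ j ∈ L, ∀ k ∈ L, i ≠ j → j ≠ k → i ≠ k →
      κ * (w i + w j + w k) ^ 2 ≤ g i j + g j k + g i k) :
    2 * κ * (∑ i ∈ L, w i) ^ 2 ≤ ∑ i ∈ L, ∑ j ∈ L, if i ≠ j then g i j else 0 := by
  set e : ι → ι → ℝ := fun i j => if i ≠ j then 1 else 0 with he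
  have esymm : ∀ i j, e i j = e j i := by
    intro i j; simp only [he]; simp [eq_comm]
  set N : ℝ := (L.card : ℝ) with hN
  have hN3 : (3 : ℝ) ≤ N := by rw [hN]; exact_mod_cast hL
  have e1 : ∀ i ∈ L, ∑ j ∈ L, e i j = N - 1 := by
    intro i hi
    simp only [he]
    rw [Finset.sum_ite, Finset.filter_ne, Finset.sum_const, Finset.sum_const_zero,
      Finset.card_erase_of_mem hi, nsmul_eq_mul, Nat.cast_sub (by omega)]
    simp [hN]
  have e2 : ∀ i ∈ L, ∀ j ∈ L, e i j * ∑ k ∈ L, e j k * e i k = e i j * (N - 2) := by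
    intro i hi j hj
    by_cases hij : i = j
    · simp [he, hij]
    congr 1
    have : ∀ k ∈ L, e j k * e i k = e i k - if k = j then 1 else 0 := by
      intro k _
      simp only [he]
      by_cases h1 : k = j
      · subst h1; simp [hij]
      · have h1s : ¬ j = k := fun h => h1 h.symm
        simp [h1, h1s]
    rw [Finset.sum_congr rfl this, Finset.sum_sub_distrib, e1 i hi, Finset.sum_ite_eq']
    simp [hj]; ring
  set f : ι → ι → ℝ := fun i j => g i j - κ * ((w i ^ 2 + w j ^ 2) / 2 + 2 * w i * w j) with hf
  have A1 : ∀ F : ι → ι → ℝ, ∑ i ∈ L, ∑ j ∈ L, ∑ k ∈ L, e i j * (e j k * e i k) * F i j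
      = (N - 2) * ∑ i ∈ L, ∑ j ∈ L, e i j * F i j := by
    intro F
    simp only [Finset.mul_sum]
    refine Finset.sum_congr rfl fun i hi => Finset.sum_congr rfl fun j hj => ?_
    rw [← Finset.sum_mul, ← Finset.mul_sum, e2 i hi j hj]
    ring
  have A2 : ∑ i ∈ L, ∑ j ∈ L, ∑ k ∈ L, e i j * (e j k * e i k) * f j k
      = (N - 2) * ∑ i ∈ L, ∑ j ∈ L, e i j * f i j := by
    rw [← A1 f, Finset.sum_comm]
    refine Finset.sum_congr rfl fun j _ => ?_
    rw [Finset.sum_comm]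
    refine Finset.sum_congr rfl fun k _ => Finset.sum_congr rfl fun i _ => ?_
    rw [esymm i j, esymm i k]; ring
  have A3 : ∑ i ∈ L, ∑ j ∈ L, ∑ k ∈ L, e i j * (e j k * e i k) * f i k
      = (N - 2) * ∑ i ∈ L, ∑ j ∈ L, e i j * f i j := by
    rw [← A1 f]
    refine Finset.sum_congr rfl fun i _ => ?_
    rw [Finset.sum_comm]
    refine Finset.sum_congr rfl fun k _ => Finset.sum_congr rfl fun j _ => ?_
    rw [esymm j k]; ring
  have hpos : 0 ≤ ∑ i ∈ L, ∑ j ∈ L, ∑ k ∈ L,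
      e i j * (e j k * e i k) * (f i j + f j k + f i k) := by
    refine Finset.sum_nonneg fun i hi => Finset.sum_nonneg fun j hj =>
      Finset.sum_nonneg fun k hk => ?_
    by_cases hij : i = j
    · simp [he, hij]
    by_cases hjk : j = k
    · simp [he, hjk]
    by_cases hik : i = k
    · simp [he, hik]
    have := h i hi j hj k hk hij hjk hik
    simp only [he, hf, ne_eq, hij, hjk, hik, not_false_eq_true, if_true]
    nlinarith
  have hsum : ∑ i ∈ L, ∑ j ∈ L, ∑ k ∈ L, e i j * (e j k * e i k) * (f i j + f j k + f i k)
      = 3 * (N - 2) * ∑ i ∈ L, ∑ j ∈ L, e i j * f i j := by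
    simp only [mul_add, Finset.sum_add_distrib]
    rw [A1 f, A2, A3]; ring
  rw [hsum] at hpos
  have hef : 0 ≤ ∑ i ∈ L, ∑ j ∈ L, e i j * f i j := by
    by_contra hc
    push Not at hc
    nlinarith
  have hsplit : ∑ i ∈ L, ∑ j ∈ L, e i j * f i j = (∑ i ∈ L, ∑ j ∈ L, if i ≠ j then g i j else 0)
      - κ * ((N - 1) * ∑ i ∈ L, w i ^ 2 + 2 * ((∑ i ∈ L, w i) ^ 2 - ∑ i ∈ L, w i ^ 2)) := by
    have h1 : ∑ i ∈ L, ∑ j ∈ L, e i j * w i ^ 2 = (N - 1) * ∑ i ∈ L, w i ^ 2 := by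
      rw [Finset.mul_sum]
      refine Finset.sum_congr rfl fun i hi => ?_
      rw [← Finset.sum_mul, e1 i hi]
    have h2 : ∑ i ∈ L, ∑ j ∈ L, e i j * w j ^ 2 = (N - 1) * ∑ i ∈ L, w i ^ 2 := by
      rw [← h1, Finset.sum_comm]
      refine Finset.sum_congr rfl fun i hi => Finset.sum_congr rfl fun j _ => ?_
      rw [esymm]
    have h3 : ∑ i ∈ L, ∑ j ∈ L, e i j * (w i * w j) = (∑ i ∈ L, w i) ^ 2 - ∑ i ∈ L, w i ^ 2 := by
      rw [sq, Finset.sum_mul_sum, ← Finset.sum_sub_distrib]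
      refine Finset.sum_congr rfl fun i hi => ?_
      have : ∀ j ∈ L, e i j * (w i * w j) = w i * w j - if j = i then w i * w j else 0 := by
        intro j _
        by_cases hij : i = j
        · simp [he, hij]
        · simp [he, hij, Ne.symm hij]
      rw [Finset.sum_congr rfl this, Finset.sum_sub_distrib, Finset.sum_ite_eq']
      simp [hi, sq]
    rw [← h3]
    have h4 : κ * ((N - 1) * ∑ i ∈ L, w i ^ 2 + 2 * ∑ i ∈ L, ∑ j ∈ L, e i j * (w i * w j))
        = κ * ((∑ i ∈ L, ∑ j ∈ L, e i j * w i ^ 2 + ∑ i ∈ L, ∑ j ∈ L, e i j * w j ^ 2) / 2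
          + 2 * ∑ i ∈ L, ∑ j ∈ L, e i j * (w i * w j)) := by
      rw [h1, h2]; ring
    rw [h4]
    simp only [← Finset.sum_add_distrib, Finset.mul_sum, Finset.sum_div, ← Finset.sum_sub_distrib]
    refine Finset.sum_congr rfl fun i _ => Finset.sum_congr rfl fun j _ => ?_
    by_cases hij : i = j
    · simp [he, hij]
    · simp only [he, hf, ne_eq, hij, not_false_eq_true, if_true]; ring
  rw [hsplit] at hef
  have hw2 : 0 ≤ ∑ i ∈ L, w i ^ 2 := Finset.sum_nonneg fun _ _ => sq_nonneg _
  have : 0 ≤ κ * ((N - 3) * ∑ i ∈ L, w i ^ 2) := by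
    apply mul_nonneg hκ (mul_nonneg (by linarith) hw2)
  nlinarith

lemma comb_lines {ι : Type*} [Fintype ι] [DecidableEq ι] (col : ι → Fin 3)
    (hcol : ∀ c, ∃ i, col i = c) (𝓛 : Finset (Finset ι))
    (huniq : ∀ L ∈ 𝓛, ∀ L' ∈ 𝓛, ∀ i j, i ≠ j → i ∈ L → j ∈ L → i ∈ L' → j ∈ L' → L = L')
    (hex : ∀ i j, col i ≠ col j → ∃ L ∈ 𝓛, i ∈ L ∧ j ∈ L)
    (hall : ∀ L ∈ 𝓛, ∀ c, ∃ i ∈ L, col i = c)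
    (w : ι → ℝ) (hw : ∀ i, 0 ≤ w i) :
    (∑ i, w i) ^ 2 ≤ 2 * ∑ L ∈ 𝓛, (∑ i ∈ L, w i) ^ 2 := by
  set m : Finset ι → ι → ℝ := fun L i => if i ∈ L then 1 else 0 with hm
  set M : ι → ι → ℝ := fun i j => ∑ L ∈ 𝓛, m L i * m L j with hM
  have hMcard : ∀ i j, M i j = ((𝓛.filter fun L => i ∈ L ∧ j ∈ L).card : ℝ) := by
    intro i j
    simp only [hM, hm]
    rw [Finset.card_filter]
    push_cast
    refine Finset.sum_congr rfl fun L _ => ?_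
    by_cases h1 : i ∈ L <;> by_cases h2 : j ∈ L <;> simp [h1, h2]
  have hMle : ∀ i j, i ≠ j → M i j ≤ 1 := by
    intro i j hij
    rw [hMcard]
    have : (𝓛.filter fun L => i ∈ L ∧ j ∈ L).card ≤ 1 := by
      rw [Finset.card_le_one]
      intro L hL L' hL'
      simp only [Finset.mem_filter] at hL hL'
      exact huniq L hL.1 L' hL'.1 i j hij hL.2.1 hL.2.2 hL'.2.1 hL'.2.2
    exact_mod_cast this
  have hMone : ∀ i j, col i ≠ col j → M i j = 1 := by
    intro i j hij
    have hne : i ≠ j := fun h => hij (by rw [h])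
    refine le_antisymm (hMle i j hne) ?_
    rw [hMcard]
    obtain ⟨L, hL, h1, h2⟩ := hex i j hij
    have : 0 < (𝓛.filter fun L => i ∈ L ∧ j ∈ L).card :=
      Finset.card_pos.mpr ⟨L, by simp [hL, h1, h2]⟩
    exact_mod_cast this
  set n : Fin 3 → ℝ := fun c => ((Finset.univ.filter fun i => col i = c).card : ℝ) with hn
  have hnpos : ∀ c, 0 < n c := by
    intro c
    obtain ⟨i, hi⟩ := hcol c
    have : 0 < (Finset.univ.filter fun i => col i = c).card :=
      Finset.card_pos.mpr ⟨i, by simp [hi]⟩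
    simp only [hn]
    exact_mod_cast this
  have hMdiag : ∀ i c, col i ≠ c → M i i ≤ n c := by
    intro i c hic
    rw [hMcard]
    have hch : ∀ L : Finset ι, ∃ k, L ∈ 𝓛 → (k ∈ L ∧ col k = c) := by
      intro L
      by_cases hL : L ∈ 𝓛
      · obtain ⟨k, hk⟩ := hall L hL c
        exact ⟨k, fun _ => hk⟩
      · exact ⟨i, fun h => absurd h hL⟩
    choose k hk using hch
    have : (𝓛.filter fun L => i ∈ L ∧ i ∈ L).card ≤ (Finset.univ.filter fun i => col i = c).card := by
      refine Finset.card_le_card_of_injOn k ?_ ?_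
      · intro L hL
        simp at hL
        simp [(hk L hL.1).2]
      · intro L hL L' hL' hkk
        simp at hL hL'
        have h1 := hk L hL.1
        have h2 := hk L' hL'.1
        have hne : i ≠ k L := by
          intro h
          rw [← h] at h1
          exact hic h1.2
        refine huniq L hL.1 L' hL'.1 i (k L) hne hL.2 h1.1 hL'.2 ?_
        rw [hkk]; exact h2.1
    simp only [hn]
    exact_mod_cast this
  have hB : ∀ u u' : ι → ℝ, ∑ L ∈ 𝓛, (∑ i, m L i * u i) * (∑ j, m L j * u' j)
      = ∑ i, ∑ j, u i * u' j * M i j := by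
    intro u u'
    simp only [Finset.sum_mul_sum]
    rw [Finset.sum_comm]
    refine Finset.sum_congr rfl fun i _ => ?_
    rw [Finset.sum_comm]
    simp only [hM, Finset.mul_sum]
    refine Finset.sum_congr rfl fun j _ => Finset.sum_congr rfl fun L _ => ?_
    ring
  set u : Fin 3 → ι → ℝ := fun c i => if col i = c then w i else 0 with hu
  set t : Fin 3 → ι → ℝ := fun c i => if col i = c then 1 else 0 with ht
  set X : Fin 3 → Finset ι → ℝ := fun c L => ∑ i, m L i * u c i with hX
  set P : Fin 3 → ℝ := fun c => ∑ i, u c i with hP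
  have hPnn : ∀ c, 0 ≤ P c := by
    intro c
    refine Finset.sum_nonneg fun i _ => ?_
    simp only [hu]; split_ifs
    · exact hw i
    · exact le_rfl
  have hmix : ∀ c d, c ≠ d → ∀ (a b : ι → ℝ), (∀ i, col i ≠ c → a i = 0) →
      (∀ i, col i ≠ d → b i = 0) →
      ∑ L ∈ 𝓛, (∑ i, m L i * a i) * (∑ j, m L j * b j) = (∑ i, a i) * ∑ j, b j := by
    intro c d hcd a b ha hb
    rw [hB, Finset.sum_mul_sum]
    refine Finset.sum_congr rfl fun i _ => Finset.sum_congr rfl fun j _ => ?_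
    by_cases h1 : col i = c
    · by_cases h2 : col j = d
      · rw [hMone i j (by rw [h1, h2]; exact hcd), mul_one]
      · simp [hb j h2]
    · simp [ha i h1]
  have hu0 : ∀ c i, col i ≠ c → u c i = 0 := fun c i h => by simp [hu, h]
  have ht0 : ∀ c i, col i ≠ c → t c i = 0 := fun c i h => by simp [ht, h]
  have htn : ∀ c, ∑ i, t c i = n c := by
    intro c; simp [ht, hn]
  have hsq : ∀ c d e, c ≠ d → d ≠ e → n e ≤ n d → P c ^ 2 ≤ 2 * ∑ L ∈ 𝓛, X c L ^ 2 := by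
    intro c d e hcd hde hle
    have h1 := hmix c d hcd (u c) (t d) (hu0 c) (ht0 d)
    rw [htn] at h1
    have h2 : ∑ L ∈ 𝓛, (∑ i, m L i * t d i) * (∑ j, m L j * t d j) ≤ 2 * n d ^ 2 := by
      rw [hB]
      have h3 : ∀ i, ∑ j, t d i * t d j * M i j ≤ t d i * (n d + n d) := by
        intro i
        by_cases hi : col i = d
        · have h4 : ∀ j, t d i * t d j * M i j ≤ t d j + if j = i then n e else 0 := by
            intro j
            have hti : t d i = 1 := by simp [ht, hi]
            rw [hti, one_mul]
            by_cases hj : col j = d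
            · have htj : t d j = 1 := by simp [ht, hj]
              rw [htj, one_mul]
              by_cases hji : j = i
              · subst hji
                have := hMdiag j e (by rw [hi]; exact hde)
                simp; linarith
              · have := hMle i j (Ne.symm hji)
                simp [hji]; exact this
            · rw [ht0 d j hj]
              have := (hnpos e).le
              split_ifs <;> simp <;> exact this
          refine (Finset.sum_le_sum fun j _ => h4 j).trans ?_
          rw [Finset.sum_add_distrib, htn, Finset.sum_ite_eq']
          have hti : t d i = 1 := by simp [ht, hi]
          simp [hti]; exact hle
        · simp [ht0 d i hi]
      refine (Finset.sum_le_sum fun i _ => h3 i).trans ?_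
      rw [← Finset.sum_mul, htn]
      nlinarith
    have hcs := Finset.sum_mul_sq_le_sq_mul_sq 𝓛 (X c) (fun L => ∑ j, m L j * t d j)
    have h1' : ∑ L ∈ 𝓛, X c L * (∑ j, m L j * t d j) = P c * n d := h1
    rw [h1'] at hcs
    simp only [← sq] at h2
    have h5 : 0 ≤ ∑ L ∈ 𝓛, X c L ^ 2 := Finset.sum_nonneg fun _ _ => sq_nonneg _
    have h6 : (P c) ^ 2 * (n d ^ 2) ≤ (2 * ∑ L ∈ 𝓛, X c L ^ 2) * n d ^ 2 := by
      calc (P c) ^ 2 * (n d ^ 2) = (P c * n d) ^ 2 := by ring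
        _ ≤ _ := hcs
        _ ≤ (∑ L ∈ 𝓛, X c L ^ 2) * (2 * n d ^ 2) := mul_le_mul_of_nonneg_left h2 h5
        _ = _ := by ring
    exact le_of_mul_le_mul_right h6 (by have := hnpos d; positivity)
  have hsq' : ∀ c, P c ^ 2 ≤ 2 * ∑ L ∈ 𝓛, X c L ^ 2 := by
    intro c
    have h1 : c ≠ c + 1 := by revert c; decide
    have h2 : c ≠ c + 2 := by revert c; decide
    have h3 : c + 1 ≠ c + 2 := by revert c; decide
    rcases le_total (n (c + 1)) (n (c + 2)) with h | h
    · exact hsq c (c + 2) (c + 1) h2 h3.symm h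
    · exact hsq c (c + 1) (c + 2) h1 h3 h
  have hXX : ∀ c d, c ≠ d → ∑ L ∈ 𝓛, X c L * X d L = P c * P d := fun c d hcd =>
    hmix c d hcd (u c) (u d) (hu0 c) (hu0 d)
  have hwu : ∀ i, w i = u 0 i + u 1 i + u 2 i := by
    intro i
    simp only [hu]
    generalize col i = c
    fin_cases c <;> simp
  have hWX : ∀ L, ∑ i ∈ L, w i = X 0 L + X 1 L + X 2 L := by
    intro L
    simp only [hX, ← Finset.sum_add_distrib, ← mul_add, ← hwu, hm]
    simp
  have hWP : ∑ i, w i = P 0 + P 1 + P 2 := by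
    simp only [hP, ← Finset.sum_add_distrib, ← hwu]
  have hexp : ∑ L ∈ 𝓛, (∑ i ∈ L, w i) ^ 2 = ∑ L ∈ 𝓛, X 0 L ^ 2 + ∑ L ∈ 𝓛, X 1 L ^ 2
      + ∑ L ∈ 𝓛, X 2 L ^ 2 + 2 * (P 0 * P 1) + 2 * (P 0 * P 2) + 2 * (P 1 * P 2) := by
    rw [← hXX 0 1 (by decide), ← hXX 0 2 (by decide), ← hXX 1 2 (by decide)]
    simp only [Finset.mul_sum, ← Finset.sum_add_distrib]
    refine Finset.sum_congr rfl fun L _ => ?_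
    rw [hWX]; ring
  rw [hexp, hWP]
  have a := hsq' 0
  have b := hsq' 1
  have c := hsq' 2
  have h01 := mul_nonneg (hPnn 0) (hPnn 1)
  have h02 := mul_nonneg (hPnn 0) (hPnn 2)
  have h12 := mul_nonneg (hPnn 1) (hPnn 2)
  nlinarith

/-- pure real inequality -/
lemma triple_real (p1 p2 p3 s1 s2 s3 x12 x13 x23 : ℝ)
    (hp1 : 0 < p1) (hp2 : 0 < p2) (hp3 : 0 < p3)
    (hs1 : 0 < s1) (hs2 : 0 < s2) (hs3 : 0 < s3)
    (m12 : 0 ≤ (p1 - p2) * (s1 - s2)) (m13 : 0 ≤ (p1 - p3) * (s1 - s3))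
    (m23 : 0 ≤ (p2 - p3) * (s2 - s3))
    (hx : 2 * (x12 + x13 + x23) = -(p1 * s1 + p2 * s2 + p3 * s3)) :
    (p1 + p2 + p3) ^ 2 / 12 ≤ x12 ^ 2 / (s1 * s2) + x13 ^ 2 / (s1 * s3) + x23 ^ 2 / (s2 * s3) := by
  have h12 : 0 < s1 * s2 := by positivity
  have h13 : 0 < s1 * s3 := by positivity
  have h23 : 0 < s2 * s3 := by positivity
  have hcs : (x12 + x13 + x23) ^ 2 / (s1 * s2 + s1 * s3 + s2 * s3)
      ≤ x12 ^ 2 / (s1 * s2) + x13 ^ 2 / (s1 * s3) + x23 ^ 2 / (s2 * s3) := by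
    have := Finset.sq_sum_div_le_sum_sq_div (Finset.univ : Finset (Fin 3)) ![x12, x13, x23]
      (g := ![s1 * s2, s1 * s3, s2 * s3]) (by
        intro i _
        fin_cases i
        · exact h12
        · exact h13
        · exact h23)
    simpa [Fin.sum_univ_three] using this
  refine le_trans ?_ hcs
  have hx' : (x12 + x13 + x23) ^ 2 = (p1 * s1 + p2 * s2 + p3 * s3) ^ 2 / 4 := by
    have : x12 + x13 + x23 = -(p1 * s1 + p2 * s2 + p3 * s3) / 2 := by linarith
    rw [this]; ring
  rw [hx', le_div_iff₀ (by positivity)]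
  have hch : (p1 + p2 + p3) * (s1 + s2 + s3) ≤ 3 * (p1 * s1 + p2 * s2 + p3 * s3) := by nlinarith
  have hq : 3 * (s1 * s2 + s1 * s3 + s2 * s3) ≤ (s1 + s2 + s3) ^ 2 := by
    nlinarith [sq_nonneg (s1 - s2), sq_nonneg (s1 - s3), sq_nonneg (s2 - s3)]
  have h1 : ((p1 + p2 + p3) * (s1 + s2 + s3)) ^ 2 ≤ (3 * (p1 * s1 + p2 * s2 + p3 * s3)) ^ 2 :=
    pow_le_pow_left₀ (by positivity) hch 2
  have h2 := mul_le_mul_of_nonneg_left hq (sq_nonneg (p1 + p2 + p3))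
  nlinarith



lemma cN_sum3 {r : ℕ} (a b c : Fin r → ℂ) (h : a + b + c = 0) :
    2 * ((cH a b).re + (cH a c).re + (cH b c).re) = - (cN a + cN b + cN c) := by
  have h0 : cN (a + b + c) = 0 := by rw [h]; simp [cN]
  have e : cN (a + b + c) = cN a + cN b + cN c
      + 2 * ((cH a b).re + (cH a c).re + (cH b c).re) := by
    simp only [cN, cH, dotProduct, Complex.re_sum, Finset.mul_sum, ← Finset.sum_add_distrib]
    refine Finset.sum_congr rfl fun k _ => ?_
    simp [Complex.normSq_apply]
    ring
  linarith

lemma triple_zero {r : ℕ} (a b c : Fin r → ℂ) (h : a + b + c = 0) (ha : a ≠ 0) (hb : b ≠ 0)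
    (hc : c ≠ 0) {ε : ℝ} (h0 : 0 < ε) (h1 : ε < 1) :
    (cN a ^ ε + cN b ^ ε + cN c ^ ε) ^ 2 / 12 ≤
      cN a ^ (ε - 1) * cN b ^ (ε - 1) * Complex.normSq (cH a b)
      + cN a ^ (ε - 1) * cN c ^ (ε - 1) * Complex.normSq (cH a c)
      + cN b ^ (ε - 1) * cN c ^ (ε - 1) * Complex.normSq (cH b c) := by
  have pa := cN_pos ha
  have pb := cN_pos hb
  have pc := cN_pos hc
  have prod : ∀ y : ℝ, 0 < y → y ^ ε * y ^ (1 - ε) = y := by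
    intro y hy
    rw [← Real.rpow_add hy]; simp
  have inv : ∀ y : ℝ, 0 < y → y ^ (ε - 1) = (y ^ (1 - ε))⁻¹ := by
    intro y hy
    rw [← Real.rpow_neg hy.le]; congr 1; ring
  have mono : ∀ x y : ℝ, 0 < x → 0 < y → 0 ≤ (x ^ ε - y ^ ε) * (x ^ (1 - ε) - y ^ (1 - ε)) := by
    intro x y hx hy
    rcases le_total x y with hxy | hxy
    · exact mul_nonneg_of_nonpos_of_nonpos
        (sub_nonpos.2 (Real.rpow_le_rpow hx.le hxy h0.le))
        (sub_nonpos.2 (Real.rpow_le_rpow hx.le hxy (by linarith)))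
    · exact mul_nonneg
        (sub_nonneg.2 (Real.rpow_le_rpow hy.le hxy h0.le))
        (sub_nonneg.2 (Real.rpow_le_rpow hy.le hxy (by linarith)))
  have key := triple_real (cN a ^ ε) (cN b ^ ε) (cN c ^ ε) (cN a ^ (1 - ε)) (cN b ^ (1 - ε))
    (cN c ^ (1 - ε)) (cH a b).re (cH a c).re (cH b c).re
    (Real.rpow_pos_of_pos pa _) (Real.rpow_pos_of_pos pb _) (Real.rpow_pos_of_pos pc _)
    (Real.rpow_pos_of_pos pa _) (Real.rpow_pos_of_pos pb _) (Real.rpow_pos_of_pos pc _)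
    (mono _ _ pa pb) (mono _ _ pa pc) (mono _ _ pb pc)
    (by rw [prod _ pa, prod _ pb, prod _ pc]; exact cN_sum3 a b c h)
  refine key.trans ?_
  have step : ∀ (x y : ℝ) (z : ℂ), 0 < x → 0 < y → z.re ^ 2 / (x ^ (1 - ε) * y ^ (1 - ε)) ≤
      x ^ (ε - 1) * y ^ (ε - 1) * Complex.normSq z := by
    intro x y z hx hy
    rw [inv x hx, inv y hy, div_eq_mul_inv, mul_inv, mul_comm]
    refine mul_le_mul_of_nonneg_left ?_ (by positivity)
    rw [Complex.normSq_apply]; nlinarith [mul_self_nonneg z.im]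
  exact add_le_add (add_le_add (step _ _ _ pa pb) (step _ _ _ pa pc)) (step _ _ _ pb pc)

lemma cH_smul_smul {r : ℕ} (α β : ℂ) (a b : Fin r → ℂ) :
    Complex.normSq (cH (α • a) (β • b))
      = Complex.normSq α * Complex.normSq β * Complex.normSq (cH a b) := by
  have : cH (α • a) (β • b) = star α * β * cH a b := by
    simp only [cH, star_smul, smul_dotProduct, dotProduct_smul, smul_eq_mul]; ring
  rw [this]; simp

lemma g_smul {r : ℕ} {ε : ℝ} (α β : ℂ) (hα : α ≠ 0) (hβ : β ≠ 0) (a b : Fin r → ℂ) :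
    cN (α • a) ^ (ε - 1) * cN (β • b) ^ (ε - 1) * Complex.normSq (cH (α • a) (β • b))
      = Complex.normSq α ^ ε * Complex.normSq β ^ ε *
        (cN a ^ (ε - 1) * cN b ^ (ε - 1) * Complex.normSq (cH a b)) := by
  have e : ∀ x : ℝ, 0 < x → x ^ ε = x ^ (ε - 1) * x := by
    intro x hx
    nth_rewrite 3 [← Real.rpow_one x]
    rw [← Real.rpow_add hx]; simp
  have ha := Complex.normSq_pos.2 hα
  have hb := Complex.normSq_pos.2 hβ
  rw [cN_smul, cN_smul, cH_smul_smul, Real.mul_rpow ha.le (cN_nonneg _),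
    Real.mul_rpow hb.le (cN_nonneg _), e _ ha, e _ hb]
  ring

lemma triple_coef {r : ℕ} (a b c : Fin r → ℂ) (α β γ : ℂ) (h : α • a + β • b + γ • c = 0)
    (ha : a ≠ 0) (hb : b ≠ 0) (hc : c ≠ 0) (hα : α ≠ 0) (hβ : β ≠ 0) (hγ : γ ≠ 0)
    {ε δ : ℝ} (h0 : 0 < ε) (h1 : ε < 1) (hδ : 0 < δ)
    (ka : δ ≤ Complex.normSq α ^ ε ∧ Complex.normSq α ^ ε ≤ δ⁻¹)
    (kb : δ ≤ Complex.normSq β ^ ε ∧ Complex.normSq β ^ ε ≤ δ⁻¹)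
    (kc : δ ≤ Complex.normSq γ ^ ε ∧ Complex.normSq γ ^ ε ≤ δ⁻¹) :
    δ ^ 4 / 12 * (cN a ^ ε + cN b ^ ε + cN c ^ ε) ^ 2 ≤
      cN a ^ (ε - 1) * cN b ^ (ε - 1) * Complex.normSq (cH a b)
      + cN b ^ (ε - 1) * cN c ^ (ε - 1) * Complex.normSq (cH b c)
      + cN a ^ (ε - 1) * cN c ^ (ε - 1) * Complex.normSq (cH a c) := by
  have key := triple_zero _ _ _ h (smul_ne_zero hα ha) (smul_ne_zero hβ hb) (smul_ne_zero hγ hc)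
    h0 h1
  rw [g_smul α β hα hβ, g_smul α γ hα hγ, g_smul β γ hβ hγ, cN_smul, cN_smul, cN_smul,
    Real.mul_rpow (Complex.normSq_nonneg _) (cN_nonneg _),
    Real.mul_rpow (Complex.normSq_nonneg _) (cN_nonneg _),
    Real.mul_rpow (Complex.normSq_nonneg _) (cN_nonneg _)] at key
  have gnn : ∀ x y : Fin r → ℂ,
      0 ≤ cN x ^ (ε - 1) * cN y ^ (ε - 1) * Complex.normSq (cH x y) := fun x y =>
    mul_nonneg (mul_nonneg (Real.rpow_nonneg (cN_nonneg _) _) (Real.rpow_nonneg (cN_nonneg _) _))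
      (Complex.normSq_nonneg _)
  have g1 := gnn a b
  have g2 := gnn a c
  have g3 := gnn b c
  generalize cN a ^ (ε - 1) * cN b ^ (ε - 1) * Complex.normSq (cH a b) = G1 at *
  generalize cN a ^ (ε - 1) * cN c ^ (ε - 1) * Complex.normSq (cH a c) = G2 at *
  generalize cN b ^ (ε - 1) * cN c ^ (ε - 1) * Complex.normSq (cH b c) = G3 at *
  have w1 : 0 ≤ cN a ^ ε := Real.rpow_nonneg (cN_nonneg _) _
  have w2 : 0 ≤ cN b ^ ε := Real.rpow_nonneg (cN_nonneg _) _
  have w3 : 0 ≤ cN c ^ ε := Real.rpow_nonneg (cN_nonneg _) _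
  generalize cN a ^ ε = W1 at *
  generalize cN b ^ ε = W2 at *
  generalize cN c ^ ε = W3 at *
  generalize Complex.normSq α ^ ε = k1 at *
  generalize Complex.normSq β ^ ε = k2 at *
  generalize Complex.normSq γ ^ ε = k3 at *
  have lo : (δ * (W1 + W2 + W3)) ^ 2 ≤ (k1 * W1 + k2 * W2 + k3 * W3) ^ 2 := by
    refine pow_le_pow_left₀ (by positivity) ?_ 2
    nlinarith [mul_le_mul_of_nonneg_right ka.1 w1, mul_le_mul_of_nonneg_right kb.1 w2,
      mul_le_mul_of_nonneg_right kc.1 w3]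
  have up : ∀ x y G : ℝ, (δ ≤ x ∧ x ≤ δ⁻¹) → (δ ≤ y ∧ y ≤ δ⁻¹) → 0 ≤ G →
      x * y * G ≤ δ⁻¹ * δ⁻¹ * G := by
    intro x y G hx hy hG
    refine mul_le_mul_of_nonneg_right ?_ hG
    exact mul_le_mul hx.2 hy.2 (hδ.le.trans hy.1) (by positivity)
  have u1 := up _ _ _ ka kb g1
  have u2 := up _ _ _ ka kc g2
  have u3 := up _ _ _ kb kc g3
  have fin : (δ * (W1 + W2 + W3)) ^ 2 / 12 ≤ δ⁻¹ * δ⁻¹ * (G1 + G2 + G3) := by linarith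
  have := mul_le_mul_of_nonneg_left fin (by positivity : 0 ≤ δ ^ 2)
  have e : δ ^ 2 * (δ⁻¹ * δ⁻¹ * (G1 + G2 + G3)) = G1 + G2 + G3 := by field_simp
  rw [e] at this
  calc _ = δ ^ 2 * ((δ * (W1 + W2 + W3)) ^ 2 / 12) := by ring
    _ ≤ _ := this
    _ = _ := by ring


lemma exists_eps {κ : Type*} [Finite κ] (a : κ → ℝ) (ha : ∀ k, 0 < a k) {δ : ℝ} (hδ0 : 0 < δ)
    (hδ : δ < 1) : ∃ ε : ℝ, 0 < ε ∧ ε < 1 ∧ ∀ k, δ ≤ a k ^ ε ∧ a k ^ ε ≤ δ⁻¹ := by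
  have h1 : ∀ k, ∀ᶠ ε in nhdsWithin (0 : ℝ) (Set.Ioi 0), δ ≤ a k ^ ε ∧ a k ^ ε ≤ δ⁻¹ := by
    intro k
    have c : Filter.Tendsto (fun ε : ℝ => a k ^ ε) (nhdsWithin (0 : ℝ) (Set.Ioi 0)) (nhds 1) := by
      have := (Real.continuousAt_const_rpow (ha k).ne' (b := 0)).tendsto
      rw [Real.rpow_zero] at this
      exact this.mono_left nhdsWithin_le_nhds
    have := c (Icc_mem_nhds hδ ((one_lt_inv₀ hδ0).2 hδ))
    exact this
  have h2 := Filter.eventually_all.2 h1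
  have h3 : ∀ᶠ ε in nhdsWithin (0 : ℝ) (Set.Ioi 0), ε < 1 :=
    nhdsWithin_le_nhds (Iio_mem_nhds one_pos)
  have h4 : ∀ᶠ ε in nhdsWithin (0 : ℝ) (Set.Ioi 0), (0:ℝ) < ε := self_mem_nhdsWithin
  obtain ⟨ε, e1, e2, e3⟩ := (h2.and (h3.and h4)).exists
  exact ⟨ε, e3, e2, e1⟩

lemma core_fin {r : ℕ} {ι : Type*} [Fintype ι] [DecidableEq ι] (v : ι → Fin r → ℂ)
    (hv : ∀ i, v i ≠ 0) (hspan : Submodule.span ℂ (Set.range v) = ⊤)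
    (col : ι → Fin 3) (hcol : ∀ c, ∃ i, col i = c)
    (𝓛 : Finset (Finset ι))
    (huniq : ∀ L ∈ 𝓛, ∀ L' ∈ 𝓛, ∀ i j, i ≠ j → i ∈ L → j ∈ L → i ∈ L' → j ∈ L' → L = L')
    (hex : ∀ i j, col i ≠ col j → ∃ L ∈ 𝓛, i ∈ L ∧ j ∈ L)
    (hall : ∀ L ∈ 𝓛, ∀ c, ∃ i ∈ L, col i = c)
    (hrel : ∀ L ∈ 𝓛, ∀ i ∈ L, ∀ j ∈ L, ∀ k ∈ L, i ≠ j → j ≠ k → i ≠ k →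
      ∃ α : Fin 3 → ℂ, (∀ t, α t ≠ 0) ∧ α 0 • v i + α 1 • v j + α 2 • v k = 0) : r < 12 := by
  rcases Nat.eq_zero_or_pos r with h0 | hr
  · omega
  have hne : Nonempty ι := ⟨(hcol 0).choose⟩
  set n : ℝ := (Fintype.card ι : ℝ) with hn
  have hn0 : 0 < n := by rw [hn]; exact_mod_cast Fintype.card_pos
  have hch : ∀ q : ι × ι × ι, ∃ α : Fin 3 → ℂ, (∀ t, α t ≠ 0) ∧
      ((∃ L ∈ 𝓛, q.1 ∈ L ∧ q.2.1 ∈ L ∧ q.2.2 ∈ L ∧ q.1 ≠ q.2.1 ∧ q.2.1 ≠ q.2.2 ∧ q.1 ≠ q.2.2) →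
        α 0 • v q.1 + α 1 • v q.2.1 + α 2 • v q.2.2 = 0) := by
    intro q
    by_cases h : ∃ L ∈ 𝓛, q.1 ∈ L ∧ q.2.1 ∈ L ∧ q.2.2 ∈ L ∧ q.1 ≠ q.2.1 ∧ q.2.1 ≠ q.2.2 ∧
        q.1 ≠ q.2.2
    · obtain ⟨L, hL, h1, h2, h3, h4, h5, h6⟩ := h
      obtain ⟨α, ha, hb⟩ := hrel L hL _ h1 _ h2 _ h3 h4 h5 h6
      exact ⟨α, ha, fun _ => hb⟩
    · exact ⟨fun _ => 1, fun _ => one_ne_zero, fun h' => absurd h' h⟩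
  choose α hα0 hα using hch
  set δ : ℝ := 1 - 1 / (n + 1) with hδ
  have hδ0 : 0 < δ := by
    rw [hδ, sub_pos, div_lt_one (by linarith)]; linarith
  have hδ1 : δ < 1 := by
    rw [hδ]; have : 0 < 1 / (n + 1) := by positivity
    linarith
  have hδ4 : 1 / 12 < 1 / n + δ ^ 4 / 12 := by
    have := one_add_mul_le_pow (a := - (1 / (n + 1))) (by
      have : 1 / (n + 1) ≤ 1 := by rw [div_le_one (by linarith)]; linarith
      linarith) 4
    have h2 : 1 / (n + 1) < 1 / n := one_div_lt_one_div_of_lt hn0 (by linarith)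
    have h3 : 0 < 1 / n := by positivity
    have h4 : (1 + -(1 / (n + 1))) = δ := by rw [hδ]; ring
    rw [h4] at this
    push_cast at this
    linarith
  obtain ⟨ε, hε0, hε1, hε⟩ := exists_eps (fun q : (ι × ι × ι) × Fin 3 => Complex.normSq (α q.1 q.2))
    (fun q => Complex.normSq_pos.2 (hα0 _ _)) hδ0 hδ1
  obtain ⟨T, hT0, hT1, hT2⟩ := exists_isotropic hr v hv hspan hε0
  set z : ι → Fin r → ℂ := fun i => T *ᵥ v i with hz
  set w : ι → ℝ := fun i => cN (z i) ^ ε with hw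
  set g : ι → ι → ℝ := fun i j => cN (z i) ^ (ε - 1) * cN (z j) ^ (ε - 1) *
    Complex.normSq (cH (z i) (z j)) with hg
  change ∑ i, w i = 1 at hT1
  change ∑ i, ∑ j, g i j = 1 / r at hT2
  have gnn : ∀ i j, 0 ≤ g i j := fun i j =>
    mul_nonneg (mul_nonneg (Real.rpow_nonneg (cN_nonneg _) _) (Real.rpow_nonneg (cN_nonneg _) _))
      (Complex.normSq_nonneg _)
  have wnn : ∀ i, 0 ≤ w i := fun i => Real.rpow_nonneg (cN_nonneg _) _
  have gdiag : ∀ i, g i i = w i ^ 2 := by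
    intro i
    have hp : 0 < cN (z i) := cN_pos (hT0 i)
    simp only [hg, hw]
    rw [cH_self, Complex.normSq_ofReal]
    have : cN (z i) ^ ε = cN (z i) ^ (ε - 1) * cN (z i) := by
      nth_rewrite 3 [← Real.rpow_one (cN (z i))]
      rw [← Real.rpow_add hp]; simp
    rw [this]; ring
  have hline : ∀ L ∈ 𝓛, 2 * (δ ^ 4 / 12) * (∑ i ∈ L, w i) ^ 2
      ≤ ∑ i ∈ L, ∑ j ∈ L, if i ≠ j then g i j else 0 := by
    intro L hL
    refine line_sum L ?_ g w _ (by positivity) ?_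
    · have : (Finset.univ : Finset (Fin 3)) ⊆ L.image col := by
        intro c _
        obtain ⟨i, hi, hc⟩ := hall L hL c
        exact Finset.mem_image.2 ⟨i, hi, hc⟩
      have := (Finset.card_le_card this).trans Finset.card_image_le
      simpa using this
    · intro i hi j hj k hk hij hjk hik
      have rel := hα (i, j, k) ⟨L, hL, hi, hj, hk, hij, hjk, hik⟩
      have rel2 : α (i, j, k) 0 • z i + α (i, j, k) 1 • z j + α (i, j, k) 2 • z k = 0 := by
        simp only [hz, ← Matrix.mulVec_smul, ← Matrix.mulVec_add]
        simp only at rel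
        rw [rel, Matrix.mulVec_zero]
      exact triple_coef _ _ _ _ _ _ rel2 (hT0 i) (hT0 j) (hT0 k) (hα0 _ _) (hα0 _ _) (hα0 _ _)
        hε0 hε1 hδ0 (hε ((i, j, k), 0)) (hε ((i, j, k), 1)) (hε ((i, j, k), 2))
  have hcomb := comb_lines col hcol 𝓛 huniq hex hall w wnn
  rw [hT1] at hcomb
  have hoff : ∑ L ∈ 𝓛, ∑ i ∈ L, ∑ j ∈ L, (if i ≠ j then g i j else 0)
      ≤ ∑ i, ∑ j, if i ≠ j then g i j else 0 := by
    have e : ∀ L : Finset ι, ∑ i ∈ L, ∑ j ∈ L, (if i ≠ j then g i j else 0)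
        = ∑ i, ∑ j, if (i ∈ L ∧ j ∈ L) then (if i ≠ j then g i j else 0) else 0 := by
      intro L
      simp only [ite_and, Finset.sum_ite_mem, Finset.univ_inter]
      rw [← Finset.sum_filter_add_sum_filter_not Finset.univ (· ∈ L)]
      rw [Finset.sum_eq_zero (s := Finset.univ.filter (¬ · ∈ L))]
      · rw [add_zero, Finset.filter_mem_eq_inter, Finset.univ_inter]
        refine Finset.sum_congr rfl fun i hi => ?_
        simp [hi]
      · intro i hi
        have := (Finset.mem_filter.1 hi).2
        simp [this]
    rw [Finset.sum_congr rfl fun L _ => e L, Finset.sum_comm]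
    refine Finset.sum_le_sum fun i _ => ?_
    rw [Finset.sum_comm]
    refine Finset.sum_le_sum fun j _ => ?_
    by_cases hij : i = j
    · simp [hij]
    rw [← Finset.sum_filter, Finset.sum_const, nsmul_eq_mul]
    have : (𝓛.filter fun L => i ∈ L ∧ j ∈ L).card ≤ 1 := by
      rw [Finset.card_le_one]
      intro L hL L' hL'
      rw [Finset.mem_filter] at hL hL'
      exact huniq L hL.1 L' hL'.1 i j hij hL.2.1 hL.2.2 hL'.2.1 hL'.2.2
    have h1 : ((𝓛.filter fun L => i ∈ L ∧ j ∈ L).card : ℝ) ≤ 1 := by exact_mod_cast this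
    simp only [ne_eq, hij, not_false_eq_true, if_true]
    nlinarith [gnn i j]
  have hsplit : ∑ i, ∑ j, g i j = ∑ i, w i ^ 2 + ∑ i, ∑ j, if i ≠ j then g i j else 0 := by
    rw [← Finset.sum_add_distrib]
    refine Finset.sum_congr rfl fun i _ => ?_
    rw [← gdiag i]
    have : ∀ j, g i j = (if i = j then g i j else 0) + if i ≠ j then g i j else 0 := by
      intro j; by_cases h : i = j <;> simp [h]
    rw [Finset.sum_congr rfl fun j _ => this j, Finset.sum_add_distrib, Finset.sum_ite_eq]
    simp
  have hsq : 1 / n ≤ ∑ i, w i ^ 2 := by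
    have := sq_sum_le_card_mul_sum_sq (s := Finset.univ) (f := w)
    rw [hT1, Finset.card_univ, ← hn] at this
    rw [div_le_iff₀ hn0]; linarith
  have hs := Finset.sum_le_sum hline
  rw [← Finset.mul_sum] at hs
  have hd : 0 < δ ^ 4 / 12 := by positivity
  have hfin : 1 / 12 < 1 / (r : ℝ) := by
    rw [← hT2, hsplit]
    nlinarith
  have hr' : (0 : ℝ) < r := by exact_mod_cast hr
  have := (one_div_lt_one_div (by norm_num) hr').1 hfin
  exact_mod_cast this

theorem core_kelly {V ι : Type*} [AddCommGroup V] [Module ℂ V] [Finite ι] (v : ι → V)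
    (hli : ∀ i j, i ≠ j → LinearIndependent ℂ ![v i, v j])
    (col : ι → Fin 3) (hcol : ∀ c, ∃ i, col i = c)
    (hthird : ∀ i j c, col i ≠ col j → c ≠ col i → c ≠ col j → ∃ k, col k = c ∧
      v k ∈ Submodule.span ℂ {v i, v j}) :
    Module.finrank ℂ (Submodule.span ℂ (Set.range v)) < 12 := by
  classical
  have := Fintype.ofFinite ι
  have hv : ∀ i, v i ≠ 0 := by
    intro i
    obtain ⟨j, hj⟩ := hcol (col i + 1)
    have : i ≠ j := by rintro rfl; revert hj; generalize col i = c; revert c; decide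
    exact (hli i j this).ne_zero 0
  set W := Submodule.span ℂ (Set.range v) with hW
  have : FiniteDimensional ℂ W := FiniteDimensional.span_of_finite ℂ (Set.finite_range v)
  let b := Module.finBasis ℂ W
  let e : W ≃ₗ[ℂ] (Fin (Module.finrank ℂ W) → ℂ) := b.equivFun
  let v' : ι → W := fun i => ⟨v i, Submodule.subset_span ⟨i, rfl⟩⟩
  have hrange : ∀ x y : V, Set.range ![x, y] = {x, y} := by
    intro x y
    simp [Matrix.range_cons, Matrix.range_empty, Set.pair_comm]
  have hspan2 : ∀ i j p q, p ≠ q → v p ∈ Submodule.span ℂ {v i, v j} →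
      v q ∈ Submodule.span ℂ {v i, v j} →
      Submodule.span ℂ {v p, v q} = Submodule.span ℂ {v i, v j} := by
    intro i j p q hpq hp hq
    have hle : Submodule.span ℂ {v p, v q} ≤ Submodule.span ℂ {v i, v j} := by
      rw [Submodule.span_le]; rintro x (rfl | rfl)
      · exact hp
      · exact hq
    have : FiniteDimensional ℂ (Submodule.span ℂ {v i, v j}) :=
      FiniteDimensional.span_of_finite ℂ (Set.toFinite _)
    refine Submodule.eq_of_le_of_finrank_le hle ?_
    have h1 : Module.finrank ℂ (Submodule.span ℂ (Set.range ![v p, v q])) = 2 := by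
      rw [finrank_span_eq_card (hli p q hpq)]; simp
    have h2 : Module.finrank ℂ (Submodule.span ℂ ({v i, v j} : Set V)) ≤ 2 := by
      have := finrank_range_le_card (R := ℂ) ![v i, v j]
      rw [Set.finrank, hrange] at this
      simpa using this
    rw [hrange] at h1
    omega
  let ln : ι × ι → Finset ι := fun q => Finset.univ.filter fun k => v k ∈ Submodule.span ℂ {v q.1, v q.2}
  let 𝓛 : Finset (Finset ι) := (Finset.univ.filter fun q : ι × ι => col q.1 ≠ col q.2).image ln
  have h𝓛 : ∀ L ∈ 𝓛, ∃ i j, col i ≠ col j ∧ ∀ k, k ∈ L ↔ v k ∈ Submodule.span ℂ {v i, v j} := by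
    intro L hL
    obtain ⟨q, hq, rfl⟩ := Finset.mem_image.1 hL
    exact ⟨q.1, q.2, (Finset.mem_filter.1 hq).2, fun k => by simp [ln]⟩
  refine core_fin (fun i => e (v' i)) ?_ ?_ col hcol 𝓛 ?_ ?_ ?_ ?_
  · intro i h
    rw [LinearEquiv.map_eq_zero_iff] at h
    exact hv i (congrArg Subtype.val h)
  · have h1 : Submodule.span ℂ (Set.range v') = ⊤ := by
      rw [eq_top_iff]
      have h2 : Submodule.map W.subtype (Submodule.span ℂ (Set.range v')) = W := by
        rw [Submodule.map_span, ← Set.range_comp]; rfl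
      intro x _
      have : (x : V) ∈ Submodule.map W.subtype (Submodule.span ℂ (Set.range v')) := by
        rw [h2]; exact x.2
      obtain ⟨y, hy, hyx⟩ := this
      have : y = x := Subtype.ext hyx
      rwa [← this]
    have : Set.range (fun i => e (v' i)) = e.toLinearMap '' Set.range v' := by
      rw [← Set.range_comp]; rfl
    rw [this, ← Submodule.map_span, h1, Submodule.map_top]
    exact LinearEquiv.range e
  · intro L hL L' hL' i j hij hi hj hi' hj'
    obtain ⟨a, c, _, hac⟩ := h𝓛 L hL
    obtain ⟨a', c', _, hac'⟩ := h𝓛 L' hL'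
    ext k
    rw [hac, hac', ← hspan2 a c i j hij ((hac i).1 hi) ((hac j).1 hj),
      ← hspan2 a' c' i j hij ((hac' i).1 hi') ((hac' j).1 hj')]
  · intro i j hij
    refine ⟨ln (i, j), Finset.mem_image.2 ⟨(i, j), by simpa using hij, rfl⟩, ?_, ?_⟩
    · simp only [ln, Finset.mem_filter, Finset.mem_univ, true_and]
      exact Submodule.subset_span (by simp)
    · simp only [ln, Finset.mem_filter, Finset.mem_univ, true_and]
      exact Submodule.subset_span (by simp)
  · intro L hL c
    obtain ⟨a, b, hab, hh⟩ := h𝓛 L hL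
    by_cases h1 : c = col a
    · exact ⟨a, (hh a).2 (Submodule.subset_span (by simp)), h1.symm⟩
    by_cases h2 : c = col b
    · exact ⟨b, (hh b).2 (Submodule.subset_span (by simp)), h2.symm⟩
    obtain ⟨k, hk, hk2⟩ := hthird a b c hab h1 h2
    exact ⟨k, (hh k).2 hk2, hk⟩
  · intro L hL i hi j hj k hk hij hjk hik
    obtain ⟨a, b, hab, hh⟩ := h𝓛 L hL
    have hs := hspan2 a b i j hij ((hh i).1 hi) ((hh j).1 hj)
    have hkm := (hh k).1 hk
    rw [← hs] at hkm
    obtain ⟨x, y, hxy⟩ := Submodule.mem_span_pair.1 hkm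
    refine ⟨![x, y, -1], ?_, ?_⟩
    · have hx : x ≠ 0 := by
        rintro rfl
        have := LinearIndependent.pair_iff.1 (hli j k hjk) y (-1) (by rw [← hxy]; simp)
        simpa using this.2
      have hy : y ≠ 0 := by
        rintro rfl
        have := LinearIndependent.pair_iff.1 (hli i k hik) x (-1) (by rw [← hxy]; simp)
        simpa using this.2
      intro t; fin_cases t <;> simp [hx, hy]
    · simp only [Matrix.cons_val_zero, Matrix.cons_val_one, Matrix.cons_val]
      rw [← map_smul, ← map_smul, ← map_smul, ← map_add, ← map_add,
        LinearEquiv.map_eq_zero_iff]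
      apply Subtype.ext
      simp [v', hxy]


section SGPoly
open MvPolynomial

lemma hc_mul_le {σ : Type*} {p : MvPolynomial σ ℂ} {a m : ℕ} (hp : p.IsHomogeneous a) (h : a ≤ m)
    (u : MvPolynomial σ ℂ) :
    homogeneousComponent m (u * p) = homogeneousComponent (m - a) u * p := by
  let _ : GradedAlgebra (homogeneousSubmodule σ ℂ) := MvPolynomial.gradedAlgebra
  have := DirectSum.coe_decompose_mul_of_right_mem_of_le (homogeneousSubmodule σ ℂ) (a := u)
    (b := p) (n := m) (i := a) hp h
  exact (decomposition.decompose'_apply (u * p) m).symm.trans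
    (this.trans (congrArg (· * p) (decomposition.decompose'_apply u (m - a))))

lemma hc_mul_lt {σ : Type*} {p : MvPolynomial σ ℂ} {a m : ℕ} (hp : p.IsHomogeneous a) (h : ¬ a ≤ m)
    (u : MvPolynomial σ ℂ) :
    homogeneousComponent m (u * p) = 0 := by
  let _ : GradedAlgebra (homogeneousSubmodule σ ℂ) := MvPolynomial.gradedAlgebra
  have := DirectSum.coe_decompose_mul_of_right_mem_of_not_le (homogeneousSubmodule σ ℂ) (a := u)
    (b := p) (n := m) (i := a) hp h
  exact (decomposition.decompose'_apply (u * p) m).symm.trans this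

lemma hom0 {σ : Type*} (p : MvPolynomial σ ℂ) : ∃ c : ℂ, homogeneousComponent 0 p = C c :=
  ⟨_, homogeneousComponent_zero p⟩

lemma mem11 {σ : Type*} {a b f : MvPolynomial σ ℂ} (ha : a.IsHomogeneous 1) (hb : b.IsHomogeneous 1)
    (hf : f.IsHomogeneous 1) (h : f ∈ Ideal.span {a, b}) : ∃ μ ν : ℂ, f = C μ * a + C ν * b := by
  obtain ⟨u, v, huv⟩ := Ideal.mem_span_pair.1 h
  obtain ⟨μ, hμ⟩ := hom0 u
  obtain ⟨ν, hν⟩ := hom0 v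
  refine ⟨μ, ν, ?_⟩
  rw [← homogeneousComponent_eq_self hf, ← huv, map_add, hc_mul_le ha le_rfl, hc_mul_le hb le_rfl]
  simp [hμ, hν]

lemma mem11_2 {σ : Type*} {a b f : MvPolynomial σ ℂ} (ha : a.IsHomogeneous 1)
    (hb : b.IsHomogeneous 1) (hf : f.IsHomogeneous 2) (h : f ∈ Ideal.span {a, b}) :
    ∃ m m' : MvPolynomial σ ℂ, m.IsHomogeneous 1 ∧ m'.IsHomogeneous 1 ∧ f = a * m + b * m' := by
  obtain ⟨u, v, huv⟩ := Ideal.mem_span_pair.1 h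
  refine ⟨_, _, homogeneousComponent_isHomogeneous 1 u, homogeneousComponent_isHomogeneous 1 v, ?_⟩
  rw [← homogeneousComponent_eq_self hf, ← huv, map_add, hc_mul_le ha one_le_two,
    hc_mul_le hb one_le_two]
  ring_nf

lemma mem22 {σ : Type*} {a b f : MvPolynomial σ ℂ} (ha : a.IsHomogeneous 2) (hb : b.IsHomogeneous 2)
    (hf : f.IsHomogeneous 2) (h : f ∈ Ideal.span {a, b}) : ∃ μ ν : ℂ, f = C μ * a + C ν * b := by
  obtain ⟨u, v, huv⟩ := Ideal.mem_span_pair.1 h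
  obtain ⟨μ, hμ⟩ := hom0 u
  obtain ⟨ν, hν⟩ := hom0 v
  refine ⟨μ, ν, ?_⟩
  rw [← homogeneousComponent_eq_self hf, ← huv, map_add, hc_mul_le ha le_rfl, hc_mul_le hb le_rfl]
  simp [hμ, hν]

lemma mem22_1 {σ : Type*} {a b f : MvPolynomial σ ℂ} (ha : a.IsHomogeneous 2)
    (hb : b.IsHomogeneous 2) (hf : f.IsHomogeneous 1) (h : f ∈ Ideal.span {a, b}) : f = 0 := by
  obtain ⟨u, v, huv⟩ := Ideal.mem_span_pair.1 h
  rw [← homogeneousComponent_eq_self hf, ← huv, map_add, hc_mul_lt ha (by norm_num),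
    hc_mul_lt hb (by norm_num), add_zero]

lemma mem12_1 {σ : Type*} {a b f : MvPolynomial σ ℂ} (ha : a.IsHomogeneous 1)
    (hb : b.IsHomogeneous 2) (hf : f.IsHomogeneous 1) (h : f ∈ Ideal.span {a, b}) : a ∣ f := by
  obtain ⟨u, v, huv⟩ := Ideal.mem_span_pair.1 h
  rw [← homogeneousComponent_eq_self hf, ← huv, map_add, hc_mul_le ha le_rfl,
    hc_mul_lt hb (by norm_num), add_zero]
  exact dvd_mul_left _ _

lemma mem12_2 {σ : Type*} {a b f : MvPolynomial σ ℂ} (ha : a.IsHomogeneous 1)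
    (hb : b.IsHomogeneous 2) (hf : f.IsHomogeneous 2) (h : f ∈ Ideal.span {a, b}) :
    ∃ (m : MvPolynomial σ ℂ) (c : ℂ), m.IsHomogeneous 1 ∧ f = a * m + C c * b := by
  obtain ⟨u, v, huv⟩ := Ideal.mem_span_pair.1 h
  obtain ⟨ν, hν⟩ := hom0 v
  refine ⟨_, ν, homogeneousComponent_isHomogeneous 1 u, ?_⟩
  rw [← homogeneousComponent_eq_self hf, ← huv, map_add, hc_mul_le ha one_le_two,
    hc_mul_le hb le_rfl]
  simp [hν, mul_comm]

lemma mem1_2 {σ : Type*} {a f : MvPolynomial σ ℂ} (ha : a.IsHomogeneous 1)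
    (hf : f.IsHomogeneous 2) (h : f ∈ Ideal.span {a}) :
    ∃ m : MvPolynomial σ ℂ, m.IsHomogeneous 1 ∧ f = a * m := by
  obtain ⟨u, hu⟩ := Ideal.mem_span_singleton'.1 h
  refine ⟨_, homogeneousComponent_isHomogeneous 1 u, ?_⟩
  rw [← homogeneousComponent_eq_self hf, ← hu, hc_mul_le ha one_le_two]
  ring_nf

lemma hom_not_unit {σ : Type*} {a : MvPolynomial σ ℂ} {m : ℕ} (hm : m ≠ 0) (ha : a.IsHomogeneous m) :
    ¬ IsUnit a := by
  intro h
  have h1 := (isUnit_iff_totalDegree_of_isReduced.1 h).2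
  rw [ha.totalDegree h.ne_zero] at h1
  exact hm h1

lemma prod_not_irr {σ : Type*} {a b : MvPolynomial σ ℂ} (ha : a.IsHomogeneous 1)
    (hb : b.IsHomogeneous 1) : ¬ Irreducible (a * b) := fun h =>
  (h.isUnit_or_isUnit rfl).elim (hom_not_unit one_ne_zero ha) (hom_not_unit one_ne_zero hb)

lemma not_unit_deg {σ : Type*} {a : MvPolynomial σ ℂ} (h0 : a ≠ 0) (h : ¬ IsUnit a) :
    1 ≤ a.totalDegree := by
  by_contra hc
  have h1 : a.totalDegree = 0 := by omega
  apply h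
  rw [isUnit_iff_totalDegree_of_isReduced]
  refine ⟨?_, h1⟩
  rw [isUnit_iff_ne_zero]
  intro h2
  rw [totalDegree_eq_zero_iff_eq_C] at h1
  rw [h2, C_0] at h1
  exact h0 h1

lemma lin_prime {σ : Type*} {a : MvPolynomial σ ℂ} (ha : a.IsHomogeneous 1) (h0 : a ≠ 0) :
    Prime a := by
  refine Irreducible.prime ⟨hom_not_unit one_ne_zero ha, ?_⟩
  intro x y hxy
  by_contra hc
  push Not at hc
  have hx : x ≠ 0 := by rintro rfl; simp at hxy; exact h0 hxy
  have hy : y ≠ 0 := by rintro rfl; simp at hxy; exact h0 hxy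
  have := ha.totalDegree h0
  rw [hxy, totalDegree_mul_of_isDomain hx hy] at this
  have h1 := not_unit_deg hx hc.1
  have h2 := not_unit_deg hy hc.2
  omega

lemma quad_factor {σ : Type*} {q : MvPolynomial σ ℂ} (hq : q.IsHomogeneous 2) (h0 : q ≠ 0)
    (hi : ¬ Irreducible q) : ∃ b c : MvPolynomial σ ℂ, b.IsHomogeneous 1 ∧ c.IsHomogeneous 1 ∧
      q = b * c := by
  have : ∃ x y, q = x * y ∧ ¬ IsUnit x ∧ ¬ IsUnit y := by
    by_contra hc
    push Not at hc
    refine hi ⟨hom_not_unit two_ne_zero hq, fun x y hxy => ?_⟩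
    by_contra hd
    push Not at hd
    exact hd.2 (hc x y hxy hd.1)
  obtain ⟨x, y, hxy, hux, huy⟩ := this
  have hx : x ≠ 0 := by rintro rfl; simp at hxy; exact h0 hxy
  have hy : y ≠ 0 := by rintro rfl; simp at hxy; exact h0 hxy
  have hd := hq.totalDegree h0
  rw [hxy, totalDegree_mul_of_isDomain hx hy] at hd
  have h1 := not_unit_deg hx hux
  have h2 := not_unit_deg hy huy
  have hx1 : x.totalDegree = 1 := by omega
  have hy1 : y.totalDegree = 1 := by omega
  have ex := sum_homogeneousComponent x
  have ey := sum_homogeneousComponent y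
  rw [hx1, Finset.sum_range_succ, Finset.sum_range_one] at ex
  rw [hy1, Finset.sum_range_succ, Finset.sum_range_one] at ey
  have hx1' := homogeneousComponent_isHomogeneous 1 x
  have hy1' := homogeneousComponent_isHomogeneous 1 y
  refine ⟨_, _, hx1', hy1', ?_⟩
  have e : q = x * homogeneousComponent 0 y + x * homogeneousComponent 1 y := by
    rw [hxy, ← mul_add, ey]
  rw [← homogeneousComponent_eq_self hq, e, map_add, hc_mul_le hy1' one_le_two,
    hc_mul_le (homogeneousComponent_isHomogeneous 0 y) (Nat.zero_le 2),
    homogeneousComponent_eq_zero (2 - 0) x (by omega)]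
  simp

noncomputable def sPhi {σ : Type*} (f : MvPolynomial σ ℂ →ₗ[ℂ] ℂ) (u : MvPolynomial σ ℂ) :
    MvPolynomial σ ℂ →ₐ[ℂ] MvPolynomial σ ℂ := aeval fun i => X i - C (f (X i)) * u

lemma sPhi_lin {σ : Type*} (f : MvPolynomial σ ℂ →ₗ[ℂ] ℂ) (u : MvPolynomial σ ℂ)
    {p : MvPolynomial σ ℂ} (hp : p.IsHomogeneous 1) : sPhi f u p = p - C (f p) * u := by
  have hp' : p ∈ homogeneousSubmodule σ ℂ 1 := hp
  rw [homogeneousSubmodule_one_eq_span_X] at hp'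
  induction hp' using Submodule.span_induction with
  | mem x hx => obtain ⟨i, rfl⟩ := hx; simp [sPhi]
  | zero => simp
  | add x y _ _ hx hy => 
    have hxx : x.IsHomogeneous 1 := by
      change x ∈ homogeneousSubmodule σ ℂ 1
      rwa [homogeneousSubmodule_one_eq_span_X]
    have hyy : y.IsHomogeneous 1 := by
      change y ∈ homogeneousSubmodule σ ℂ 1
      rwa [homogeneousSubmodule_one_eq_span_X]
    rw [map_add, hx hxx, hy hyy, map_add, C_add]; ring
  | smul c x _ hx =>
    have hxx : x.IsHomogeneous 1 := by
      change x ∈ homogeneousSubmodule σ ℂ 1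
      rwa [homogeneousSubmodule_one_eq_span_X]
    rw [map_smul, hx hxx, map_smul, smul_eq_mul, C_mul, smul_eq_C_mul, smul_eq_C_mul]; ring

lemma sPhi_mem {σ : Type*} (f : MvPolynomial σ ℂ →ₗ[ℂ] ℂ) (u p : MvPolynomial σ ℂ) :
    p - sPhi f u p ∈ Ideal.span {u} := by
  rw [← Ideal.Quotient.eq]
  have : (Ideal.Quotient.mkₐ ℂ (Ideal.span {u})) = 
      (Ideal.Quotient.mkₐ ℂ (Ideal.span {u})).comp (sPhi f u) := by
    ext i
    simp only [AlgHom.comp_apply, Ideal.Quotient.mkₐ_eq_mk]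
    rw [Ideal.Quotient.eq]
    simp only [sPhi, aeval_X, sub_sub_cancel]
    exact Ideal.mul_mem_left _ _ (Ideal.subset_span rfl)
  exact congrArg (fun g => g p) this

lemma sPhi_hom {σ : Type*} (f : MvPolynomial σ ℂ →ₗ[ℂ] ℂ) {u p : MvPolynomial σ ℂ} {m : ℕ}
    (hu : u.IsHomogeneous 1) (hp : p.IsHomogeneous m) : (sPhi f u p).IsHomogeneous m := by
  have := hp.aeval (fun i => X i - C (f (X i)) * u) (n := 1) fun i => (isHomogeneous_X _ i).sub (hu.C_mul _)
  rwa [one_mul] at this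

/-- A substitution killing the linear form `a` and fixing the linear forms in `W`. -/
lemma exists_subst {σ : Type*} (W : Submodule ℂ (MvPolynomial σ ℂ)) {a : MvPolynomial σ ℂ}
    (ha : a.IsHomogeneous 1) (haW : a ∉ W) :
    ∃ φ : MvPolynomial σ ℂ →ₐ[ℂ] MvPolynomial σ ℂ, φ a = 0 ∧
      (∀ p ∈ W, p.IsHomogeneous 1 → φ p = p) ∧ (∀ p, p - φ p ∈ Ideal.span {a}) ∧
      (∀ p m, p.IsHomogeneous m → (φ p).IsHomogeneous m) := by
  obtain ⟨f, hf, hW⟩ := Submodule.exists_le_ker_of_notMem haW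
  refine ⟨sPhi f (C (f a)⁻¹ * a), ?_, ?_, ?_, ?_⟩
  · rw [sPhi_lin _ _ ha, ← mul_assoc, ← C_mul, mul_inv_cancel₀ hf]; simp
  · intro p hp hp1
    rw [sPhi_lin _ _ hp1, LinearMap.mem_ker.1 (hW hp)]; simp
  · intro p
    refine Ideal.span_le.2 ?_ (sPhi_mem _ _ p)
    rintro x rfl
    exact Ideal.mul_mem_left _ _ (Ideal.subset_span rfl)
  · intro p m hp
    exact sPhi_hom _ (ha.C_mul _) hp

/-- Lemma D. -/
lemma lemD {σ : Type*} {q q' a b m m' c c' : MvPolynomial σ ℂ}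
    (hq : q.IsHomogeneous 2) (hq' : q'.IsHomogeneous 2) (hiq : Irreducible q)
    (hnd : ¬ q ∣ q') (hp : (Ideal.span {q, q'}).IsPrime)
    (ha : a.IsHomogeneous 1) (hb : b.IsHomogeneous 1) (hm : m.IsHomogeneous 1)
    (hm' : m'.IsHomogeneous 1) (hc : c.IsHomogeneous 1) (hc' : c'.IsHomogeneous 1)
    (ha0 : a ≠ 0) (e : q = a * m + b * c) (e' : q' = a * m' + b * c') : False := by
  have h1 : a * (m * c' - m' * c) ∈ Ideal.span {q, q'} := by
    rw [Ideal.mem_span_pair]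
    exact ⟨c', -c, by rw [e, e']; ring⟩
  have h2 : m * c' - m' * c ∈ Ideal.span {q, q'} := by
    rcases hp.mem_or_mem h1 with h | h
    · exact absurd (mem22_1 hq hq' ha h) ha0
    · exact h
  obtain ⟨μ, ν, h3⟩ := mem22 hq hq' ((hm.mul hc').sub (hm'.mul hc)) h2
  have h4 : (c' - C μ * a) * q = (c + C ν * a) * q' := by
    have : a * (m * c' - m' * c) = c' * q - c * q' := by rw [e, e']; ring
    rw [h3] at this
    linear_combination -this
  have h5 : q ∣ (c + C ν * a) * q' := ⟨c' - C μ * a, by rw [← h4]; ring⟩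
  have hl : (c + C ν * a).IsHomogeneous 1 := hc.add (ha.C_mul _)
  rcases hiq.prime.dvd_or_dvd h5 with h | h
  · have h6 : c + C ν * a = 0 := by
      by_contra hne
      have := totalDegree_le_of_dvd_of_isDomain h hne
      rw [hq.totalDegree hiq.ne_zero, hl.totalDegree hne] at this
      omega
    have : q = a * (m - C ν * b) := by
      rw [e]; linear_combination b * h6
    rw [this] at hiq
    exact prod_not_irr ha (hm.sub (hb.C_mul _)) hiq
  · exact hnd h
end SGPoly


section SGPoly2
open MvPolynomial

structure SGC {σ : Type*} (d : Fin 3 → ℕ) (l : (i : Fin 3) → Fin (d i) → MvPolynomial σ ℂ) :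
    Prop where
  irr : ∀ i j, Irreducible (l i j)
  deg : ∀ i j, (l i j).IsHomogeneous 1 ∨ (l i j).IsHomogeneous 2
  nd : ∀ i j a b, i ≠ j → ¬ l i a ∣ l j b
  sg : ∀ i j k a b, i ≠ j → i ≠ k → j ≠ k → (∏ t, l k t) ∈ Ideal.span {l i a, l j b}
  prm : ∀ i j a b, i ≠ j → (l i a).IsHomogeneous 2 → (l j b).IsHomogeneous 2 →
    (Ideal.span {l i a, l j b}).IsPrime
  exq : ∃ i j a b, i ≠ j ∧ (l i a).IsHomogeneous 2 ∧ (l j b).IsHomogeneous 2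

variable {σ : Type*} {d : Fin 3 → ℕ} {l : (i : Fin 3) → Fin (d i) → MvPolynomial σ ℂ}

lemma SGC.factor (h : SGC d l) {i j k : Fin 3} (a : Fin (d i)) (b : Fin (d j)) (hij : i ≠ j)
    (hik : i ≠ k) (hjk : j ≠ k) {P : Ideal (MvPolynomial σ ℂ)} (hP : P.IsPrime)
    (ha : l i a ∈ P) (hb : l j b ∈ P) : ∃ t, l k t ∈ P := by
  have h1 : (∏ t, l k t) ∈ P := by
    refine Ideal.span_le.2 ?_ (h.sg i j k a b hij hik hjk)
    rintro x (rfl | rfl)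
    · exact ha
    · exact hb
  obtain ⟨t, _, ht⟩ := hP.prod_mem_iff.1 h1
  exact ⟨t, ht⟩

lemma SGC.lemB (h : SGC d l) {i j k : Fin 3} (a : Fin (d i)) (b : Fin (d j)) (hij : i ≠ j)
    (hik : i ≠ k) (hjk : j ≠ k) (ha : (l i a).IsHomogeneous 2) (hb : (l j b).IsHomogeneous 2) :
    ∃ t, (l k t).IsHomogeneous 2 ∧ ∃ μ ν : ℂ, l k t = C μ * l i a + C ν * l j b := by
  obtain ⟨t, ht⟩ := h.factor a b hij hik hjk (h.prm i j a b hij ha hb)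
    (Ideal.subset_span (by simp)) (Ideal.subset_span (by simp))
  refine ⟨t, ?_⟩
  rcases h.deg k t with h1 | h1
  · exact absurd (mem22_1 ha hb h1 ht) (h.irr k t).ne_zero
  · exact ⟨h1, mem22 ha hb h1 ht⟩

lemma SGC.allq (h : SGC d l) (k : Fin 3) : ∃ t, (l k t).IsHomogeneous 2 := by
  obtain ⟨i, j, a, b, hij, ha, hb⟩ := h.exq
  by_cases h1 : k = i
  · subst h1; exact ⟨a, ha⟩
  by_cases h2 : k = j
  · subst h2; exact ⟨b, hb⟩
  obtain ⟨t, ht, _⟩ := h.lemB a b hij (Ne.symm h1) (Ne.symm h2) ha hb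
  exact ⟨t, ht⟩

lemma SGC.ne_of (h : SGC d l) {i j : Fin 3} {a : Fin (d i)} {b : Fin (d j)} (hij : i ≠ j)
    {μ : ℂ} (e : l j b = C μ * l i a) : False :=
  h.nd i j a b hij ⟨C μ, by rw [e]; ring⟩

lemma SGC.lemC (h : SGC d l) {i j k : Fin 3} (x : Fin (d i)) (y : Fin (d j)) (hij : i ≠ j)
    (hik : i ≠ k) (hjk : j ≠ k) (ha : (l i x).IsHomogeneous 1) (hq : (l j y).IsHomogeneous 2) :
    ∃ (s t : Fin (d k)) (m : MvPolynomial σ ℂ) (γ : ℂ), (l k s).IsHomogeneous 1 ∧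
      (l k t).IsHomogeneous 1 ∧ m.IsHomogeneous 1 ∧ γ ≠ 0 ∧
      l j y = l i x * m + C γ * (l k s * l k t) := by
  set a := l i x with hadef
  set q := l j y with hqdef
  have ha0 : a ≠ 0 := (h.irr i x).ne_zero
  obtain ⟨φ, φa, -, φm, φh⟩ := exists_subst (⊥ : Submodule ℂ (MvPolynomial σ ℂ)) ha
    (by simpa using ha0)
  have φq0 : φ q ≠ 0 := by
    intro h0
    have := φm q
    rw [h0, sub_zero, Ideal.mem_span_singleton] at this
    exact h.nd i j x y hij this
  have φqh := φh q 2 hq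
  obtain ⟨m0, hm0, hm0e⟩ := mem1_2 ha (hq.sub φqh) (φm q)
  have hle : Ideal.span {a} ≤ Ideal.span {a, q} := Ideal.span_mono (by simp)
  have hnirr : ¬ Irreducible (φ q) := by
    intro hirr
    have hP : (Ideal.comap φ (Ideal.span {φ q})).IsPrime := by
      have := (Ideal.span_singleton_prime φq0).2 hirr.prime
      exact Ideal.comap_isPrime _ _
    obtain ⟨t, ht⟩ := h.factor x y hij hik hjk hP (by
      rw [Ideal.mem_comap, ← hadef, φa]; exact Ideal.zero_mem _) (by
      rw [Ideal.mem_comap]; exact Ideal.subset_span rfl)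
    have hmem : l k t ∈ Ideal.span {a, q} := by
      obtain ⟨u, hu⟩ := Ideal.mem_span_singleton'.1 (Ideal.mem_comap.1 ht)
      have e : l k t = (l k t - φ (l k t)) + u * (q - (q - φ q)) := by
        rw [← hu]; ring
      rw [e]
      refine Ideal.add_mem _ (hle (φm _)) (Ideal.mul_mem_left _ _ (Ideal.sub_mem _
        (Ideal.subset_span (by simp)) (hle (φm _))))
    rcases h.deg k t with h1 | h1
    · exact h.nd i k x t hik (mem12_1 ha hq h1 hmem)
    · obtain ⟨m, c, hm, hme⟩ := mem12_2 ha hq h1 hmem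
      have hp := h.prm j k y t hjk hq h1
      have : a * m ∈ Ideal.span {l j y, l k t} := by
        rw [Ideal.mem_span_pair]
        exact ⟨-C c, 1, by rw [hme]; ring⟩
      rcases hp.mem_or_mem this with h2 | h2
      · exact ha0 (mem22_1 hq h1 ha h2)
      · have m0 := mem22_1 hq h1 hm h2
        rw [m0, mul_zero, zero_add] at hme
        exact h.ne_of hjk hme
  obtain ⟨b, c, hb, hc, hbc⟩ := quad_factor φqh φq0 hnirr
  have hb0 : b ≠ 0 := by rintro rfl; simp at hbc; exact φq0 (by simpa using hbc)
  have hc0 : c ≠ 0 := by rintro rfl; simp at hbc; exact φq0 (by simpa using hbc)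
  have eq1 : q = a * m0 + b * c := by rw [← hbc, ← hm0e]; ring
  have key : ∀ b c : MvPolynomial σ ℂ, b.IsHomogeneous 1 → c.IsHomogeneous 1 → b ≠ 0 →
      φ q = b * c → ∃ t, (l k t).IsHomogeneous 1 ∧ ∃ α β : ℂ, β ≠ 0 ∧
        b = C β * l k t + C α * a := by
    intro b c hb hc hb0 hbc
    have eq1 : q = a * m0 + b * c := by rw [← hbc, ← hm0e]; ring
    have hP : (Ideal.comap φ (Ideal.span {b})).IsPrime := by
      have := (Ideal.span_singleton_prime hb0).2 (lin_prime hb hb0)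
      exact Ideal.comap_isPrime _ _
    obtain ⟨t, ht⟩ := h.factor x y hij hik hjk hP (by
      rw [Ideal.mem_comap, ← hadef, φa]; exact Ideal.zero_mem _) (by
      rw [Ideal.mem_comap, Ideal.mem_span_singleton]; exact ⟨c, hbc⟩)
    have hmem : l k t ∈ Ideal.span {a, b} := by
      have e : l k t = (l k t - φ (l k t)) + φ (l k t) := by ring
      rw [e]
      exact Ideal.add_mem _ (Ideal.span_mono (by simp) (φm _))
        (Ideal.span_mono (by simp) (Ideal.mem_comap.1 ht))
    refine ⟨t, ?_⟩
    rcases h.deg k t with h1 | h1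
    · refine ⟨h1, ?_⟩
      obtain ⟨μ, ν, e⟩ := mem11 ha hb h1 hmem
      have hν : ν ≠ 0 := by
        rintro rfl
        exact h.ne_of (i := i) (a := x) hik (μ := μ) (by rw [e]; simp [hadef])
      refine ⟨-(ν⁻¹ * μ), ν⁻¹, inv_ne_zero hν, ?_⟩
      have e2 : (C ν⁻¹ : MvPolynomial σ ℂ) * C ν = 1 := by
        rw [← C_mul, inv_mul_cancel₀ hν, C_1]
      rw [e, C_neg, C_mul]
      linear_combination (-b) * e2
    · exfalso
      obtain ⟨m1, m2, hm1, hm2, e⟩ := mem11_2 ha hb h1 hmem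
      exact lemD hq h1 (h.irr j y) (h.nd j k y t hjk) (h.prm j k y t hjk hq h1) ha hb hm0 hm1 hc
        hm2 ha0 eq1 e
  obtain ⟨s, hs, α, β, hβ, eb⟩ := key b c hb hc hb0 hbc
  obtain ⟨t, ht, α', β', hβ', ec⟩ := key c b hc hb hc0 (by rw [hbc]; ring)
  refine ⟨s, t, m0 + (C (β * α') * l k s + C (α * β') * l k t + C (α * α') * a), β * β', hs, ht,
    ?_, mul_ne_zero hβ hβ', ?_⟩
  · exact hm0.add (((hs.C_mul _).add (ht.C_mul _)).add (ha.C_mul _))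
  · rw [eq1, eb, ec]
    simp only [C_mul]
    ring

lemma fin3_third (i j : Fin 3) (h : i ≠ j) : ∃ k, i ≠ k ∧ j ≠ k := by
  revert i j; decide

lemma SGC.alllin (h : SGC d l) {i : Fin 3} (x : Fin (d i)) (hx : (l i x).IsHomogeneous 1)
    (k : Fin 3) : ∃ t, (l k t).IsHomogeneous 1 := by
  by_cases hik : i = k
  · subst hik; exact ⟨x, hx⟩
  obtain ⟨j, hj1, hj2⟩ := fin3_third i k hik
  obtain ⟨y, hy⟩ := h.allq j
  obtain ⟨s, _, _, _, hs, _⟩ := h.lemC x y hj1 hik hj2.symm hx hy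
  exact ⟨s, hs⟩

lemma SGC.bound4 (h : SGC d l) {i0 : Fin 3} (x0 : Fin (d i0)) (hx0 : (l i0 x0).IsHomogeneous 1)
    (j : Fin 3) : ∃ S : Finset (MvPolynomial σ ℂ), S.card ≤ 4 ∧ ∀ i x, i ≠ j →
      (l i x).IsHomogeneous 1 → l i x ∈ Submodule.span ℂ (S : Set (MvPolynomial σ ℂ)) := by
  classical
  obtain ⟨i, hij⟩ : ∃ i, i ≠ j := ⟨j + 1, by revert j; decide⟩
  obtain ⟨k, hik, hjk⟩ := fin3_third i j hij
  obtain ⟨x, hx⟩ := h.alllin x0 hx0 i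
  obtain ⟨y, hy⟩ := h.allq j
  obtain ⟨s, t, m, γ, hs, ht, hm, hγ, e⟩ := h.lemC x y hij hik hjk hx hy
  refine ⟨{l i x, l k s, l k t, m}, Finset.card_le_four, ?_⟩
  intro i' x' hi' hx'
  by_contra hnot
  obtain ⟨φ, φa, φW, -, φh⟩ := exists_subst _ hx' hnot
  obtain ⟨k', hik', hjk'⟩ := fin3_third i' j hi'
  obtain ⟨s', t', m', γ', hs', ht', hm', hγ', e'⟩ := h.lemC x' y hi' hik' hjk' hx' hy
  have f1 : φ (l j y) = l j y := by
    have w : ∀ p ∈ ({l i x, l k s, l k t, m} : Finset (MvPolynomial σ ℂ)), p.IsHomogeneous 1 →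
        φ p = p := fun p hp => φW p (Submodule.subset_span hp)
    rw [e, map_add, map_mul, map_mul, map_mul, w _ (by simp) hx, w _ (by simp) hs,
      w _ (by simp) ht, w _ (by simp) hm]
    simp [← algebraMap_eq]
  have f2 : φ (l j y) = (C γ' * φ (l k' s')) * φ (l k' t') := by
    rw [e', map_add, map_mul, φa, map_mul, map_mul]
    simp [← algebraMap_eq, mul_assoc]
  have := h.irr j y
  rw [← f1, f2] at this
  exact prod_not_irr ((φh _ _ hs').C_mul _) (φh _ _ ht') this

lemma SGC.quad_mem (h : SGC d l) {i0 : Fin 3} (x0 : Fin (d i0)) (hx0 : (l i0 x0).IsHomogeneous 1)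
    (V : Submodule ℂ (MvPolynomial σ ℂ)) (hV : ∀ i x, (l i x).IsHomogeneous 1 → l i x ∈ V)
    (j : Fin 3) (y : Fin (d j)) (hy : (l j y).IsHomogeneous 2) :
    ∃ a m b c : MvPolynomial σ ℂ, a ∈ V ∧ m ∈ V ∧ b ∈ V ∧ c ∈ V ∧ ∃ γ : ℂ,
      l j y = a * m + C γ * (b * c) := by
  obtain ⟨i, hij⟩ : ∃ i, i ≠ j := ⟨j + 1, by clear hy y; revert j; decide⟩
  obtain ⟨k, hik, hjk⟩ := fin3_third i j hij
  obtain ⟨x, hx⟩ := h.alllin x0 hx0 i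
  obtain ⟨s, t, m, γ, hs, ht, hm, hγ, e⟩ := h.lemC x y hij hik hjk hx hy
  refine ⟨l i x, m, l k s, l k t, hV _ _ hx, ?_, hV _ _ hs, hV _ _ ht, γ, e⟩
  by_contra hmV
  obtain ⟨s', t', n, γ', hs', ht', hn, hγ', e'⟩ := h.lemC s y hjk.symm hik.symm hij.symm hs hy
  obtain ⟨φ, φm, φW, -, φh⟩ := exists_subst V hm hmV
  have f1 : φ (l j y) = C γ * (l k s * l k t) := by
    rw [e, map_add, map_mul, map_mul, map_mul, φm, φW _ (hV _ _ hs) hs, φW _ (hV _ _ ht) ht]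
    simp [← algebraMap_eq]
  have f2 : φ (l j y) = l k s * φ n + C γ' * (l i s' * l i t') := by
    rw [e', map_add, map_mul, map_mul, map_mul, φW _ (hV _ _ hs) hs, φW _ (hV _ _ hs') hs',
      φW _ (hV _ _ ht') ht']
    simp [← algebraMap_eq]
  have hC : (C γ'⁻¹ : MvPolynomial σ ℂ) * C γ' = 1 := by
    rw [← C_mul, inv_mul_cancel₀ hγ', C_1]
  have hdvd : l k s ∣ l i s' * l i t' := by
    refine ⟨C γ'⁻¹ * (C γ * l k t - φ n), ?_⟩
    rw [f1] at f2
    linear_combination (-(l i s' * l i t')) * hC + (-C γ'⁻¹) * f2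
  rcases (h.irr k s).prime.dvd_or_dvd hdvd with h1 | h1
  · exact h.nd k i s s' hik.symm h1
  · exact h.nd k i s t' hik.symm h1

lemma algindep_card_le (S s : Finset (MvPolynomial σ ℂ))
    (hs : ∀ p ∈ s, p ∈ Algebra.adjoin ℂ (S : Set (MvPolynomial σ ℂ)))
    (hi : AlgebraicIndependent ℂ (fun x : ↥(s : Set (MvPolynomial σ ℂ)) =>
          (x : MvPolynomial σ ℂ))) : s.card ≤ S.card := by
  set A := Algebra.adjoin ℂ (S : Set (MvPolynomial σ ℂ)) with hA
  let y : ↥(s : Set (MvPolynomial σ ℂ)) → A := fun x => ⟨x, hs x x.2⟩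
  have hy : AlgebraicIndependent ℂ y := AlgebraicIndependent.of_comp A.val hi
  let f : MvPolynomial (↥(S : Set (MvPolynomial σ ℂ))) ℂ →ₐ[ℂ] A :=
    aeval fun x => ⟨x, Algebra.subset_adjoin x.2⟩
  have hf : Function.Surjective f := by
    intro ⟨z, hz⟩
    have hz' := hz
    rw [hA, Algebra.adjoin_eq_range] at hz'
    obtain ⟨p, hp⟩ := hz'
    refine ⟨p, Subtype.ext ?_⟩
    refine Eq.trans ?_ hp
    change A.val (f p) = _
    have : A.val.comp f = aeval (Subtype.val : ↥(S : Set (MvPolynomial σ ℂ)) → _) := by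
      ext i; simp [f]
    rw [← this]; rfl
  have h1 := trdeg_le_of_surjective f hf
  have h2 := hy.cardinalMk_le_trdeg
  rw [MvPolynomial.trdeg_of_isDomain] at h1
  have h3 := h2.trans h1
  simpa using h3

lemma SGC.lin_case (h : SGC d l) {i0 : Fin 3} (x0 : Fin (d i0)) (hx0 : (l i0 x0).IsHomogeneous 1)
    (s : Finset (MvPolynomial σ ℂ)) (hs : ∀ p ∈ s, ∃ i j, p = l i j)
    (hi : AlgebraicIndependent ℂ (fun x : ↥(s : Set (MvPolynomial σ ℂ)) =>
          (x : MvPolynomial σ ℂ))) : s.card < 12 := by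
  classical
  obtain ⟨S0, hS0, hm0⟩ := h.bound4 x0 hx0 0
  obtain ⟨S1, hS1, hm1⟩ := h.bound4 x0 hx0 1
  set S := S0 ∪ S1 with hS
  have hV : ∀ i x, (l i x).IsHomogeneous 1 → l i x ∈ Submodule.span ℂ (S : Set (MvPolynomial σ ℂ)) := by
    intro i x hx
    by_cases hi0 : i = 0
    · refine Submodule.span_mono ?_ (hm1 i x (by rw [hi0]; decide) hx)
      simp [hS]
    · refine Submodule.span_mono ?_ (hm0 i x hi0 hx)
      simp [hS]
  have hVA : ∀ p ∈ Submodule.span ℂ (S : Set (MvPolynomial σ ℂ)),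
      p ∈ Algebra.adjoin ℂ (S : Set (MvPolynomial σ ℂ)) := fun p hp =>
    Algebra.span_le_adjoin ℂ _ hp
  have hcard : S.card ≤ 8 := (Finset.card_union_le _ _).trans (by omega)
  refine lt_of_le_of_lt (algindep_card_le S s ?_ hi) (by omega)
  intro p hp
  obtain ⟨i, j, rfl⟩ := hs p hp
  rcases h.deg i j with h1 | h1
  · exact hVA _ (hV i j h1)
  · obtain ⟨a, m, b, c, ha, hm, hb, hc, γ, e⟩ := h.quad_mem x0 hx0 _ hV i j h1
    rw [e]
    refine add_mem (mul_mem (hVA _ ha) (hVA _ hm)) (mul_mem ?_ (mul_mem (hVA _ hb) (hVA _ hc)))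
    rw [← algebraMap_eq]
    exact Subalgebra.algebraMap_mem _ _

lemma SGC.quad_case (h : SGC d l) (hall : ∀ i x, (l i x).IsHomogeneous 2)
    (s : Finset (MvPolynomial σ ℂ)) (hs : ∀ p ∈ s, ∃ i j, p = l i j)
    (hi : AlgebraicIndependent ℂ (fun x : ↥(s : Set (MvPolynomial σ ℂ)) =>
          (x : MvPolynomial σ ℂ))) : s.card < 12 := by
  classical
  let F : (Σ i, Fin (d i)) → Submodule ℂ (MvPolynomial σ ℂ) := fun x => ℂ ∙ l x.1 x.2
  let rep : Set.range F → (Σ i, Fin (d i)) := fun u => u.2.choose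
  have hrep : ∀ u, F (rep u) = u := fun u => u.2.choose_spec
  let v : Set.range F → MvPolynomial σ ℂ := fun u => l (rep u).1 (rep u).2
  have hv0 : ∀ u, v u ≠ 0 := fun u => (h.irr _ _).ne_zero
  have hinj : ∀ u w, F (rep u) = F (rep w) → u = w := fun u w huw =>
    Subtype.ext (by rw [← hrep u, ← hrep w, huw])
  -- colour is determined
  have hcolor : ∀ x y : (Σ i, Fin (d i)), F x = F y → x.1 = y.1 := by
    intro x y hxy
    by_contra hne
    have : l y.1 y.2 ∈ F x := by rw [hxy]; exact Submodule.mem_span_singleton_self _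
    obtain ⟨c, hc⟩ := Submodule.mem_span_singleton.1 this
    exact h.ne_of hne (μ := c) (by rw [← hc, smul_eq_C_mul])
  have hmemv : ∀ x, l x.1 x.2 ∈ Submodule.span ℂ {v ⟨F x, x, rfl⟩} := by
    intro x
    have := hrep ⟨F x, x, rfl⟩
    change l x.1 x.2 ∈ F (rep ⟨F x, x, rfl⟩)
    rw [this]
    exact Submodule.mem_span_singleton_self _
  have hvmem : ∀ x, v ⟨F x, x, rfl⟩ ∈ Submodule.span ℂ {l x.1 x.2} := by
    intro x
    have := hrep ⟨F x, x, rfl⟩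
    change _ ∈ F x
    exact this.le (Submodule.mem_span_singleton_self _)
  have hcolx : ∀ x, (rep ⟨F x, x, rfl⟩).1 = x.1 := fun x => hcolor _ _ (hrep ⟨F x, x, rfl⟩)
  have core := core_kelly v ?_ (fun u => (rep u).1) ?_ ?_
  · have hle : ∀ p ∈ s, p ∈ Submodule.span ℂ (Set.range v) := by
      intro p hp
      obtain ⟨i, j, rfl⟩ := hs p hp
      refine Submodule.span_mono ?_ (hmemv ⟨i, j⟩)
      rintro x rfl
      exact ⟨_, rfl⟩
    have : FiniteDimensional ℂ (Submodule.span ℂ (Set.range v)) :=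
      FiniteDimensional.span_of_finite ℂ (Set.finite_range v)
    let y : ↥(s : Set (MvPolynomial σ ℂ)) → Submodule.span ℂ (Set.range v) :=
      fun x => ⟨x, hle x x.2⟩
    have hy : LinearIndependent ℂ y :=
      LinearIndependent.of_comp (Submodule.subtype _) hi.linearIndependent
    have := hy.fintype_card_le_finrank
    simp at this
    omega
  · intro u w huw
    rw [LinearIndependent.pair_iff' (hv0 u)]
    intro c hc
    apply huw
    apply hinj
    have hc0 : c ≠ 0 := by rintro rfl; rw [zero_smul] at hc; exact hv0 w hc.symm
    change Submodule.span ℂ {v u} = Submodule.span ℂ {v w}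
    rw [← hc]
    exact (Submodule.span_singleton_smul_eq (IsUnit.mk0 c hc0) _).symm
  · intro c
    obtain ⟨t, _⟩ := h.allq c
    exact ⟨⟨F ⟨c, t⟩, ⟨c, t⟩, rfl⟩, hcolx ⟨c, t⟩⟩
  · intro u w c huw hcu hcw
    obtain ⟨t, _, μ, ν, e⟩ := h.lemB (rep u).2 (rep w).2 huw hcu.symm hcw.symm (hall _ _) (hall _ _)
    refine ⟨⟨F ⟨c, t⟩, ⟨c, t⟩, rfl⟩, hcolx ⟨c, t⟩, ?_⟩
    refine Submodule.span_le.2 ?_ (hvmem ⟨c, t⟩)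
    rintro x rfl
    rw [SetLike.mem_coe, Submodule.mem_span_pair]
    exact ⟨μ, ν, by rw [smul_eq_C_mul, smul_eq_C_mul]; exact e.symm⟩

end SGPoly2


lemma sgc_of {n : ℕ} {d : Fin 3 → ℕ} {D : ℕ}
    (l : (i : Fin 3) → Fin (d i) → MvPolynomial (Fin (n + 1)) ℂ)
    (hirr : ∀ i j, Irreducible (l i j))
    (hdeg : ∀ i j, (l i j).IsHomogeneous 1 ∨ (l i j).IsHomogeneous 2)
    (hhom : ∀ i, (∏ j, l i j).IsHomogeneous D)
    (hsimple : ∀ g : MvPolynomial (Fin (n + 1)) ℂ, (∀ i, g ∣ ∏ j, l i j) → IsUnit g)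
    (hSG : ∀ (i : Fin 3) (s : ∀ j, Fin (d j)),
      (∏ j, l i j) ∈
        Ideal.span {p : MvPolynomial (Fin (n + 1)) ℂ | ∃ j, j ≠ i ∧ p = l j (s j)})
    (hprime : ∀ (i j : Fin 3) (k : Fin (d i)) (t : Fin (d j)), i ≠ j →
      (l i k).IsHomogeneous 2 → (l j t).IsHomogeneous 2 →
      (Ideal.span {l i k, l j t}).IsPrime)
    (hnotall : ∃ (i j : Fin 3) (k : Fin (d i)) (t : Fin (d j)), i ≠ j ∧
      (l i k).IsHomogeneous 2 ∧ (l j t).IsHomogeneous 2) : SGC d l := by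
  obtain ⟨i0, j0, k0, t0, hij0, hk0, ht0⟩ := hnotall
  have hprod0 : ∀ i, (∏ j, l i j) ≠ 0 := fun i => Finset.prod_ne_zero_iff.2 fun j _ => (hirr i j).ne_zero
  have hpos : ∀ i, Nonempty (Fin (d i)) := by
    intro i
    by_contra hne
    rw [not_nonempty_iff] at hne
    have h1 : (∏ j, l i j) = 1 := Fintype.prod_empty _
    have hD : D = 0 := by
      have := (hhom i).totalDegree (hprod0 i)
      rw [h1, MvPolynomial.totalDegree_one] at this
      exact this.symm
    have h2 : l i0 k0 ∣ ∏ j, l i0 j := Finset.dvd_prod_of_mem _ (Finset.mem_univ _)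
    have h3 := MvPolynomial.totalDegree_le_of_dvd_of_isDomain h2 (hprod0 i0)
    rw [hk0.totalDegree (hirr _ _).ne_zero, (hhom i0).totalDegree (hprod0 i0)] at h3
    omega
  have hsg : ∀ i j k a b, i ≠ j → i ≠ k → j ≠ k →
      (∏ t, l k t) ∈ Ideal.span {l i a, l j b} := by
    intro i j k a b hij hik hjk
    let s : ∀ j, Fin (d j) := Function.update (Function.update (fun j => (hpos j).some) i a) j b
    have hsj : s j = b := by simp [s]
    have hsi : s i = a := by simp [s, hij]
    refine Ideal.span_mono ?_ (hSG k s)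
    rintro p ⟨t, ht, rfl⟩
    have : t = i ∨ t = j := by
      clear hsi hsj s a b
      revert i j k t; decide
    rcases this with rfl | rfl
    · left; rw [hsi]
    · right; rw [hsj]; rfl
  refine ⟨hirr, hdeg, ?_, hsg, fun i j a b => hprime i j a b, ⟨i0, j0, k0, t0, hij0, hk0, ht0⟩⟩
  intro i j a b hij hdvd
  obtain ⟨k, hik, hjk⟩ := fin3_third i j hij
  refine (hirr i a).not_isUnit (hsimple _ ?_)
  intro t
  have : t = i ∨ t = j ∨ t = k := by
    clear hdvd a b
    revert i j k t; decide
  rcases this with rfl | rfl | rfl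
  · exact Finset.dvd_prod_of_mem _ (Finset.mem_univ _)
  · exact hdvd.trans (Finset.dvd_prod_of_mem _ (Finset.mem_univ _))
  · obtain ⟨x, y, hxy⟩ := Ideal.mem_span_pair.1 (hsg i j t a b hij hik hjk)
    rw [← hxy]
    exact dvd_add (dvd_mul_left _ _) (hdvd.mul_left _)



/-- For a simple homogeneous SG `ΣΠΣΠ(3,2)` circuit `F₁ + F₂ + F₃` over `ℂ` (factors
`l i j` irreducible homogeneous of degree `1` or `2`, branches homogeneous of the same
degree, `gcd(F₁,F₂,F₃) = 1`), in which every ideal generated by two degree-2 factors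
from different branches is prime and not all degree-2 factors lie in one branch, the
transcendence degree of the set of factors is less than `12`: every algebraically
independent subset of the factors has fewer than `12` elements. -/
theorem trdeg_lt_twelve_of_SG_circuit
    (n : ℕ) (d : Fin 3 → ℕ) (D : ℕ)
    (l : (i : Fin 3) → Fin (d i) → MvPolynomial (Fin (n + 1)) ℂ)
    (hirr : ∀ i j, Irreducible (l i j))
    (hdeg : ∀ i j, (l i j).IsHomogeneous 1 ∨ (l i j).IsHomogeneous 2)
    (hhom : ∀ i, (∏ j, l i j).IsHomogeneous D)
    (hsimple : ∀ g : MvPolynomial (Fin (n + 1)) ℂ, (∀ i, g ∣ ∏ j, l i j) → IsUnit g)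
    (hSG : ∀ (i : Fin 3) (s : ∀ j, Fin (d j)),
      (∏ j, l i j) ∈
        Ideal.span {p : MvPolynomial (Fin (n + 1)) ℂ | ∃ j, j ≠ i ∧ p = l j (s j)})
    (hprime : ∀ (i j : Fin 3) (k : Fin (d i)) (t : Fin (d j)), i ≠ j →
      (l i k).IsHomogeneous 2 → (l j t).IsHomogeneous 2 →
      (Ideal.span {l i k, l j t}).IsPrime)
    (hnotall : ∃ (i j : Fin 3) (k : Fin (d i)) (t : Fin (d j)), i ≠ j ∧
      (l i k).IsHomogeneous 2 ∧ (l j t).IsHomogeneous 2) :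
    ∀ s : Finset (MvPolynomial (Fin (n + 1)) ℂ),
      (↑s ⊆ {p : MvPolynomial (Fin (n + 1)) ℂ | ∃ i j, p = l i j}) →
      AlgebraicIndependent ℂ
        (fun x : ↥(s : Set (MvPolynomial (Fin (n + 1)) ℂ)) =>
          (x : MvPolynomial (Fin (n + 1)) ℂ)) →
      s.card < 12 := by
  intro s hs hi
  have h := sgc_of l hirr hdeg hhom hsimple hSG hprime hnotall
  have hs' : ∀ p ∈ s, ∃ i j, p = l i j := fun p hp => hs hp
  by_cases hl : ∃ i x, (l i x).IsHomogeneous 1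
  · obtain ⟨i, x, hx⟩ := hl
    exact h.lin_case x hx s hs' hi
  · refine h.quad_case (fun i x => ?_) s hs' hi
    exact (hdeg i x).resolve_left fun hx => hl ⟨i, x, hx⟩
end

section
/- Let C = F_1 + F_2 + F_3 be a simple homogeneous ΣΠΣΠ(3,2) circuit over ℂ as above: each F_i = l_{i1} ⋯ l_{i d_i} is a product of irreducible homogeneous polynomials l_{ij} of degree 1 or 2, the F_i are homogeneous of the same degree, gcd(F_1, F_2, F_3) = 1, C is SG (for every i and every choice of one factor from each of the two branches j ≠ i, F_i lies in the ideal generated by the two chosen factors), every ideal generated by two degree-2 factors from different branches is prime, and not all degree-2 factors lie in one branch. Define L to be the set of degree-1 factors l_{ij} for which there exists a degree-1 factor l_{kt} with k ≠ i such that the ideal ⟨l_{ij}, l_{kt}⟩ contains some degree-2 factor l_{fu} with f ∉ {i, k}. Then the ℂ-linear span of L has dimension at most 6. -/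
section helpers
open MvPolynomial
variable {N : ℕ}

lemma hc_mul {m n : ℕ} (h : m ≤ n) (p q : MvPolynomial (Fin N) ℂ) (hq : q.IsHomogeneous m) :
    homogeneousComponent n (p * q) = homogeneousComponent (n - m) p * q := by
  let _ := MvPolynomial.gradedAlgebra (σ := Fin N) (R := ℂ)
  have := DirectSum.coe_decompose_mul_of_right_mem_of_le (homogeneousSubmodule (Fin N) ℂ)
    (a := p) (b := q) (i := m) (n := n) hq h
  have e : ∀ (x : MvPolynomial (Fin N) ℂ) (i : ℕ),
      (DirectSum.decompose (homogeneousSubmodule (Fin N) ℂ) x i : MvPolynomial (Fin N) ℂ)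
        = homogeneousComponent i x := fun x i => decomposition.decompose'_apply x i
  rwa [e, e] at this

lemma hc_mul_lt_s13 {m n : ℕ} (h : n < m) (p q : MvPolynomial (Fin N) ℂ) (hq : q.IsHomogeneous m) :
    homogeneousComponent n (p * q) = 0 := by
  let _ := MvPolynomial.gradedAlgebra (σ := Fin N) (R := ℂ)
  have := DirectSum.coe_decompose_mul_of_right_mem_of_not_le (homogeneousSubmodule (Fin N) ℂ)
    (a := p) (b := q) (i := m) (n := n) hq (not_le.2 h)
  have e : ∀ (x : MvPolynomial (Fin N) ℂ) (i : ℕ),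
      (DirectSum.decompose (homogeneousSubmodule (Fin N) ℂ) x i : MvPolynomial (Fin N) ℂ)
        = homogeneousComponent i x := fun x i => decomposition.decompose'_apply x i
  rwa [e] at this

lemma not_isUnit_of_hom {p : MvPolynomial (Fin N) ℂ} {m : ℕ} (hm : m ≠ 0)
    (hp : p.IsHomogeneous m) : ¬ IsUnit p := by
  intro hu
  have h0 : p ≠ 0 := hu.ne_zero
  have h1 := hp.totalDegree h0
  rw [isUnit_iff_totalDegree_of_isReduced] at hu
  omega

lemma linear_in_quads {a P Q : MvPolynomial (Fin N) ℂ} (ha : a.IsHomogeneous 1)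
    (hP : P.IsHomogeneous 2) (hQ : Q.IsHomogeneous 2) (h : a ∈ Ideal.span {P, Q}) : a = 0 := by
  obtain ⟨x, y, hxy⟩ := Ideal.mem_span_pair.1 h
  have := congrArg (homogeneousComponent 1) hxy
  rw [map_add, hc_mul_lt_s13 (by norm_num) _ _ hP, hc_mul_lt_s13 (by norm_num) _ _ hQ,
    homogeneousComponent_eq_self ha] at this
  simpa using this.symm

/-- The projection `X i ↦ X i - f (X i) a`. -/
noncomputable def prj (f : MvPolynomial (Fin N) ℂ →ₗ[ℂ] ℂ) (a : MvPolynomial (Fin N) ℂ) :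
    MvPolynomial (Fin N) ℂ →ₐ[ℂ] MvPolynomial (Fin N) ℂ :=
  aeval (fun i => X i - f (X i) • a)

variable (f : MvPolynomial (Fin N) ℂ →ₗ[ℂ] ℂ) (a : MvPolynomial (Fin N) ℂ)

lemma prj_lin {p : MvPolynomial (Fin N) ℂ} (hp : p.IsHomogeneous 1) :
    prj f a p = p - f p • a := by
  have hp' : p ∈ homogeneousSubmodule (Fin N) ℂ 1 := hp
  rw [homogeneousSubmodule_one_eq_span_X] at hp'
  induction hp' using Submodule.span_induction with
  | mem x h => obtain ⟨i, rfl⟩ := h; simp [prj]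
  | zero => simp
  | add x y hx hy h1 h2 =>
    rw [← homogeneousSubmodule_one_eq_span_X] at hx hy
    rw [map_add, map_add, h1 hx, h2 hy, add_smul]; ring
  | smul c x hx h1 =>
    rw [← homogeneousSubmodule_one_eq_span_X] at hx
    rw [map_smul, map_smul, h1 hx, smul_sub, smul_eq_mul, mul_smul]

lemma prj_hom {p : MvPolynomial (Fin N) ℂ} {m : ℕ} (ha : a.IsHomogeneous 1)
    (hp : p.IsHomogeneous m) : (prj f a p).IsHomogeneous m := by
  have := hp.aeval (fun i => X i - f (X i) • a) (n := 1) (fun i => by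
    refine IsHomogeneous.sub (isHomogeneous_X _ _) ?_
    rw [smul_eq_C_mul]
    exact ha.C_mul _)
  rwa [one_mul] at this

lemma prj_sub (p : MvPolynomial (Fin N) ℂ) : a ∣ p - prj f a p := by
  rw [← Ideal.mem_span_singleton, ← Ideal.Quotient.eq]
  have : (Ideal.Quotient.mkₐ ℂ (Ideal.span {a})) =
      (Ideal.Quotient.mkₐ ℂ (Ideal.span {a})).comp (prj f a) := by
    apply MvPolynomial.algHom_ext
    intro i
    simp only [prj, AlgHom.comp_apply, aeval_X, map_sub, map_smul]
    have : (Ideal.Quotient.mkₐ ℂ (Ideal.span {a})) a = 0 := by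
      rw [Ideal.Quotient.mkₐ_eq_mk, Ideal.Quotient.eq_zero_iff_mem]
      exact Ideal.mem_span_singleton_self a
    simp [this]
  exact DFunLike.congr_fun this p

lemma deg_one_split {p u v : MvPolynomial (Fin N) ℂ} (hp : p.IsHomogeneous 2) (h0 : p ≠ 0)
    (huv : p = u * v) (hu : ¬ IsUnit u) (hv : ¬ IsUnit v) :
    ∃ u' v' : MvPolynomial (Fin N) ℂ, u'.IsHomogeneous 1 ∧ v'.IsHomogeneous 1 ∧ p = u' * v' := by
  have hu0 : u ≠ 0 := by rintro rfl; simp at huv; exact h0 huv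
  have hv0 : v ≠ 0 := by rintro rfl; simp at huv; exact h0 huv
  have key : ∀ w : MvPolynomial (Fin N) ℂ, w ≠ 0 → ¬ IsUnit w → 1 ≤ w.totalDegree := by
    intro w hw hw'
    by_contra hlt
    have h0 : w.totalDegree = 0 := by omega
    rw [totalDegree_eq_zero_iff_eq_C] at h0
    apply hw'
    rw [h0]
    apply IsUnit.map
    rw [isUnit_iff_ne_zero]
    intro hc
    rw [hc] at h0
    exact hw (by simpa using h0)
  have hd := totalDegree_mul_of_isDomain hu0 hv0
  rw [← huv, hp.totalDegree h0] at hd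
  have := key u hu0 hu
  have := key v hv0 hv
  have hdu : u.totalDegree = 1 := by omega
  have hdv : v.totalDegree = 1 := by omega
  refine ⟨homogeneousComponent 1 u, homogeneousComponent 1 v,
    homogeneousComponent_isHomogeneous _ _, homogeneousComponent_isHomogeneous _ _, ?_⟩
  have hs := sum_homogeneousComponent v
  rw [hdv, Finset.sum_range_succ, Finset.sum_range_one] at hs
  have h2 : homogeneousComponent 2 p = p := homogeneousComponent_eq_self hp
  rw [← h2, huv]
  conv_lhs => rw [← hs]
  rw [mul_add, map_add, hc_mul (Nat.zero_le _) _ _ (homogeneousComponent_isHomogeneous _ _),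
    hc_mul (by norm_num) _ _ (homogeneousComponent_isHomogeneous _ _),
    homogeneousComponent_eq_zero _ _ (by omega)]
  simp

variable {a}

/-- If `⟨a, Q⟩` is not prime then `Q = a m + u v`. -/
lemma decomp_of_not_prime {Q : MvPolynomial (Fin N) ℂ} (ha : a.IsHomogeneous 1) (ha0 : a ≠ 0)
    (hQ : Q.IsHomogeneous 2) (haQ : ¬ a ∣ Q) (hnp : ¬ (Ideal.span {a, Q}).IsPrime) :
    ∃ m u v : MvPolynomial (Fin N) ℂ, m.IsHomogeneous 1 ∧ u.IsHomogeneous 1 ∧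
      v.IsHomogeneous 1 ∧ Q = m * a + u * v := by
  obtain ⟨f, hf⟩ : ∃ f : MvPolynomial (Fin N) ℂ →ₗ[ℂ] ℂ, f a = 1 := by
    obtain ⟨g, hg, -⟩ := Submodule.exists_le_ker_of_notMem
      (p := (⊥ : Submodule ℂ (MvPolynomial (Fin N) ℂ))) (v := a) (by simpa using ha0)
    exact ⟨(g a)⁻¹ • g, by simp [hg]⟩
  have pa : prj f a a = 0 := by rw [prj_lin f a ha, hf, one_smul, sub_self]
  set R := prj f a Q with hR
  have hRh : R.IsHomogeneous 2 := prj_hom f a ha hQ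
  have hR0 : R ≠ 0 := by
    intro h
    have := prj_sub f a Q
    rw [← hR, h, sub_zero] at this
    exact haQ this
  have idem : ∀ p, prj f a (prj f a p) = prj f a p := by
    intro p
    obtain ⟨c, hc⟩ := prj_sub f a p
    have := congrArg (prj f a) hc
    rw [map_mul, pa, zero_mul, map_sub, sub_eq_zero] at this
    exact this.symm
  have mem_of : ∀ x, R ∣ prj f a x → x ∈ Ideal.span {a, Q} := by
    rintro x ⟨c, hc⟩
    have h1 := congrArg (prj f a) hc
    rw [idem, map_mul, hR, idem, ← map_mul] at h1
    obtain ⟨e, he⟩ := prj_sub f a (x - Q * c)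
    rw [map_sub, h1, map_mul, sub_self, sub_zero] at he
    rw [Ideal.mem_span_pair]
    exact ⟨e, c, by linear_combination -he⟩
  have of_mem : ∀ x ∈ Ideal.span {a, Q}, R ∣ prj f a x := by
    intro x hx
    obtain ⟨c, e, rfl⟩ := Ideal.mem_span_pair.1 hx
    rw [map_add, map_mul, map_mul, pa]
    simp [hR]
  have hRnp : ¬ Prime R := by
    intro hp
    apply hnp
    constructor
    · rw [Ideal.ne_top_iff_one]
      intro h1
      have := of_mem _ h1
      rw [map_one] at this
      exact hp.not_isUnit (isUnit_of_dvd_one this)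
    · intro x y hxy
      have := of_mem _ hxy
      rw [map_mul] at this
      exact (hp.dvd_or_dvd this).imp (mem_of _) (mem_of _)
  rw [← irreducible_iff_prime, irreducible_iff] at hRnp
  push Not at hRnp
  obtain ⟨u, v, huv, hu, hv⟩ := hRnp (not_isUnit_of_hom (by norm_num) hRh)
  obtain ⟨u', v', hu', hv', he⟩ := deg_one_split hRh hR0 huv hu hv
  obtain ⟨m, hm⟩ := prj_sub f a Q
  refine ⟨homogeneousComponent 1 m, u', v', homogeneousComponent_isHomogeneous _ _, hu', hv', ?_⟩
  have h2 := congrArg (homogeneousComponent 2) hm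
  rw [homogeneousComponent_eq_self (hQ.sub hRh), mul_comm, hc_mul (by norm_num) _ _ ha] at h2
  rw [← he]
  linear_combination h2

lemma mem_span_of_decomp {Q b m u v m' u' v' : MvPolynomial (Fin N) ℂ} (hirr : Irreducible Q)
    (ha : a.IsHomogeneous 1) (hm : m.IsHomogeneous 1) (hu : u.IsHomogeneous 1)
    (hv : v.IsHomogeneous 1) (hQ : Q = m * a + u * v)
    (hb : b.IsHomogeneous 1) (hu' : u'.IsHomogeneous 1)
    (hv' : v'.IsHomogeneous 1) (hQ' : Q = m' * b + u' * v') :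
    b ∈ Submodule.span ℂ (Set.range ![a, m, u, v]) := by
  by_contra hb'
  obtain ⟨g, hg, hgk⟩ := Submodule.exists_le_ker_of_notMem hb'
  set f := (g b)⁻¹ • g with hf
  have hfb : f b = 1 := by simp [hf, hg]
  have hz : ∀ i, f (![a, m, u, v] i) = 0 := by
    intro i
    have : g (![a, m, u, v] i) = 0 := hgk (Submodule.subset_span ⟨i, rfl⟩)
    simp [hf, this]
  have ea : f a = 0 := hz 0
  have em : f m = 0 := hz 1
  have eu : f u = 0 := hz 2
  have ev : f v = 0 := hz 3
  have h1 : prj f b Q = Q := by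
    rw [hQ, map_add, map_mul, map_mul, prj_lin f b ha, prj_lin f b hm, prj_lin f b hu,
      prj_lin f b hv, ea, em, eu, ev]
    simp
  have h2 : prj f b Q = prj f b u' * prj f b v' := by
    rw [hQ', map_add, map_mul, map_mul, prj_lin f b hb, hfb]
    simp
  rw [h1] at h2
  rcases hirr.isUnit_or_isUnit h2 with h | h
  · exact not_isUnit_of_hom one_ne_zero (prj_hom f b hb hu') h
  · exact not_isUnit_of_hom one_ne_zero (prj_hom f b hb hv') h

lemma finrank_three {V : Type*} [AddCommGroup V] [Module ℂ V] (A B E : Submodule ℂ V)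
    [FiniteDimensional ℂ A] [FiniteDimensional ℂ B] [FiniteDimensional ℂ E]
    (h1 : Module.finrank ℂ ↥(A ⊔ B) ≤ 4) (h2 : Module.finrank ℂ ↥(A ⊔ E) ≤ 4)
    (h3 : Module.finrank ℂ ↥(B ⊔ E) ≤ 4) : Module.finrank ℂ ↥(A ⊔ B ⊔ E) ≤ 6 := by
  have e1 := Submodule.finrank_sup_add_finrank_inf_eq (A ⊔ B) (A ⊔ E)
  have e2 := Submodule.finrank_sup_add_finrank_inf_eq A (B ⊔ E)
  have e3 : A ⊔ B ⊔ (A ⊔ E) = A ⊔ B ⊔ E := by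
    rw [← sup_assoc, sup_eq_left.2 (le_sup_left : A ≤ A ⊔ B)]
  have e4 : Module.finrank ℂ A ≤ Module.finrank ℂ ↥((A ⊔ B) ⊓ (A ⊔ E)) :=
    Submodule.finrank_mono (le_inf le_sup_left le_sup_left)
  rw [e3] at e1
  rw [← sup_assoc] at e2
  omega

end helpers

/-- For a simple homogeneous SG `ΣΠΣΠ(3,2)` circuit `F₁ + F₂ + F₃` over `ℂ` as in the
paper, let `L` be the set of degree-1 factors `l i j` for which there is a degree-1
factor `l k t` with `k ≠ i` such that the ideal `⟨l i j, l k t⟩` contains some degree-2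
factor `l f u` with `f ∉ {i, k}`. Then the `ℂ`-linear span of `L` has dimension at
most `6`. -/
theorem span_of_L_dim_le_six_of_SG_circuit
    (n : ℕ) (d : Fin 3 → ℕ) (D : ℕ)
    (l : (i : Fin 3) → Fin (d i) → MvPolynomial (Fin (n + 1)) ℂ)
    (hirr : ∀ i j, Irreducible (l i j))
    (hdeg : ∀ i j, (l i j).IsHomogeneous 1 ∨ (l i j).IsHomogeneous 2)
    (hhom : ∀ i, (∏ j, l i j).IsHomogeneous D)
    (hsimple : ∀ g : MvPolynomial (Fin (n + 1)) ℂ, (∀ i, g ∣ ∏ j, l i j) → IsUnit g)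
    (hSG : ∀ (i : Fin 3) (s : ∀ j, Fin (d j)),
      (∏ j, l i j) ∈
        Ideal.span {p : MvPolynomial (Fin (n + 1)) ℂ | ∃ j, j ≠ i ∧ p = l j (s j)})
    (hprime : ∀ (i j : Fin 3) (k : Fin (d i)) (t : Fin (d j)), i ≠ j →
      (l i k).IsHomogeneous 2 → (l j t).IsHomogeneous 2 →
      (Ideal.span {l i k, l j t}).IsPrime)
    (hnotall : ∃ (i j : Fin 3) (k : Fin (d i)) (t : Fin (d j)), i ≠ j ∧
      (l i k).IsHomogeneous 2 ∧ (l j t).IsHomogeneous 2) :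
    Module.finrank ℂ
      ↥(Submodule.span ℂ
        {p : MvPolynomial (Fin (n + 1)) ℂ |
          ∃ (i : Fin 3) (j : Fin (d i)), p = l i j ∧ p.IsHomogeneous 1 ∧
            ∃ (k : Fin 3) (t : Fin (d k)), k ≠ i ∧ (l k t).IsHomogeneous 1 ∧
              ∃ (f : Fin 3) (u : Fin (d f)), f ≠ i ∧ f ≠ k ∧
                (l f u).IsHomogeneous 2 ∧
                l f u ∈ Ideal.span {p, l k t}}) ≤ 6 := by
  have third : ∀ i j : Fin 3, i ≠ j → ∃ k, k ≠ i ∧ k ≠ j ∧ ∀ x, x ≠ k → x = i ∨ x = j := by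
    decide
  have hdvd : ∀ i j, l i j ∣ ∏ j, l i j := fun i j =>
    Finset.dvd_prod_of_mem _ (Finset.mem_univ j)
  have hne : ∀ k, Nonempty (Fin (d k)) := by
    intro k
    by_contra hk
    rw [not_nonempty_iff] at hk
    have h1 := hhom k
    rw [Finset.prod_of_isEmpty] at h1
    have hD : D = 0 := by
      have := h1.totalDegree one_ne_zero
      rw [MvPolynomial.totalDegree_one] at this
      exact this.symm
    obtain ⟨i, -, x, -, -, -, -⟩ := hnotall
    have h2 := hhom i
    rw [hD, ← MvPolynomial.totalDegree_zero_iff_isHomogeneous,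
      MvPolynomial.totalDegree_eq_zero_iff_eq_C] at h2
    have h0 : ∏ j, l i j ≠ 0 := Finset.prod_ne_zero_iff.2 fun j _ => (hirr i j).ne_zero
    have hu : IsUnit (∏ j, l i j) := by
      rw [h2]
      apply IsUnit.map
      rw [isUnit_iff_ne_zero]
      intro hc
      rw [hc] at h2
      exact h0 (by simpa using h2)
    exact (hirr i x).not_isUnit (isUnit_of_dvd_unit (hdvd i x) hu)
  have pair : ∀ (i j k : Fin 3) (x : Fin (d i)) (y : Fin (d j)), i ≠ j →
      (∀ z, z ≠ k → z = i ∨ z = j) → ∏ t, l k t ∈ Ideal.span {l i x, l j y} := by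
    intro i j k x y hij hz
    let s0 : ∀ j, Fin (d j) := fun j => (hne j).some
    have := hSG k (Function.update (Function.update s0 i x) j y)
    refine Ideal.span_mono ?_ this
    rintro p ⟨z, hzk, rfl⟩
    rcases hz z hzk with rfl | rfl
    · left
      rw [Function.update_of_ne hij, Function.update_self]
    · right
      rw [Function.update_self]
      rfl
  have nondvd : ∀ (i j : Fin 3) (x : Fin (d i)) (y : Fin (d j)), i ≠ j → ¬ l i x ∣ l j y := by
    intro i j x y hij hd
    obtain ⟨k, hki, hkj, hz⟩ := third i j hij
    have hk := pair i j k x y hij hz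
    have hk' : l i x ∣ ∏ t, l k t := by
      obtain ⟨p, q, e⟩ := Ideal.mem_span_pair.1 hk
      rw [← e]
      exact dvd_add (dvd_mul_left _ _) (hd.mul_left _)
    refine (hirr i x).not_isUnit (hsimple _ fun z => ?_)
    by_cases hzk : z = k
    · rw [hzk]; exact hk'
    · rcases hz z hzk with rfl | rfl
      · exact hdvd _ _
      · exact hd.trans (hdvd _ _)
  have hquad : ∀ k : Fin 3, ∃ u : Fin (d k), (l k u).IsHomogeneous 2 := by
    obtain ⟨i, j, x, y, hij, hx, hy⟩ := hnotall
    obtain ⟨k, hki, hkj, hz⟩ := third i j hij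
    intro w
    by_cases hwk : w = k
    · subst hwk
      have hp := hprime i j x y hij hx hy
      obtain ⟨t, -, ht⟩ := (hp.prod_mem_iff).1 (pair i j w x y hij hz)
      refine ⟨t, (hdeg w t).resolve_left fun h1 => ?_⟩
      exact (hirr w t).ne_zero (linear_in_quads h1 hx hy ht)
    · rcases hz w hwk with rfl | rfl
      · exact ⟨x, hx⟩
      · exact ⟨y, hy⟩
  have hnp : ∀ (i j : Fin 3) (x : Fin (d i)) (y : Fin (d j)), i ≠ j →
      (l i x).IsHomogeneous 1 → (l j y).IsHomogeneous 2 →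
      ¬ (Ideal.span {l i x, l j y}).IsPrime := by
    intro i j x y hij hx hy hp
    obtain ⟨k, hki, hkj, hz⟩ := third i j hij
    obtain ⟨t, -, ht⟩ := (hp.prod_mem_iff).1 (pair i j k x y hij hz)
    obtain ⟨p, q, e⟩ := Ideal.mem_span_pair.1 ht
    rcases hdeg k t with h1 | h2
    · have := congrArg (MvPolynomial.homogeneousComponent 1) e
      rw [map_add, hc_mul le_rfl _ _ hx, hc_mul_lt_s13 (by norm_num) _ _ hy, add_zero,
        MvPolynomial.homogeneousComponent_eq_self h1] at this
      exact nondvd i k x t hki.symm ⟨_, by rw [← this, mul_comm]⟩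
    · have := congrArg (MvPolynomial.homogeneousComponent 2) e
      rw [map_add, hc_mul (by norm_num) _ _ hx, hc_mul le_rfl _ _ hy,
        MvPolynomial.homogeneousComponent_eq_self h2] at this
      set m := MvPolynomial.homogeneousComponent (2 - 1) p with hm
      set c := MvPolynomial.homogeneousComponent (2 - 2) q with hc
      have hmh : m.IsHomogeneous 1 := MvPolynomial.homogeneousComponent_isHomogeneous _ _
      have hpr := hprime j k y t hkj.symm hy h2
      have hmem : m * l i x ∈ Ideal.span {l j y, l k t} :=
        Ideal.mem_span_pair.2 ⟨-c, 1, by linear_combination -this⟩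
      rcases hpr.mem_or_mem hmem with h | h
      · have hm0 := linear_in_quads hmh hy h2 h
        rw [hm0, zero_mul, zero_add] at this
        exact nondvd j k y t hkj.symm ⟨_, by rw [← this, mul_comm]⟩
      · exact (hirr i x).ne_zero (linear_in_quads hx hy h2 h)
  let U : Fin 3 → Submodule ℂ (MvPolynomial (Fin (n + 1)) ℂ) := fun i =>
    Submodule.span ℂ {p | ∃ j, p = l i j ∧ p.IsHomogeneous 1}
  have hfd : ∀ i, FiniteDimensional ℂ (U i) := fun i =>
    FiniteDimensional.span_of_finite ℂ
      ((Set.finite_range (l i)).subset (by rintro p ⟨j, rfl, -⟩; exact ⟨j, rfl⟩))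
  have hU : ∀ i j : Fin 3, i ≠ j → Module.finrank ℂ ↥(U i ⊔ U j) ≤ 4 := by
    intro i j hij
    obtain ⟨k, hki, hkj, hz⟩ := third i j hij
    obtain ⟨y, hy⟩ := hquad k
    have dec : ∀ (w : Fin 3) (x : Fin (d w)), w ≠ k → (l w x).IsHomogeneous 1 →
        ∃ m u v : MvPolynomial (Fin (n + 1)) ℂ, m.IsHomogeneous 1 ∧ u.IsHomogeneous 1 ∧
          v.IsHomogeneous 1 ∧ l k y = m * l w x + u * v := fun w x hw hx =>
      decomp_of_not_prime hx (hirr w x).ne_zero hy (nondvd w k x y hw) (hnp w k x y hw hx hy)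
    by_cases hex : ∃ (w : Fin 3) (x : Fin (d w)), w ≠ k ∧ (l w x).IsHomogeneous 1
    · obtain ⟨w, x, hw, hx⟩ := hex
      obtain ⟨m, u, v, hm, hu, hv, e⟩ := dec w x hw hx
      have hsub : ∀ z, z ≠ k → U z ≤ Submodule.span ℂ (Set.range ![l w x, m, u, v]) := by
        intro z hzk
        refine Submodule.span_le.2 ?_
        rintro p ⟨t, rfl, ht⟩
        obtain ⟨m', u', v', hm', hu', hv', e'⟩ := dec z t hzk ht
        exact mem_span_of_decomp (hirr k y) hx hm hu hv e ht hu' hv' e'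
      have hf : FiniteDimensional ℂ (Submodule.span ℂ (Set.range ![l w x, m, u, v])) :=
        FiniteDimensional.span_of_finite ℂ (Set.finite_range _)
      refine (Submodule.finrank_mono (sup_le (hsub i hki.symm) (hsub j hkj.symm))).trans ?_
      exact (finrank_range_le_card ![l w x, m, u, v]).trans (by simp)
    · have hbot : ∀ z, z ≠ k → U z = ⊥ := by
        intro z hzk
        refine Submodule.span_eq_bot.2 ?_
        rintro p ⟨t, rfl, ht⟩
        exact absurd ⟨z, t, hzk, ht⟩ hex
      rw [hbot i hki.symm, hbot j hkj.symm, sup_idem, finrank_bot]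
      norm_num
  have := finrank_three (U 0) (U 1) (U 2) (hU 0 1 (by decide)) (hU 0 2 (by decide))
    (hU 1 2 (by decide))
  refine (Submodule.finrank_mono ?_).trans this
  refine Submodule.span_le.2 ?_
  rintro p ⟨i, j, hp, hp1, -⟩
  have hpU : p ∈ U i := Submodule.subset_span ⟨j, hp, hp1⟩
  have hle : ∀ i : Fin 3, U i ≤ U 0 ⊔ U 1 ⊔ U 2 := by
    intro i
    fin_cases i
    · exact le_sup_left.trans le_sup_left
    · exact le_sup_right.trans le_sup_left
    · exact le_sup_right
  exact hle i hpU
end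

section
/- Let Q be a quadratic form on ℂ^n of rank exactly 3 (i.e., Q(x) = xᵀ A x for a symmetric complex matrix A with rank(A) = 3), and let S be a set of non-zero linear functionals on ℂ^n such that for every l ∈ S the restriction of Q to the hyperplane ker l is a quadratic form of rank at most 2 (equivalently, the restriction is a product of two linear forms). Then the ℂ-linear span of S has dimension at most 3. -/
lemma aux_vanish (n : ℕ) (A : Matrix (Fin n) (Fin n) ℂ) (hA : A.IsSymm) (hrk : A.rank = 3)
    (l : (Fin n → ℂ) →ₗ[ℂ] ℂ)
    (g h : ↥(LinearMap.ker l) →ₗ[ℂ] ℂ)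
    (hgh : ∀ v : ↥(LinearMap.ker l),
          (∑ i, ∑ j, A i j * (v : Fin n → ℂ) i * (v : Fin n → ℂ) j) = g v * h v)
    (k : Fin n → ℂ) (hk : A.mulVec k = 0) : l k = 0 := by
  by_contra hlk
  let P : (Fin n → ℂ) →ₗ[ℂ] ↥(LinearMap.ker l) :=
    LinearMap.codRestrict (LinearMap.ker l) (LinearMap.id - l.smulRight ((l k)⁻¹ • k)) (by
      intro x
      simp [hlk])
  have hP : ∀ x, (P x : Fin n → ℂ) = x - (l x * (l k)⁻¹) • k := by
    intro x
    change x - l x • ((l k)⁻¹ • k) = _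
    rw [smul_smul]
  have hQ : ∀ x : Fin n → ℂ, (∑ i, ∑ j, A i j * x i * x j) = x ⬝ᵥ A.mulVec x := by
    intro x
    simp only [dotProduct, Matrix.mulVec, Finset.mul_sum]
    exact Finset.sum_congr rfl fun i _ => Finset.sum_congr rfl fun j _ => by ring
  have hk2 : ∀ x, k ⬝ᵥ A.mulVec x = 0 := by
    intro x
    rw [Matrix.dotProduct_mulVec, ← Matrix.mulVec_transpose, hA.eq, hk, zero_dotProduct]
  have key : ∀ x, x ⬝ᵥ A.mulVec x = g (P x) * h (P x) := by
    intro x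
    rw [← hgh, hQ, hP]
    simp [Matrix.mulVec_sub, Matrix.mulVec_smul, hk, sub_dotProduct, hk2]
  have hE : ∀ i j, Pi.single i 1 ⬝ᵥ A.mulVec (Pi.single j 1) = A i j := by
    intro i j
    simp
  let G : Fin n → ℂ := fun i => g (P (Pi.single i 1))
  let H : Fin n → ℂ := fun i => h (P (Pi.single i 1))
  let M : Matrix (Fin n) (Fin 2) ℂ := Matrix.of fun i => ![G i, H i]
  let N : Matrix (Fin 2) (Fin n) ℂ := Matrix.of ![fun j => H j / 2, fun j => G j / 2]
  have hAe : A = M * N := by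
    ext i j
    have h1 := key (Pi.single i 1 + Pi.single j 1)
    have h2 := key (Pi.single i 1)
    have h3 := key (Pi.single j 1)
    have h4 : A j i = A i j := hA.apply i j
    simp only [Matrix.mulVec_add, add_dotProduct, dotProduct_add, hE, map_add] at h1 h2 h3
    simp only [Matrix.mul_apply, Fin.sum_univ_two, M, N, Matrix.of_apply, Matrix.cons_val_zero, Matrix.cons_val_one, G, H]
    linear_combination (h1 - h2 - h3 - h4) / 2
  have a := Matrix.rank_mul_le_left M N
  have b := Matrix.rank_le_width M
  rw [← hAe, hrk] at a
  omega


/-- Let `Q(x) = xᵀ A x` be a quadratic form on `ℂⁿ` of rank exactly `3` (`A` symmetric,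
`rank A = 3`), and let `S` be a set of non-zero linear functionals `l` on `ℂⁿ` such that
the restriction of `Q` to each hyperplane `ker l` has rank at most `2`, i.e. is a
product of two linear forms on `ker l`. Then the span of `S` has dimension at most `3`. -/
theorem span_of_functionals_splitting_rank_three_quadric_le_three
    (n : ℕ) (A : Matrix (Fin n) (Fin n) ℂ) (hA : A.IsSymm) (hrk : A.rank = 3)
    (S : Set ((Fin n → ℂ) →ₗ[ℂ] ℂ))
    (hS : ∀ l ∈ S, l ≠ 0 ∧
      ∃ g h : ↥(LinearMap.ker l) →ₗ[ℂ] ℂ,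
        ∀ v : ↥(LinearMap.ker l),
          (∑ i, ∑ j, A i j * (v : Fin n → ℂ) i * (v : Fin n → ℂ) j) = g v * h v) :
    Module.finrank ℂ ↥(Submodule.span ℂ S) ≤ 3 := by
  have hle : Submodule.span ℂ S ≤ (LinearMap.ker A.mulVecLin).dualAnnihilator := by
    rw [Submodule.span_le]
    intro l hl
    obtain ⟨_, g, h, hgh⟩ := hS l hl
    simp only [SetLike.mem_coe, Submodule.mem_dualAnnihilator]
    intro k hk
    exact aux_vanish n A hA hrk l g h hgh k (by simpa using hk)
  have h1 := Submodule.finrank_mono hle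
  have h2 : Module.finrank ℂ (LinearMap.ker A.mulVecLin) +
      Module.finrank ℂ (LinearMap.ker A.mulVecLin).dualAnnihilator =
      Module.finrank ℂ (Fin n → ℂ) :=
    Subspace.finrank_add_finrank_dualAnnihilator_eq (LinearMap.ker A.mulVecLin)
  have h3 := LinearMap.finrank_range_add_finrank_ker A.mulVecLin
  have h4 : Module.finrank ℂ (LinearMap.range A.mulVecLin) = 3 := hrk
  refine h1.trans ?_
  linarith
end

section
/- Let F_1, F_2, F_3 ∈ ℂ[x_0, …, x_n] be pairwise coprime polynomials, each a product of non-zero homogeneous linear polynomials, such that F_1 + F_2 + F_3 = 0. Then for every linear factor l_1 of F_1 and every linear factor l_2 of F_2, some linear factor l_3 of F_3 lies in the ℂ-linear span of l_1 and l_2 (equivalently, l_3 ∈ ⟨l_1, l_2⟩). -/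
theorem linform_exists_dual {m : ℕ} (p : MvPolynomial (Fin m) ℂ) (hp : p.IsHomogeneous 1) :
    ∃ f : (Fin m → ℂ) →ₗ[ℂ] ℂ, ∀ x, f x = MvPolynomial.eval x p := by
  have h : p ∈ MvPolynomial.homogeneousSubmodule (Fin m) ℂ 1 := hp
  rw [MvPolynomial.homogeneousSubmodule_one_eq_span_X] at h
  induction h using Submodule.span_induction with
  | mem x hx =>
    obtain ⟨i, rfl⟩ := hx
    exact ⟨LinearMap.proj i, fun x => by simp⟩
  | zero => exact ⟨0, fun x => by simp⟩
  | add a b ha hb iha ihb =>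
    rw [← MvPolynomial.homogeneousSubmodule_one_eq_span_X] at ha hb
    obtain ⟨f, hf⟩ := iha ha
    obtain ⟨g, hg⟩ := ihb hb
    exact ⟨f + g, fun x => by simp [hf, hg]⟩
  | smul c a ha iha =>
    rw [← MvPolynomial.homogeneousSubmodule_one_eq_span_X] at ha
    obtain ⟨f, hf⟩ := iha ha
    exact ⟨c • f, fun x => by simp [hf]⟩

/-- If `F₁, F₂, F₃ ∈ ℂ[x₀, …, xₙ]` are pairwise coprime products of non-zero homogeneous
linear polynomials with `F₁ + F₂ + F₃ = 0`, then for every linear factor `l₁` of `F₁` and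
every linear factor `l₂` of `F₂` some linear factor of `F₃` lies in the `ℂ`-linear span
of `l₁` and `l₂`. -/
theorem exists_factor_in_span_of_coprime_sum_zero
    (n : ℕ) (d : Fin 3 → ℕ)
    (l : (i : Fin 3) → Fin (d i) → MvPolynomial (Fin (n + 1)) ℂ)
    (hne : ∀ i j, l i j ≠ 0) (hhom : ∀ i j, (l i j).IsHomogeneous 1)
    (hcop : ∀ i j, i ≠ j →
      ∀ g : MvPolynomial (Fin (n + 1)) ℂ, g ∣ (∏ t, l i t) → g ∣ (∏ t, l j t) → IsUnit g)
    (hzero : (∏ t, l 0 t) + (∏ t, l 1 t) + (∏ t, l 2 t) = 0) :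
    ∀ (j₁ : Fin (d 0)) (j₂ : Fin (d 1)), ∃ j₃ : Fin (d 2),
      l 2 j₃ ∈ Submodule.span ℂ {l 0 j₁, l 1 j₂} := by
  intro j₁ j₂
  choose f hf using fun i j => linform_exists_dual (l i j) (hhom i j)
  by_contra! hcon
  obtain ⟨x, hx, hx0⟩ := Module.Dual.exists_forall_mem_ne_zero_of_forall_exists
    (⨅ i, LinearMap.ker (![f 0 j₁, f 1 j₂] i)) (f 2) (by
      intro j₃
      by_contra! h
      have h2 := mem_span_of_iInf_ker_le_ker (L := ![f 0 j₁, f 1 j₂]) (K := f 2 j₃)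
        (fun x hx => h x hx)
      rw [Matrix.range_cons, Matrix.range_cons, Matrix.range_empty, Set.union_empty,
        Set.singleton_union, Submodule.mem_span_pair] at h2
      obtain ⟨a, b, hab⟩ := h2
      apply hcon j₃
      rw [Submodule.mem_span_pair]
      refine ⟨a, b, MvPolynomial.funext fun x => ?_⟩
      have := LinearMap.congr_fun hab x
      simpa [hf] using this)
  simp only [Submodule.mem_iInf, LinearMap.mem_ker] at hx
  have h1 : f 0 j₁ x = 0 := hx 0
  have h2 : f 1 j₂ x = 0 := hx 1
  rw [hf] at h1 h2
  have hz := congrArg (MvPolynomial.eval x) hzero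
  simp only [map_add, map_prod, map_zero] at hz
  rw [Finset.prod_eq_zero (Finset.mem_univ j₁) h1,
    Finset.prod_eq_zero (Finset.mem_univ j₂) h2, zero_add, zero_add] at hz
  obtain ⟨j, -, hj⟩ := Finset.prod_eq_zero_iff.1 hz
  exact hx0 j ((hf 2 j x).trans hj)
end

section
/- Let F_1, F_2, F_3 ∈ ℂ[x_0, …, x_n] be pairwise coprime polynomials, each a product of non-zero homogeneous linear polynomials, such that F_1 + F_2 + F_3 = 0. Then the points of the projective space ℙ(ℂ^{n+1}) determined by all the linear factors of F_1, F_2 and F_3 (each linear factor, viewed as a vector of coefficients up to scalar, gives a projective point) lie in a projective subspace of dimension at most 4; equivalently, the ℂ-linear span of all the linear factors has dimension at most 5. -/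
open MvPolynomial

set_option linter.unusedSectionVars false

namespace SpanFive

lemma detid {N : ℕ} (f1 f2 f3 : ℂ) (hf : f1 + f2 + f3 = 0) (hf1 : f1 ≠ 0)
    (h1 h2 h3 p : Fin N → ℂ) (H1 H2 H3 : Matrix (Fin N) (Fin N) ℂ) (δ : ℂ)
    (e1 : ∀ j, f1 * h1 j + f2 * h2 j + f3 * h3 j = 0)
    (e2 : ∀ j k, f1 * (h1 j * h1 k - H1 j k) + f2 * (h2 j * h2 k - H2 j k)
      + f3 * (h3 j * h3 k - H3 j k) = 0)
    (E2 : H2.mulVec p = h2) (E3 : H3.mulVec p = h3)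
    (D2 : dotProduct h2 p = δ) (D3 : dotProduct h3 p = δ) :
    f1 ^ N * (H1 - H2).det = (-f3) ^ N * (H3 - H2).det := by
  have key : f1 • (H1 - H2) = (-f3) • ((H3 - H2) *
      (1 + Matrix.replicateCol Unit p * Matrix.replicateRow Unit ((f2 / f1) • (h3 - h2)))) := by
    have hw : (H3 - H2).mulVec p = h3 - h2 := by rw [Matrix.sub_mulVec, E2, E3]
    rw [mul_add, mul_one, ← Matrix.mul_assoc]
    have : (H3 - H2) * Matrix.replicateCol Unit p = Matrix.replicateCol Unit (h3 - h2) := by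
      rw [← hw]; ext i j; simp [Matrix.mul_apply, Matrix.mulVec, dotProduct]
    rw [this]
    ext j k
    simp only [Matrix.smul_apply, Matrix.sub_apply, Matrix.add_apply, Matrix.mul_apply,
      Matrix.replicateCol_apply, Matrix.replicateRow_apply, Pi.sub_apply, Pi.smul_apply,
      smul_eq_mul, Finset.univ_unique, Finset.sum_const, Finset.card_singleton, one_smul]
    have a := e1 j
    have b := e1 k
    have c := e2 j k
    have hf2 : f2 = - f1 - f3 := by linear_combination hf
    subst hf2
    field_simp
    have a' : f1 * (h1 j - h2 j) = - f3 * (h3 j - h2 j) := by linear_combination a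
    have b' : f1 * (h1 k - h2 k) = - f3 * (h3 k - h2 k) := by linear_combination b
    linear_combination (-f1) * c + (f1 * (h1 k - h2 k)) * a' - f3 * (h3 j - h2 j) * b' + f1 * h2 j * b + f1 * h2 k * a
  have := congrArg Matrix.det key
  rw [Matrix.det_smul, Matrix.det_smul, Matrix.det_mul, Matrix.det_one_add_replicateCol_mul_replicateRow] at this
  simp only [Fintype.card_fin, smul_dotProduct, sub_dotProduct, D2, D3] at this
  simpa using this

noncomputable def lin {N : ℕ} (c : Fin N → ℂ) : MvPolynomial (Fin N) ℂ := ∑ j, C (c j) * X j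

lemma eval_lin {N : ℕ} (c p : Fin N → ℂ) : eval p (lin c) = dotProduct c p := by
  simp [lin, dotProduct]

lemma pderiv_lin {N : ℕ} (c : Fin N → ℂ) (j : Fin N) : pderiv j (lin c) = C (c j) := by
  classical
  simp [lin, pderiv_X, Pi.single_apply]

lemma lin_hom {N : ℕ} (c : Fin N → ℂ) : (lin c).IsHomogeneous 1 := by
  refine IsHomogeneous.sum _ _ _ fun j _ => ?_
  simpa using (isHomogeneous_C _ (c j)).mul (isHomogeneous_X ℂ j)

variable {N : ℕ} {ι : Type} [Fintype ι] [DecidableEq ι]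

/-- log gradient -/
noncomputable def hh (γ : ι → Fin N → ℂ) (s : Finset ι) (p : Fin N → ℂ) (j : Fin N) : ℂ :=
  ∑ i ∈ s, γ i j / dotProduct (γ i) p

noncomputable def HH (γ : ι → Fin N → ℂ) (s : Finset ι) (p : Fin N → ℂ) :
    Matrix (Fin N) (Fin N) ℂ :=
  fun j k => ∑ i ∈ s, γ i j * γ i k / (dotProduct (γ i) p) ^ 2

lemma eval_pd (γ : ι → Fin N → ℂ) (s : Finset ι) (p : Fin N → ℂ)
    (hp : ∀ i, dotProduct (γ i) p ≠ 0) (j : Fin N) :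
    eval p (pderiv j (∏ i ∈ s, lin (γ i))) = eval p (∏ i ∈ s, lin (γ i)) * hh γ s p j := by
  induction s using Finset.induction_on with
  | empty => simp [hh]
  | insert a s ha ih =>
    have := hp a
    simp only [hh] at ih ⊢
    rw [Finset.prod_insert ha, Finset.sum_insert ha]
    simp only [Derivation.leibniz, map_add, smul_eq_mul, map_mul, ih, pderiv_lin, eval_lin, eval_C]
    field_simp
    ring

lemma eval_pd2 (γ : ι → Fin N → ℂ) (s : Finset ι) (p : Fin N → ℂ)
    (hp : ∀ i, dotProduct (γ i) p ≠ 0) (j k : Fin N) :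
    eval p (pderiv k (pderiv j (∏ i ∈ s, lin (γ i)))) =
      eval p (∏ i ∈ s, lin (γ i)) * (hh γ s p j * hh γ s p k - HH γ s p j k) := by
  induction s using Finset.induction_on with
  | empty => simp [hh, HH]
  | insert a s ha ih =>
    have := hp a
    have e1 := eval_pd γ s p hp j
    have e2 := eval_pd γ s p hp k
    simp only [hh, HH] at ih e1 e2 ⊢
    rw [Finset.prod_insert ha, Finset.sum_insert ha, Finset.sum_insert ha, Finset.sum_insert ha]
    simp only [Derivation.leibniz, map_add, smul_eq_mul, map_mul, ih, pderiv_lin, eval_lin, eval_C, e1, e2, pderiv_C]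
    field_simp
    simp
    ring

lemma HH_mulVec (γ : ι → Fin N → ℂ) (s : Finset ι) (p : Fin N → ℂ)
    (hp : ∀ i, dotProduct (γ i) p ≠ 0) : (HH γ s p).mulVec p = hh γ s p := by
  ext j
  simp only [Matrix.mulVec, HH, hh, dotProduct, Finset.sum_mul]
  rw [Finset.sum_comm]
  refine Finset.sum_congr rfl fun i _ => ?_
  have := hp i
  have h : ∀ x, γ i j * γ i x / (∑ k, γ i k * p k) ^ 2 * p x
    = γ i j / (∑ k, γ i k * p k) ^ 2 * (γ i x * p x) := fun x => by ring
  simp only [h, ← Finset.mul_sum]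
  simp only [dotProduct] at this
  field_simp

lemma hh_dot (γ : ι → Fin N → ℂ) (s : Finset ι) (p : Fin N → ℂ)
    (hp : ∀ i, dotProduct (γ i) p ≠ 0) : dotProduct (hh γ s p) p = s.card := by
  simp only [hh, dotProduct, Finset.sum_mul]
  rw [Finset.sum_comm, Finset.card_eq_sum_ones, Nat.cast_sum]
  refine Finset.sum_congr rfl fun i _ => ?_
  have := hp i
  have h : ∀ x, γ i x / (∑ k, γ i k * p k) * p x
    = 1 / (∑ k, γ i k * p k) * (γ i x * p x) := fun x => by ring
  simp only [h, ← Finset.mul_sum]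
  simp only [dotProduct] at this
  field_simp
  simp

/-- cleared determinant -/
noncomputable def PP (γ : ι → Fin N → ℂ) (ε : ι → ℂ) : MvPolynomial (Fin N) ℂ :=
  ∑ f : Fin N → ι with Function.Injective f,
    C ((∏ j, ε (f j) * γ (f j) j) * Matrix.det (fun j k => γ (f j) k)) *
      ∏ i ∈ (Finset.univ.image f)ᶜ, lin (γ i) ^ 2

lemma PP_deg (γ : ι → Fin N → ℂ) (ε : ι → ℂ) (h : PP γ ε ≠ 0) :
    N ≤ Fintype.card ι ∧ (PP γ ε).totalDegree ≤ 2 * (Fintype.card ι - N) := by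
  constructor
  · by_contra hN
    apply h
    unfold PP
    apply Finset.sum_eq_zero
    intro f hf
    have := Fintype.card_le_of_injective f (Finset.mem_filter.1 hf).2
    simp at this; omega
  · apply totalDegree_finsetSum_le
    intro f hf
    refine IsHomogeneous.totalDegree_le (n := 2 * (Fintype.card ι - N)) ?_
    have hc : ((Finset.univ.image f)ᶜ).card = Fintype.card ι - N := by
      rw [Finset.card_compl, Finset.card_image_of_injective _ (Finset.mem_filter.1 hf).2]; simp
    have := (isHomogeneous_C (Fin N) ((∏ j, ε (f j) * γ (f j) j) * Matrix.det (fun j k => γ (f j) k))).mul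
      (IsHomogeneous.prod (Finset.univ.image f)ᶜ (fun i => lin (γ i) ^ 2) (fun _ => 2)
      (fun i _ => by simpa using (lin_hom (γ i)).pow 2))
    simpa [hc, mul_comm] using this

lemma PP_eval (γ : ι → Fin N → ℂ) (ε : ι → ℂ) (p : Fin N → ℂ)
    (hp : ∀ i, dotProduct (γ i) p ≠ 0) :
    eval p (PP γ ε) = (∏ i, dotProduct (γ i) p) ^ 2 *
      Matrix.det (fun j k => ∑ i, ε i * (γ i j * γ i k / (dotProduct (γ i) p) ^ 2)) := by
  have h1 : (fun j k => ∑ i, ε i * (γ i j * γ i k / (dotProduct (γ i) p) ^ 2)) =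
     (fun j => ∑ i, (ε i * γ i j / (dotProduct (γ i) p) ^ 2) • γ i) := by
    ext j k; simp only [Finset.sum_apply, Pi.smul_apply, smul_eq_mul]
    exact Finset.sum_congr rfl fun i _ => by ring
  have h2 : Matrix.det (fun j => ∑ i, (ε i * γ i j / (dotProduct (γ i) p) ^ 2) • γ i)
     = ∑ f : Fin N → ι, (∏ j, (ε (f j) * γ (f j) j / (dotProduct (γ (f j)) p) ^ 2)) *
        Matrix.det (fun j k => γ (f j) k) := by
    have := (Matrix.detRowAlternating (n := Fin N) (R := ℂ)).toMultilinearMap.map_sum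
      (fun j i => (ε i * γ i j / (dotProduct (γ i) p) ^ 2) • γ i)
    refine this.trans (Finset.sum_congr rfl fun f _ => ?_)
    rw [MultilinearMap.map_smul_univ]
    rfl
  rw [h1, h2, Finset.mul_sum, PP, map_sum, Finset.sum_filter]
  refine Finset.sum_congr rfl fun f _ => ?_
  split_ifs with hf
  · simp only [map_mul, eval_C, map_prod, map_pow, eval_lin]
    rw [← Finset.prod_pow, ← Finset.prod_mul_prod_compl (Finset.univ.image f),
      Finset.prod_image (fun a _ b _ h => hf h), Finset.prod_div_distrib]
    have : ∏ j, (dotProduct (γ (f j)) p) ^ 2 ≠ 0 :=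
      Finset.prod_ne_zero_iff.2 fun j _ => pow_ne_zero _ (hp _)
    field_simp
  · have : Matrix.det (fun j k => γ (f j) k) = 0 := by
      simp only [Function.Injective, not_forall] at hf
      obtain ⟨a, b, h, hab⟩ := hf
      exact Matrix.det_zero_of_row_eq hab (by rw [h])
    rw [this]; simp


/-- cofactor products -/
noncomputable def qq (γ : ι → Fin N → ℂ) (i : ι) : MvPolynomial (Fin N) ℂ :=
  ∏ k ∈ Finset.univ.erase i, lin (γ k)

noncomputable def FF (γ : ι → Fin N → ℂ) : MvPolynomial (Fin N) ℂ := ∏ k, lin (γ k)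

lemma FF_eq (γ : ι → Fin N → ℂ) (i : ι) : FF γ = lin (γ i) * qq γ i :=
  (Finset.mul_prod_erase _ _ (Finset.mem_univ i)).symm

noncomputable def TT (γ : ι → Fin N → ℂ) (ε : ι → ℂ) (k : ℕ)
    (g : ι → MvPolynomial (Fin N) ℂ) (j : Fin N) : MvPolynomial (Fin N) ℂ :=
  ∑ i, C (ε i * γ i j) * g i * qq γ i ^ (k + 1)

lemma TT_add (γ : ι → Fin N → ℂ) (ε : ι → ℂ) (k : ℕ) (g g') (j : Fin N) :
    TT γ ε k (g + g') j = TT γ ε k g j + TT γ ε k g' j := by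
  simp only [TT, ← Finset.sum_add_distrib, Pi.add_apply]
  exact Finset.sum_congr rfl fun i _ => by ring

lemma dTT (γ : ι → Fin N → ℂ) (ε : ι → ℂ) (k : ℕ) (g : ι → MvPolynomial (Fin N) ℂ) (j : Fin N)
    (D : Derivation ℂ (MvPolynomial (Fin N) ℂ) (MvPolynomial (Fin N) ℂ)) :
    FF γ * D (TT γ ε k g j) = FF γ * TT γ ε k (fun i => D (g i)) j
      + (k + 1) * D (FF γ) * TT γ ε k g j
      - (k + 1) * TT γ ε (k + 1) (fun i => g i * D (lin (γ i))) j := by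
  simp only [TT, map_sum, Finset.mul_sum, ← Finset.sum_add_distrib, ← Finset.sum_sub_distrib]
  refine Finset.sum_congr rfl fun i _ => ?_
  have h1 : FF γ * D (qq γ i) = qq γ i * (D (FF γ) - qq γ i * D (lin (γ i))) := by
    rw [FF_eq γ i, Derivation.leibniz]; simp only [smul_eq_mul]; ring
  have h2 : D (C (ε i * γ i j)) = 0 := by
    have := D.map_algebraMap (ε i * γ i j)
    simpa [MvPolynomial.algebraMap_eq] using this
  simp only [Derivation.leibniz, Derivation.leibniz_pow, smul_eq_mul, h2, nsmul_eq_mul, Nat.add_sub_cancel]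
  push_cast
  linear_combination (C (ε i * γ i j) * g i * ((k : MvPolynomial (Fin N) ℂ) + 1) * qq γ i ^ k) * h1

/-- the value of a form on a polynomial vector -/
noncomputable def LL (γ : ι → Fin N → ℂ) (u : Fin N → MvPolynomial (Fin N) ℂ) (i : ι) :
    MvPolynomial (Fin N) ℂ := ∑ j, C (γ i j) * u j

lemma mkD_lin (c : Fin N → ℂ) (u : Fin N → MvPolynomial (Fin N) ℂ) :
    mkDerivation ℂ u (lin c) = ∑ j, C (c j) * u j := by
  simp [lin]

lemma D_LL (γ : ι → Fin N → ℂ) (u : Fin N → MvPolynomial (Fin N) ℂ) (i : ι)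
    (D : Derivation ℂ (MvPolynomial (Fin N) ℂ) (MvPolynomial (Fin N) ℂ)) :
    D (LL γ u i) = LL γ (fun j => D (u j)) i := by
  simp only [LL, map_sum, Derivation.leibniz, smul_eq_mul]
  refine Finset.sum_congr rfl fun j _ => ?_
  have h2 : D (C (γ i j)) = 0 := by
    have := D.map_algebraMap (γ i j)
    simpa [MvPolynomial.algebraMap_eq] using this
  rw [h2]; simp

lemma FF_ne (γ : ι → Fin N → ℂ) (hl : ∀ i, lin (γ i) ≠ 0) : FF γ ≠ 0 :=
  Finset.prod_ne_zero_iff.2 fun i _ => hl i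

/-- symmetric pairing -/
lemma pair_TT (γ : ι → Fin N → ℂ) (ε : ι → ℂ) (k : ℕ) (g : ι → MvPolynomial (Fin N) ℂ)
    (u : Fin N → MvPolynomial (Fin N) ℂ) :
    ∑ j, u j * TT γ ε k g j = ∑ i, C (ε i) * LL γ u i * g i * qq γ i ^ (k + 1) := by
  simp only [TT, LL, Finset.mul_sum, Finset.sum_mul]
  rw [Finset.sum_comm]
  refine Finset.sum_congr rfl fun i _ => Finset.sum_congr rfl fun j _ => ?_
  rw [C_mul]; ring

lemma T2 (γ : ι → Fin N → ℂ) (ε : ι → ℂ) (hl : ∀ i, lin (γ i) ≠ 0)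
    (u v : Fin N → MvPolynomial (Fin N) ℂ)
    (hu : ∀ j, TT γ ε 1 (LL γ u) j = 0) (hv : ∀ j, TT γ ε 1 (LL γ v) j = 0) (j : Fin N) :
    TT γ ε 2 (fun i => LL γ v i * LL γ u i) j = 0 := by
  have h1 : ∀ j', 2 * TT γ ε 2 (fun i => LL γ v i * pderiv j (lin (γ i))) j'
      = FF γ * TT γ ε 1 (LL γ (fun j' => pderiv j (v j'))) j' := by
    intro j'
    have := dTT γ ε 1 (LL γ v) j' (pderiv j)
    rw [hv] at this
    simp only [D_LL, map_zero, mul_zero] at this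
    push_cast at this
    linear_combination this
  have h2 : ∑ j', u j' * (2 * TT γ ε 2 (fun i => LL γ v i * pderiv j (lin (γ i))) j')
     = ∑ j', u j' * (FF γ * TT γ ε 1 (LL γ (fun j' => pderiv j (v j'))) j') :=
    Finset.sum_congr rfl fun j' _ => by rw [h1]
  have h3 : ∑ j', u j' * TT γ ε 1 (LL γ (fun j' => pderiv j (v j'))) j' = 0 := by
    have := pair_TT γ ε 1 (LL γ u) (fun j' => pderiv j (v j'))
    simp only [hu, mul_zero, Finset.sum_const_zero] at this
    rw [pair_TT, this]
    exact Finset.sum_congr rfl fun i _ => by ring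
  have h4 : ∑ j', u j' * TT γ ε 2 (fun i => LL γ v i * pderiv j (lin (γ i))) j' = 0 := by
    have e1 : (2 : MvPolynomial (Fin N) ℂ) * ∑ j', u j' * TT γ ε 2 (fun i => LL γ v i * pderiv j (lin (γ i))) j'
      = FF γ * ∑ j', u j' * TT γ ε 1 (LL γ (fun j' => pderiv j (v j'))) j' := by
      rw [Finset.mul_sum, Finset.mul_sum]
      convert h2 using 2 <;> ring
    rw [h3, mul_zero] at e1
    exact (mul_eq_zero.1 e1).resolve_left two_ne_zero
  rw [pair_TT] at h4
  rw [← h4, TT]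
  refine Finset.sum_congr rfl fun i _ => ?_
  rw [pderiv_lin, C_mul]; ring

lemma Kclosed (γ : ι → Fin N → ℂ) (ε : ι → ℂ) (hl : ∀ i, lin (γ i) ≠ 0)
    (u v : Fin N → MvPolynomial (Fin N) ℂ)
    (hu : ∀ j, TT γ ε 1 (LL γ u) j = 0) (hv : ∀ j, TT γ ε 1 (LL γ v) j = 0) (j : Fin N) :
    TT γ ε 1 (LL γ (fun j' => mkDerivation ℂ u (v j'))) j = 0 := by
  have := dTT γ ε 1 (LL γ v) j (mkDerivation ℂ u)
  rw [hv] at this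
  simp only [D_LL, map_zero, mul_zero, mkD_lin] at this
  have h2 := T2 γ ε hl u v hu hv j
  simp only [LL] at h2 this ⊢
  rw [h2] at this
  simp only [add_zero, mul_zero, sub_zero] at this
  exact (mul_eq_zero.1 this.symm).resolve_left (FF_ne γ hl)

/-- products of `k` kernel vectors -/
inductive GG (γ : ι → Fin N → ℂ) (ε : ι → ℂ) : ℕ → (ι → MvPolynomial (Fin N) ℂ) → Prop
  | one (u : Fin N → MvPolynomial (Fin N) ℂ) (hu : ∀ j, TT γ ε 1 (LL γ u) j = 0) :
      GG γ ε 1 (LL γ u)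
  | mul (k : ℕ) (g : ι → MvPolynomial (Fin N) ℂ) (u : Fin N → MvPolynomial (Fin N) ℂ)
      (hu : ∀ j, TT γ ε 1 (LL γ u) j = 0) (hg : GG γ ε k g) :
      GG γ ε (k + 1) (fun i => g i * LL γ u i)
  | add (k : ℕ) (g g' : ι → MvPolynomial (Fin N) ℂ) (hg : GG γ ε k g) (hg' : GG γ ε k g') :
      GG γ ε k (g + g')

lemma GG_D (γ : ι → Fin N → ℂ) (ε : ι → ℂ) (hl : ∀ i, lin (γ i) ≠ 0)
    (u : Fin N → MvPolynomial (Fin N) ℂ) (hu : ∀ j, TT γ ε 1 (LL γ u) j = 0)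
    (k : ℕ) (g : ι → MvPolynomial (Fin N) ℂ) (hg : GG γ ε k g) :
    GG γ ε k (fun i => mkDerivation ℂ u (g i)) := by
  induction hg with
  | one v hv =>
    simp only [D_LL]
    exact GG.one _ (Kclosed γ ε hl u v hu hv)
  | mul k g v hv hg ih =>
    have := GG.add _ _ _ (GG.mul k _ v hv ih) (GG.mul k g _ (Kclosed γ ε hl u v hu hv) hg)
    convert this using 1
    ext1 i
    simp only [Derivation.leibniz, smul_eq_mul, D_LL, Pi.add_apply]
    ring
  | add k g g' hg hg' ih ih' =>
    have := GG.add _ _ _ ih ih'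
    convert this using 1
    ext1 i
    simp

lemma GG_T (γ : ι → Fin N → ℂ) (ε : ι → ℂ) (hl : ∀ i, lin (γ i) ≠ 0)
    (k : ℕ) (g : ι → MvPolynomial (Fin N) ℂ) (hg : GG γ ε k g) (j : Fin N) :
    TT γ ε k g j = 0 := by
  suffices H : ∀ k, (∀ g, GG γ ε k g → ∀ j, TT γ ε k g j = 0) by exact H k g hg j
  clear hg g k j
  intro k
  induction k with
  | zero =>
    intro g hg
    generalize hk : 0 = k at hg
    induction hg with
    | one u hu => omega
    | mul => omega
    | add k g g' _ _ ih ih' => intro j; subst hk; rw [TT_add, ih rfl, ih' rfl, add_zero]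
  | succ k IH =>
    intro g hg
    generalize hk : k + 1 = k' at hg
    induction hg with
    | one u hu => exact hu
    | mul k' g u hu hg ih =>
      obtain rfl : k = k' := by omega
      intro j
      have := dTT γ ε k g j (mkDerivation ℂ u)
      rw [IH g hg, IH _ (GG_D γ ε hl u hu k g hg)] at this
      simp only [map_zero, mul_zero, mkD_lin, add_zero, zero_sub] at this
      have h := neg_eq_zero.1 this.symm
      have hk : ((k : MvPolynomial (Fin N) ℂ) + 1) ≠ 0 := by exact_mod_cast Nat.succ_ne_zero k
      exact (mul_eq_zero.1 h).resolve_left hk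
    | add k' g g' _ _ ih ih' => intro j; rw [TT_add, ih hk, ih' hk, add_zero]

lemma pow_T (γ : ι → Fin N → ℂ) (ε : ι → ℂ) (hl : ∀ i, lin (γ i) ≠ 0)
    (u : Fin N → MvPolynomial (Fin N) ℂ) (hu : ∀ j, TT γ ε 1 (LL γ u) j = 0) (k : ℕ) (j : Fin N) :
    ∑ i, (C (ε i * γ i j) * qq γ i) * (LL γ u i * qq γ i) ^ (k + 1) = 0 := by
  have : GG γ ε (k + 1) (fun i => LL γ u i ^ (k + 1)) := by
    induction k with
    | zero => simpa using GG.one u hu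
    | succ k ih => simpa only [pow_succ _ (k + 1)] using GG.mul _ _ u hu ih
  rw [← GG_T γ ε hl _ _ this j, TT]
  refine Finset.sum_congr rfl fun i _ => by ring

lemma vander {R : Type} [CommRing R] [IsDomain R] [DecidableEq R] (w a : ι → R)
    (h : ∀ k : ℕ, ∑ i, w i * a i ^ (k + 1) = 0) (α : R) (hα : α ≠ 0) :
    ∑ i with a i = α, w i = 0 := by
  have hQ : ∀ Q : Polynomial R, ∑ i, w i * (a i * Q.eval (a i)) = 0 := by
    intro Q
    simp only [Polynomial.eval_eq_sum_range, Finset.mul_sum]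
    rw [Finset.sum_comm]
    refine Finset.sum_eq_zero fun k _ => ?_
    have : ∀ i, w i * (a i * (Q.coeff k * a i ^ k)) = Q.coeff k * (w i * a i ^ (k + 1)) :=
      fun i => by ring
    simp only [this, ← Finset.mul_sum, h, mul_zero]
  have := hQ (∏ b ∈ (Finset.univ.image a).erase α, (Polynomial.X - Polynomial.C b))
  simp only [Polynomial.eval_prod, Polynomial.eval_sub, Polynomial.eval_X, Polynomial.eval_C] at this
  have h2 : ∑ i, w i * (a i * ∏ b ∈ (Finset.univ.image a).erase α, (a i - b)) =
      (∑ i with a i = α, w i) * (α * ∏ b ∈ (Finset.univ.image a).erase α, (α - b)) := by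
    rw [Finset.sum_mul, Finset.sum_filter]
    refine Finset.sum_congr rfl fun i _ => ?_
    split_ifs with hi
    · rw [hi]
    · rw [Finset.prod_eq_zero (i := a i) (by simp [hi]) (sub_self _)]; simp
  rw [h2] at this
  refine (mul_eq_zero.1 this).resolve_right (mul_ne_zero hα ?_)
  exact Finset.prod_ne_zero_iff.2 fun b hb => sub_ne_zero.2 (Finset.ne_of_mem_erase hb).symm

lemma pderiv_prod (γ : ι → Fin N → ℂ) (s : Finset ι) (j : Fin N) :
    pderiv j (∏ i ∈ s, lin (γ i)) = ∑ i ∈ s, C (γ i j) * ∏ k ∈ s.erase i, lin (γ k) := by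
  induction s using Finset.induction_on with
  | empty => simp
  | insert a s ha ih =>
    rw [Finset.prod_insert ha, Finset.sum_insert ha, Derivation.leibniz, ih, pderiv_lin,
      Finset.erase_insert ha, smul_eq_mul, smul_eq_mul, Finset.mul_sum, add_comm, mul_comm]
    congr 1
    refine Finset.sum_congr rfl fun i hi => ?_
    have hia : a ≠ i := by rintro rfl; exact ha hi
    rw [Finset.erase_insert_of_ne hia, Finset.prod_insert (by simp [ha])]
    ring

lemma pderiv_prod_mul (γ : ι → Fin N → ℂ) (s : Finset ι) (j : Fin N) :
    pderiv j (∏ i ∈ s, lin (γ i)) * ∏ i ∈ sᶜ, lin (γ i) = ∑ i ∈ s, C (γ i j) * qq γ i := by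
  rw [pderiv_prod, Finset.sum_mul]
  refine Finset.sum_congr rfl fun i hi => ?_
  rw [mul_assoc, qq]
  congr 1
  rw [← Finset.prod_union]
  · congr 1
    ext x; simp only [Finset.mem_union, Finset.mem_erase, Finset.mem_compl, Finset.mem_univ]
    by_cases hx : x ∈ s <;> simp [hx]; rintro rfl; exact hx hi
  · rw [Finset.disjoint_left]; intro x hx; simp [Finset.mem_of_mem_erase hx]

lemma prod_hom (γ : ι → Fin N → ℂ) (s : Finset ι) :
    (∏ i ∈ s, lin (γ i)).IsHomogeneous s.card := by
  simpa using IsHomogeneous.prod s (fun i => lin (γ i)) (fun _ => 1) (fun i _ => lin_hom _)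

lemma empty_of (γ : ι → Fin N → ℂ) (hl : ∀ i, lin (γ i) ≠ 0) (s : Finset ι)
    (h : ∀ j, (∏ i ∈ s, lin (γ i)) ∣ pderiv j (∏ i ∈ s, lin (γ i))) : s = ∅ := by
  have hne : (∏ i ∈ s, lin (γ i)) ≠ 0 := Finset.prod_ne_zero_iff.2 fun i _ => hl i
  by_contra hs
  have hc : 0 < s.card := Finset.card_pos.2 (Finset.nonempty_iff_ne_empty.2 hs)
  have hz : ∀ j, pderiv j (∏ i ∈ s, lin (γ i)) = 0 := by
    intro j
    by_contra h0
    obtain ⟨c, hc'⟩ := h j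
    have d1 := (prod_hom γ s).pderiv (i := j) |>.totalDegree h0
    have hc0 : c ≠ 0 := by rintro rfl; simp at hc'; exact h0 hc'
    rw [hc', totalDegree_mul_of_isDomain hne hc0, (prod_hom γ s).totalDegree hne] at d1
    omega
  have := (prod_hom γ s).sum_X_mul_pderiv
  simp only [hz, mul_zero, Finset.sum_const_zero] at this
  rw [nsmul_eq_mul] at this
  rcases mul_eq_zero.1 this.symm with h | h
  · have : s.card = 0 := by exact_mod_cast h
    omega
  · exact hne h

lemma nondeg (γ : ι → Fin N → ℂ) (hl : ∀ i, lin (γ i) ≠ 0) (S : Finset ι)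
    (hcop : IsRelPrime (∏ i ∈ S, lin (γ i)) (∏ i ∈ Sᶜ, lin (γ i)))
    (hess : ∀ v : Fin N → ℂ, (∀ i, dotProduct (γ i) v = 0) → v = 0) :
    Matrix.det (fun j k => ∑ i, C ((if i ∈ S then 1 else -1) * γ i j * γ i k) * qq γ i ^ 2 :
      Matrix (Fin N) (Fin N) (MvPolynomial (Fin N) ℂ)) ≠ 0 := by
  classical
  intro hdet
  obtain ⟨v, hv0, hv⟩ := Matrix.exists_mulVec_eq_zero_iff.2 hdet
  set ε : ι → ℂ := fun i => if i ∈ S then 1 else -1 with hε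
  have hu : ∀ j, TT γ ε 1 (LL γ v) j = 0 := by
    intro j
    have := congrFun hv j
    simp only [Matrix.mulVec, dotProduct, Finset.sum_mul, Pi.zero_apply] at this
    rw [Finset.sum_comm] at this
    rw [← this, TT]
    refine Finset.sum_congr rfl fun i _ => ?_
    rw [LL, Finset.mul_sum, Finset.sum_mul]
    refine Finset.sum_congr rfl fun k _ => ?_
    simp only [hε, C_mul]; ring
  have hq : ∀ i, qq γ i ≠ 0 := fun i => Finset.prod_ne_zero_iff.2 fun k _ => hl k
  have hex : ∃ i, LL γ v i ≠ 0 := by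
    by_contra hcon
    push Not at hcon
    apply hv0
    ext1 j
    refine MvPolynomial.funext fun x => ?_
    have := hess (fun j => eval x (v j)) (fun i => by
      have := congrArg (eval x) (hcon i)
      simpa [LL, dotProduct] using this)
    simpa using congrFun this j
  obtain ⟨i0, hi0⟩ := hex
  have hα : LL γ v i0 * qq γ i0 ≠ 0 := mul_ne_zero hi0 (hq i0)
  set A : Finset ι := Finset.univ.filter (fun i => LL γ v i * qq γ i = LL γ v i0 * qq γ i0) with hA
  have hi0A : i0 ∈ A := by simp [hA]
  have hs : ∀ j, ∑ i ∈ A, C (ε i * γ i j) * qq γ i = 0 := fun j =>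
    vander _ (fun i => LL γ v i * qq γ i) (fun k => pow_T γ ε hl v hu k j) _ hα
  have hdis : Disjoint (A ∩ S) (A \ S) := by
    rw [Finset.disjoint_left]; intro x; simp +contextual
  have hAu : A ∩ S ∪ A \ S = A := by ext x; simp; tauto
  have h1 : ∀ j, pderiv j (∏ i ∈ A ∩ S, lin (γ i)) * ∏ i ∈ A \ S, lin (γ i)
      = pderiv j (∏ i ∈ A \ S, lin (γ i)) * ∏ i ∈ A ∩ S, lin (γ i) := by
    intro j
    have e := hs j
    rw [← hAu, Finset.sum_union hdis] at e
    have e1 : ∑ i ∈ A ∩ S, C (ε i * γ i j) * qq γ i = ∑ i ∈ A ∩ S, C (γ i j) * qq γ i :=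
      Finset.sum_congr rfl fun i hi => by simp [hε, (Finset.mem_inter.1 hi).2]
    have e2 : ∑ i ∈ A \ S, C (ε i * γ i j) * qq γ i = -∑ i ∈ A \ S, C (γ i j) * qq γ i := by
      rw [← Finset.sum_neg_distrib]
      exact Finset.sum_congr rfl fun i hi => by simp [hε, (Finset.mem_sdiff.1 hi).2]
    rw [e1, e2, ← pderiv_prod_mul, ← pderiv_prod_mul] at e
    have c1 : (A ∩ S)ᶜ = A \ S ∪ Aᶜ := by ext x; simp; tauto
    have c2 : (A \ S)ᶜ = A ∩ S ∪ Aᶜ := by ext x; simp; tauto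
    rw [c1, c2, Finset.prod_union, Finset.prod_union] at e
    · have hE : ∏ i ∈ Aᶜ, lin (γ i) ≠ 0 := Finset.prod_ne_zero_iff.2 fun i _ => hl i
      apply mul_right_cancel₀ hE
      linear_combination e
    · rw [Finset.disjoint_left]; intro x; simp +contextual
    · rw [Finset.disjoint_left]; intro x; simp +contextual
  have hcop' : IsRelPrime (∏ i ∈ A ∩ S, lin (γ i)) (∏ i ∈ A \ S, lin (γ i)) := by
    intro c h1 h2
    refine hcop (h1.trans (Finset.prod_dvd_prod_of_subset _ _ _ Finset.inter_subset_right))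
      (h2.trans (Finset.prod_dvd_prod_of_subset _ _ _ ?_))
    intro x; simp +contextual
  have n1 : A ∩ S = ∅ := empty_of γ hl _ fun j =>
    hcop'.dvd_of_dvd_mul_right (Dvd.intro_left _ (h1 j).symm)
  have n2 : A \ S = ∅ := empty_of γ hl _ fun j =>
    hcop'.symm.dvd_of_dvd_mul_right (Dvd.intro_left _ (h1 j))
  rw [← hAu, n1, n2] at hi0A
  simp at hi0A

lemma det_rel (γ : ι → Fin N → ℂ) (ε : ι → ℂ) (p : Fin N → ℂ)
    (hp : ∀ i, dotProduct (γ i) p ≠ 0) :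
    eval p (Matrix.det (fun j k => ∑ i, C (ε i * γ i j * γ i k) * qq γ i ^ 2 :
      Matrix (Fin N) (Fin N) (MvPolynomial (Fin N) ℂ))) =
    ((∏ i, dotProduct (γ i) p) ^ 2) ^ N *
      Matrix.det (fun j k => ∑ i, ε i * (γ i j * γ i k / (dotProduct (γ i) p) ^ 2)) := by
  refine (RingHom.map_det _ _).trans ?_
  have := Matrix.det_smul (fun j k => ∑ i, ε i * (γ i j * γ i k / (dotProduct (γ i) p) ^ 2) :
    Matrix (Fin N) (Fin N) ℂ) ((∏ i, dotProduct (γ i) p) ^ 2)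
  rw [Fintype.card_fin] at this
  rw [← this]
  congr 1
  ext j k
  change eval p (∑ i, C (ε i * γ i j * γ i k) * qq γ i ^ 2) =
    (∏ i, dotProduct (γ i) p) ^ 2 * ∑ i, ε i * (γ i j * γ i k / (dotProduct (γ i) p) ^ 2)
  rw [Finset.mul_sum, map_sum]
  refine Finset.sum_congr rfl fun i _ => ?_
  have h1 : eval p (FF γ) = ∏ i, dotProduct (γ i) p := by
    simp [FF, map_prod, eval_lin]
  rw [← h1, FF_eq γ i]
  simp only [map_mul, eval_lin, eval_C, map_pow]
  have := hp i
  field_simp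

lemma poly_ext_of (G A B : MvPolynomial (Fin N) ℂ) (hG : G ≠ 0)
    (h : ∀ p, eval p G ≠ 0 → eval p A = eval p B) : A = B := by
  have : G * (A - B) = 0 := by
    refine MvPolynomial.funext fun p => ?_
    by_cases hp : eval p G = 0
    · simp [hp]
    · simp [h p hp]
  exact sub_eq_zero.1 ((mul_eq_zero.1 this).resolve_left hG)

lemma PP_ne (γ : ι → Fin N → ℂ) (hl : ∀ i, lin (γ i) ≠ 0) (S : Finset ι)
    (hcop : IsRelPrime (∏ i ∈ S, lin (γ i)) (∏ i ∈ Sᶜ, lin (γ i)))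
    (hess : ∀ v : Fin N → ℂ, (∀ i, dotProduct (γ i) v = 0) → v = 0) :
    PP γ (fun i => if i ∈ S then 1 else -1) ≠ 0 := by
  intro h0
  refine nondeg γ hl S hcop hess (poly_ext_of (FF γ) _ _ (FF_ne γ hl) fun p hp => ?_)
  have hp' : ∀ i, dotProduct (γ i) p ≠ 0 := by
    intro i hi; apply hp; rw [FF_eq γ i, map_mul, eval_lin, hi, zero_mul]
  rw [det_rel γ (fun i => if i ∈ S then 1 else -1) p hp']
  have h1 := PP_eval γ (fun i => if i ∈ S then 1 else -1) p hp'
  rw [h0, map_zero] at h1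
  rw [(mul_eq_zero.1 h1.symm).resolve_left
    (pow_ne_zero _ (Finset.prod_ne_zero_iff.2 fun i _ => hp' i))]
  simp

section core
variable {ι₁ ι₂ ι₃ : Type} [Fintype ι₁] [Fintype ι₂] [Fintype ι₃]
  [DecidableEq ι₁] [DecidableEq ι₂] [DecidableEq ι₃]

lemma sum_mat (γ₁ : ι₁ → Fin N → ℂ) (γ₂ : ι₂ → Fin N → ℂ) (p : Fin N → ℂ) :
    (fun j k => ∑ i, (Sum.elim (fun _ => 1) (fun _ => -1) i : ℂ) *
      ((Sum.elim γ₁ γ₂) i j * (Sum.elim γ₁ γ₂) i k / (dotProduct ((Sum.elim γ₁ γ₂) i) p) ^ 2)) =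
    HH γ₁ Finset.univ p - HH γ₂ Finset.univ p := by
  ext j k
  simp [HH, sub_eq_add_neg]

lemma homog_eq {F G H : MvPolynomial (Fin N) ℂ} {a b c : ℕ} (hF : F.IsHomogeneous a)
    (hG : G.IsHomogeneous b) (hH : H.IsHomogeneous c) (h : F + G + H = 0) (h0 : F ≠ 0)
    (hG0 : G ≠ 0) (hH0 : H ≠ 0) : a = b := by
  by_contra hab
  have e := congrArg (homogeneousComponent a) h
  have e2 := congrArg (homogeneousComponent b) h
  simp only [map_add, map_zero, homogeneousComponent_of_mem ((mem_homogeneousSubmodule _ _).2 hF),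
    homogeneousComponent_of_mem ((mem_homogeneousSubmodule _ _).2 hG),
    homogeneousComponent_of_mem ((mem_homogeneousSubmodule _ _).2 hH)] at e e2
  split_ifs at e e2 <;> simp_all

lemma core (γ₁ : ι₁ → Fin N → ℂ) (γ₂ : ι₂ → Fin N → ℂ) (γ₃ : ι₃ → Fin N → ℂ)
    (hl1 : ∀ i, lin (γ₁ i) ≠ 0) (hl2 : ∀ i, lin (γ₂ i) ≠ 0) (hl3 : ∀ i, lin (γ₃ i) ≠ 0)
    (h12 : IsRelPrime (∏ i, lin (γ₁ i)) (∏ i, lin (γ₂ i)))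
    (h13 : IsRelPrime (∏ i, lin (γ₁ i)) (∏ i, lin (γ₃ i)))
    (hz : (∏ i, lin (γ₁ i)) + (∏ i, lin (γ₂ i)) + (∏ i, lin (γ₃ i)) = 0)
    (hess : ∀ v : Fin N → ℂ, (∀ i, dotProduct (γ₁ i) v = 0) → (∀ i, dotProduct (γ₂ i) v = 0) →
      (∀ i, dotProduct (γ₃ i) v = 0) → v = 0) : N ≤ 5 := by
  set F1 := ∏ i, lin (γ₁ i) with hF1
  set F2 := ∏ i, lin (γ₂ i) with hF2
  set F3 := ∏ i, lin (γ₃ i) with hF3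
  have n1 : F1 ≠ 0 := Finset.prod_ne_zero_iff.2 fun i _ => hl1 i
  have n2 : F2 ≠ 0 := Finset.prod_ne_zero_iff.2 fun i _ => hl2 i
  have n3 : F3 ≠ 0 := Finset.prod_ne_zero_iff.2 fun i _ => hl3 i
  have g1 : F1.IsHomogeneous (Fintype.card ι₁) := prod_hom γ₁ Finset.univ
  have g2 : F2.IsHomogeneous (Fintype.card ι₂) := prod_hom γ₂ Finset.univ
  have g3 : F3.IsHomogeneous (Fintype.card ι₃) := prod_hom γ₃ Finset.univ
  have c12 : Fintype.card ι₁ = Fintype.card ι₂ := homog_eq g1 g2 g3 hz n1 n2 n3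
  have c23 : Fintype.card ι₂ = Fintype.card ι₃ :=
    homog_eq g2 g3 g1 (by linear_combination hz) n2 n3 n1
  have hess' : ∀ v : Fin N → ℂ, (∀ i, dotProduct (Sum.elim γ₁ γ₂ i) v = 0) → v = 0 := by
    intro v hv
    refine hess v (fun i => hv (Sum.inl i)) (fun i => hv (Sum.inr i)) fun i => ?_
    by_contra hi
    obtain ⟨y, hy⟩ : ∃ y, eval y F3 ≠ 0 := by
      by_contra hcon; push Not at hcon
      exact n3 (MvPolynomial.funext fun x => by simpa using hcon x)
    have e1 := congrArg (eval y) hz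
    have e2 := congrArg (eval (y - (dotProduct (γ₃ i) y / dotProduct (γ₃ i) v) • v)) hz
    have z3 : eval (y - (dotProduct (γ₃ i) y / dotProduct (γ₃ i) v) • v) F3 = 0 := by
      rw [hF3, map_prod]
      refine Finset.prod_eq_zero (Finset.mem_univ i) ?_
      rw [eval_lin, dotProduct_sub, dotProduct_smul, smul_eq_mul]
      field_simp; simp
    have z1 : eval (y - (dotProduct (γ₃ i) y / dotProduct (γ₃ i) v) • v) F1 = eval y F1 := by
      simp only [hF1, map_prod, eval_lin, dotProduct_sub, dotProduct_smul]
      exact Finset.prod_congr rfl fun k _ => by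
        have := hv (Sum.inl k); simp only [Sum.elim_inl] at this; rw [this]; simp
    have z2 : eval (y - (dotProduct (γ₃ i) y / dotProduct (γ₃ i) v) • v) F2 = eval y F2 := by
      simp only [hF2, map_prod, eval_lin, dotProduct_sub, dotProduct_smul]
      exact Finset.prod_congr rfl fun k _ => by
        have := hv (Sum.inr k); simp only [Sum.elim_inr] at this; rw [this]; simp
    simp only [map_add, map_zero, z1, z2, z3] at e1 e2
    apply hy
    linear_combination e1 - e2
  set P := PP (Sum.elim γ₁ γ₂) (Sum.elim (fun _ => 1) (fun _ => -1)) with hP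
  set Q := PP (Sum.elim γ₃ γ₂) (Sum.elim (fun _ => 1) (fun _ => -1)) with hQ
  have hP0 : P ≠ 0 := by
    have := PP_ne (Sum.elim γ₁ γ₂) (by rintro (i | i) <;> simp [hl1, hl2])
      (Finset.univ.map Function.Embedding.inl) (by
        have hc : ((Finset.univ : Finset ι₁).map (Function.Embedding.inl (β := ι₂)))ᶜ =
          (Finset.univ : Finset ι₂).map Function.Embedding.inr := by
          ext (x | x) <;> simp
        rw [hc, Finset.prod_map, Finset.prod_map]
        simpa using h12) hess'
    convert this using 2
    ext (i | i) <;> simp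
  have id1 : F1 ^ N * F3 ^ 2 * P = C ((-1) ^ N) * F3 ^ N * F1 ^ 2 * Q := by
    refine poly_ext_of (F1 * F2 * F3) _ _ (mul_ne_zero (mul_ne_zero n1 n2) n3) fun p hp => ?_
    simp only [map_mul] at hp
    have hp1 : ∀ i, dotProduct (γ₁ i) p ≠ 0 := by
      intro i hi; apply hp
      have : eval p F1 = 0 := by
        rw [hF1, map_prod]; exact Finset.prod_eq_zero (Finset.mem_univ i) (by rw [eval_lin, hi])
      simp [this]
    have hp2 : ∀ i, dotProduct (γ₂ i) p ≠ 0 := by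
      intro i hi; apply hp
      have : eval p F2 = 0 := by
        rw [hF2, map_prod]; exact Finset.prod_eq_zero (Finset.mem_univ i) (by rw [eval_lin, hi])
      simp [this]
    have hp3 : ∀ i, dotProduct (γ₃ i) p ≠ 0 := by
      intro i hi; apply hp
      have : eval p F3 = 0 := by
        rw [hF3, map_prod]; exact Finset.prod_eq_zero (Finset.mem_univ i) (by rw [eval_lin, hi])
      simp [this]
    have eP := PP_eval (Sum.elim γ₁ γ₂) (Sum.elim (fun _ => 1) (fun _ => -1)) p
      (by rintro (i | i) <;> simp [hp1, hp2])
    have eQ := PP_eval (Sum.elim γ₃ γ₂) (Sum.elim (fun _ => 1) (fun _ => -1)) p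
      (by rintro (i | i) <;> simp [hp3, hp2])
    have v1 : eval p F1 = ∏ i, dotProduct (γ₁ i) p := by simp [hF1, map_prod, eval_lin]
    have v2 : eval p F2 = ∏ i, dotProduct (γ₂ i) p := by simp [hF2, map_prod, eval_lin]
    have v3 : eval p F3 = ∏ i, dotProduct (γ₃ i) p := by simp [hF3, map_prod, eval_lin]
    rw [sum_mat, Fintype.prod_sum_type] at eP eQ
    simp only [Sum.elim_inl, Sum.elim_inr, ← v1, ← v2, ← v3] at eP eQ
    have hf1 : eval p F1 ≠ 0 := by intro h; apply hp; simp [h]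
    have D := detid (eval p F1) (eval p F2) (eval p F3)
      (by simpa using congrArg (eval p) hz) hf1
      (hh γ₁ Finset.univ p) (hh γ₂ Finset.univ p) (hh γ₃ Finset.univ p) p
      (HH γ₁ Finset.univ p) (HH γ₂ Finset.univ p) (HH γ₃ Finset.univ p) (Fintype.card ι₂)
      (fun j => by
        have := congrArg (fun f => eval p (pderiv j f)) hz
        simp only [map_add, map_zero] at this
        rw [← eval_pd γ₁ _ p hp1, ← eval_pd γ₂ _ p hp2, ← eval_pd γ₃ _ p hp3]
        exact this)
      (fun j k => by
        have := congrArg (fun f => eval p (pderiv k (pderiv j f))) hz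
        simp only [map_add, map_zero] at this
        rw [← eval_pd2 γ₁ _ p hp1, ← eval_pd2 γ₂ _ p hp2, ← eval_pd2 γ₃ _ p hp3]
        exact this)
      (HH_mulVec γ₂ _ p hp2) (HH_mulVec γ₃ _ p hp3) (hh_dot γ₂ _ p hp2)
      (by rw [hh_dot γ₃ _ p hp3, c23]; rfl)
    rw [hP, hQ]
    simp only [map_mul, map_pow, eval_C]
    rw [eP, eQ]
    rw [neg_pow (eval p F3) N] at D
    linear_combination (eval p F3 ^ 2 * (eval p F1 * eval p F2) ^ 2) * D
  have hdvd : F3 ^ N ∣ F3 ^ 2 * P := by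
    have : F3 ^ N ∣ F1 ^ N * (F3 ^ 2 * P) := by
      rw [← mul_assoc, id1]
      exact ⟨C ((-1) ^ N) * F1 ^ 2 * Q, by ring⟩
    exact (h13.symm.pow (m := N) (n := N)).dvd_of_dvd_mul_left this
  obtain ⟨c, hc⟩ := hdvd
  have hl0 : F3 ^ 2 * P ≠ 0 := mul_ne_zero (pow_ne_zero _ n3) hP0
  have hc0 : c ≠ 0 := by rintro rfl; rw [mul_zero] at hc; exact hl0 hc
  have hd := congrArg totalDegree hc
  rw [totalDegree_mul_of_isDomain (pow_ne_zero _ n3) hP0,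
    totalDegree_mul_of_isDomain (pow_ne_zero _ n3) hc0,
    (g3.pow 2).totalDegree (pow_ne_zero _ n3), (g3.pow N).totalDegree (pow_ne_zero _ n3)] at hd
  obtain ⟨hN, hdeg⟩ := PP_deg _ _ hP0
  rw [← hP] at hdeg
  rw [Fintype.card_sum, c12, c23] at hN hdeg
  by_contra h6
  have h6' : 6 ≤ N := by omega
  have : Fintype.card ι₃ * 6 ≤ Fintype.card ι₃ * N := Nat.mul_le_mul_left _ h6'
  omega

end core

lemma deg_one {m : ℕ} (s : Fin m →₀ ℕ) (hs : s.degree = 1) : ∃ k, s = Finsupp.single k 1 := by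
  classical
  have h0 : s ≠ 0 := by rintro rfl; simp at hs
  obtain ⟨k, hk⟩ := Finsupp.ne_iff.1 h0
  have hle : Finsupp.single k 1 ≤ s := by
    rw [Finsupp.single_le_iff]; exact Nat.one_le_iff_ne_zero.2 hk
  refine ⟨k, ?_⟩
  obtain ⟨r, rfl⟩ := exists_add_of_le hle
  rw [map_add, Finsupp.degree_single] at hs
  have : r = 0 := (Finsupp.degree_eq_zero_iff r).1 (by omega)
  rw [this, add_zero]

lemma eq_lin {m : ℕ} (p : MvPolynomial (Fin m) ℂ) (hp : p.IsHomogeneous 1) :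
    p = lin (fun k => coeff (Finsupp.single k 1) p) := by
  classical
  ext s
  by_cases hs : s.degree = 1
  · obtain ⟨k, rfl⟩ := deg_one s hs
    rw [lin, coeff_sum, Finset.sum_eq_single k]
    · simp
    · intro b _ hb
      rw [coeff_C_mul, coeff_X', if_neg, mul_zero]
      intro h
      exact hb (Finsupp.single_left_injective one_ne_zero h)
    · simp
  · rw [hp.coeff_eq_zero hs, (lin_hom _).coeff_eq_zero hs]

lemma lin_add_smul {m : ℕ} {κ : Type} (s : Finset κ) (a : κ → ℂ) (c : κ → Fin m → ℂ) :
    lin (∑ i ∈ s, a i • c i) = ∑ i ∈ s, a i • lin (c i) := by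
  simp only [lin, Finset.sum_apply, Pi.smul_apply, smul_eq_mul, map_sum, Finset.sum_mul,
    Finset.smul_sum, smul_eq_C_mul, C_mul]
  rw [Finset.sum_comm]
  simp only [mul_assoc]

lemma aeval_lin {m r : ℕ} (c : Fin m → ℂ) (g : Fin m → MvPolynomial (Fin r) ℂ) :
    aeval g (lin c) = ∑ j, c j • g j := by
  simp [lin, smul_eq_C_mul, MvPolynomial.algebraMap_eq]

/-- a left inverse of a linear change of variables -/
lemma exists_inv {m r : ℕ} (e : Fin r → MvPolynomial (Fin m) ℂ) (he : LinearIndependent ℂ e)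
    (hh : ∀ j, (e j).IsHomogeneous 1) :
    ∃ ψ : MvPolynomial (Fin m) ℂ →ₐ[ℂ] MvPolynomial (Fin r) ℂ, ∀ j, ψ (e j) = X j := by
  classical
  let E : (Fin r → ℂ) →ₗ[ℂ] (Fin m → ℂ) :=
    Fintype.linearCombination ℂ (fun j k => coeff (Finsupp.single k 1) (e j))
  have hE : LinearMap.ker E = ⊥ := by
    rw [LinearMap.ker_eq_bot']
    intro c hc
    have h1 : ∑ j, c j • e j = 0 := by
      have : ∑ j, c j • e j = lin (E c) := by
        simp only [E, Fintype.linearCombination_apply]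
        rw [lin_add_smul]
        exact Finset.sum_congr rfl fun j _ => by rw [← eq_lin _ (hh j)]
      rw [this, hc]; simp [lin]
    ext j
    exact Fintype.linearIndependent_iff.1 he c h1 j
  obtain ⟨ρ, hρ⟩ := LinearMap.exists_leftInverse_of_injective E hE
  refine ⟨aeval (fun k => lin (ρ (Pi.single k 1))), fun j => ?_⟩
  conv_lhs => rw [eq_lin _ (hh j)]
  rw [aeval_lin, ← lin_add_smul]
  have h2 : ∑ i, coeff (Finsupp.single i 1) (e j) • ρ (Pi.single i 1) = Pi.single j 1 := by
    have h3 : E (Pi.single j 1) = fun k => coeff (Finsupp.single k 1) (e j) := by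
      simp [E, Fintype.linearCombination_apply_single]
    have h4 := LinearMap.congr_fun hρ (Pi.single j 1)
    simp only [LinearMap.comp_apply, LinearMap.id_apply, h3] at h4
    rw [← h4]
    simp only [← map_smul, ← map_sum]
    congr 1
    ext k
    simp [Finset.sum_apply, Pi.single_apply]
  rw [h2]
  simp [lin, Pi.single_apply]

end SpanFive

open SpanFive in
/-- If `F₁, F₂, F₃ ∈ ℂ[x₀, …, xₙ]` are pairwise coprime products of non-zero homogeneous
linear polynomials with `F₁ + F₂ + F₃ = 0`, then the `ℂ`-linear span of all the linear
factors has dimension at most `5`; equivalently the corresponding projective points lie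
in a projective subspace of dimension at most `4`. -/
theorem span_of_factors_dim_le_five_of_coprime_sum_zero
    (n : ℕ) (d : Fin 3 → ℕ)
    (l : (i : Fin 3) → Fin (d i) → MvPolynomial (Fin (n + 1)) ℂ)
    (hne : ∀ i j, l i j ≠ 0) (hhom : ∀ i j, (l i j).IsHomogeneous 1)
    (hcop : ∀ i j, i ≠ j →
      ∀ g : MvPolynomial (Fin (n + 1)) ℂ, g ∣ (∏ t, l i t) → g ∣ (∏ t, l j t) → IsUnit g)
    (hzero : (∏ t, l 0 t) + (∏ t, l 1 t) + (∏ t, l 2 t) = 0) :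
    Module.finrank ℂ
      ↥(Submodule.span ℂ
        {p : MvPolynomial (Fin (n + 1)) ℂ | ∃ i j, p = l i j}) ≤ 5 := by
  classical
  set V := Submodule.span ℂ {p : MvPolynomial (Fin (n + 1)) ℂ | ∃ i j, p = l i j} with hV
  have hfin : {p : MvPolynomial (Fin (n + 1)) ℂ | ∃ i j, p = l i j}.Finite := by
    have : {p : MvPolynomial (Fin (n + 1)) ℂ | ∃ i j, p = l i j} =
        Set.range (fun x : (Σ i, Fin (d i)) => l x.1 x.2) := by
      ext p; simp [Sigma.exists, eq_comm]
    rw [this]; exact Set.finite_range _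
  have : FiniteDimensional ℂ V := FiniteDimensional.span_of_finite ℂ hfin
  set b := Module.finBasis ℂ V with hb
  have hmem : ∀ i j, l i j ∈ V := fun i j => Submodule.subset_span ⟨i, j, rfl⟩
  have hVh : V ≤ homogeneousSubmodule (Fin (n + 1)) ℂ 1 := by
    rw [hV, Submodule.span_le]
    rintro p ⟨i, j, rfl⟩
    exact (mem_homogeneousSubmodule _ _).2 (hhom i j)
  let e : Fin (Module.finrank ℂ V) → MvPolynomial (Fin (n + 1)) ℂ := fun j => (b j : _)
  have he : LinearIndependent ℂ e := b.linearIndependent.map' V.subtype (Submodule.ker_subtype V)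
  obtain ⟨ψ, hψ⟩ := exists_inv e he (fun j => (mem_homogeneousSubmodule _ _).1 (hVh (b j).2))
  let γ : (i : Fin 3) → Fin (d i) → Fin (Module.finrank ℂ V) → ℂ :=
    fun i t => b.repr ⟨l i t, hmem i t⟩
  have hγ : ∀ i t, ∑ j, γ i t j • e j = l i t := by
    intro i t
    have := congrArg (V.subtype) (b.sum_repr ⟨l i t, hmem i t⟩)
    rw [map_sum] at this
    exact this
  have hφ : ∀ i t, aeval e (lin (γ i t)) = l i t := fun i t => by rw [aeval_lin, hγ]
  have hψφ : ∀ g, ψ (aeval e g) = g := by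
    intro g
    have : ψ.comp (aeval e) = AlgHom.id ℂ _ := by
      ext1 j; simp [hψ]
    exact DFunLike.congr_fun this g
  have hφF : ∀ i, aeval e (∏ t, lin (γ i t)) = ∏ t, l i t := by
    intro i; rw [map_prod]; exact Finset.prod_congr rfl fun t _ => hφ i t
  have hrel : ∀ i j, i ≠ j → IsRelPrime (∏ t, lin (γ i t)) (∏ t, lin (γ j t)) := by
    intro i j hij g h1 h2
    have u := hcop i j hij (aeval e g) (hφF i ▸ map_dvd (aeval e) h1)
      (hφF j ▸ map_dvd (aeval e) h2)
    have u' := u.map ψ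
    rwa [hψφ] at u'
  have hl : ∀ i t, lin (γ i t) ≠ 0 := by
    intro i t h
    apply hne i t
    rw [← hφ, h, map_zero]
  refine core (γ 0) (γ 1) (γ 2) (hl 0) (hl 1) (hl 2) (hrel 0 1 (by decide)) (hrel 0 2 (by decide))
    ?_ ?_
  · have := congrArg ψ hzero
    rw [← hφF, ← hφF, ← hφF, map_add, map_add, hψφ, hψφ, hψφ, map_zero] at this
    exact this
  · intro v h0 h1 h2
    have hall : ∀ i t, dotProduct (γ i t) v = 0 := by
      intro i; fin_cases i
      · exact h0
      · exact h1
      · exact h2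
    let Φ : V →ₗ[ℂ] ℂ := b.constr ℂ v
    have hΦ : Φ = 0 := by
      have hΦl : ∀ i t, Φ ⟨l i t, hmem i t⟩ = 0 := by
        intro i t
        rw [← hall i t]
        simp only [Φ, Module.Basis.constr_apply_fintype, dotProduct, γ, smul_eq_mul]
        rfl
      ext ⟨x, hx⟩
      induction hx using Submodule.span_induction with
      | mem x h => obtain ⟨i, t, rfl⟩ := h; exact hΦl i t
      | zero => exact map_zero Φ
      | add x y hx hy ihx ihy =>
        have := map_add Φ ⟨x, hx⟩ ⟨y, hy⟩
        rw [ihx, ihy] at this; simpa using this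
      | smul a x hx ih =>
        have := map_smul Φ a ⟨x, hx⟩
        rw [ih] at this; simpa using this
    ext j
    have : Φ (b j) = v j := by simp [Φ]
    rw [← this, hΦ]; rfl
end
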